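/- Let n ≥ 7 and let u : ℝⁿ → ℝ be a smooth solution of the triharmonic Lane–Emden equation (−Δ)³u = |u|^{p−1}u that is stable outside some compact set Θ ⊂ ℝⁿ. If (n+6)/(n−6) < p and, in the case n ≥ 15, additionally p < p_c(n), then u is identically zero. -/

import Mathlib

open MeasureTheory Filter

noncomputable section

/-- The Euclidean Laplacian of `u` at `x`. -/
def laplacian {n : ℕ} (u : EuclideanSpace ℝ (Fin n) → ℝ) (x : EuclideanSpace ℝ (Fin n)) : ℝ :=
  ∑ i : Fin n, iteratedFDeriv ℝ 2 u x ![EuclideanSpace.single i 1, EuclideanSpace.single i 1]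

def dd1 (n : ℝ) : ℝ :=
  -108*n^6 + 1296*n^5 - 3024*n^4 - 10368*n^3 + 103104*n^2 + 20736*n - 94976

def dd2 (n : ℝ) : ℝ :=
  9*n^12 - 216*n^11 + 1800*n^10 - 4320*n^9 - 30864*n^8 + 251136*n^7 - 690432*n^6
    - 1936384*n^5 + 6915840*n^4 + 4818944*n^3 - 16644096*n^2 - 3039232*n + 6131712

/-- `d₀(n)`, the real cube root of `-(d₁(n) + 36√(d₂(n)))`. -/
def dd0 (n : ℝ) : ℝ := (-(dd1 n + 36 * Real.sqrt (dd2 n))) ^ ((1 : ℝ)/3)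

def dfn (n : ℝ) : ℝ :=
  (1/6) * Real.sqrt (9*n^2 + 96 - (1536 + 1152*n^2) / dd0 n - (3/2) * dd0 n)

/-- The Joseph–Lundgren exponent `p_c(n)` (for `n ≥ 15`; `p_c(n) = +∞` for `n ≤ 14`,
which is encoded by imposing the bound `p < pc n` only when `15 ≤ n`). -/
def pc (n : ℝ) : ℝ := (n + 4 - 2 * dfn n) / (n - 8 - 2 * dfn n)

/-!
With `k = 6 / (p - 1)`, `D = r ∂_r` and `A` minus the spherical Laplacian, the function `w = r^k u`
solves an equation `∑ c_{mj} A^j D^m w = |w|^{p-1} w` with constant coefficients. Its energies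
`∫ ρ(log r) r^{-n} D^i w A^j D^i w` are indexed by weights `ρ` on the line of `t = log r`, and
moving derivatives onto the weight brings every quadratic form in `w` to a sum of energies, up to
terms with derivatives of the weight.

Far out, stability bounds `p ∫ |w|^{p+1}` by a quadratic form in `w`, and testing the equation with
`w` identifies `∫ |w|^{p+1}` with another one. Below the Joseph–Lundgren exponent the difference
has coercive top and zeroth order coefficients. Young's inequality against `|w|^{p+1}` then bounds
the total energy in a unit window around `t = T`, uniformly in large `T`. In the supercritical range
testing with `D w` produces a form that is definite in `D w`: on an interval of `t`, the energies of
`D w` are controlled by the total energy in windows around the two endpoints. Far out, stability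
extends this control to the total energy of the interval. Since the windows are uniformly bounded,
so is the total energy of arbitrarily long intervals, and some far out window has arbitrarily small
energy. Near the origin the window energies tend to `0` because `u` is smooth there. With such
windows as endpoints, `D w = 0`, so `r^k u` is constant along rays; as it vanishes at the origin,
`u = 0`.
-/

namespace TriharmonicLaneEmden

open scoped ContDiff
open Asymptotics Finset Topology

/-- Test functions of the logarithmic radius `t = log ‖x‖`: the weights of all energies below. -/
structure IsTestWeight (ρ : ℝ → ℝ) : Prop where
  contDiff : ContDiff ℝ ∞ ρ
  hasCompactSupport : HasCompactSupport ρ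

/-- The translate of a weight, centred at `T` instead of `0`. -/
def translate (T : ℝ) (ρ : ℝ → ℝ) : ℝ → ℝ := fun t ↦ ρ (t - T)

theorem iterate_deriv_translate (T : ℝ) (ρ : ℝ → ℝ) (a : ℕ) :
    deriv^[a] (translate T ρ) = translate T (deriv^[a] ρ) := by
  rw [← iteratedDeriv_eq_iterate, ← iteratedDeriv_eq_iterate]
  exact iteratedDeriv_comp_sub_const a ρ T

namespace IsTestWeight

variable {ρ σ : ℝ → ℝ}

protected theorem deriv (h : IsTestWeight ρ) : IsTestWeight (deriv ρ) :=
  ⟨h.contDiff.iterate_deriv 1, h.hasCompactSupport.deriv⟩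

theorem iterate_deriv (h : IsTestWeight ρ) (a : ℕ) : IsTestWeight (deriv^[a] ρ) := by
  induction a with
  | zero => exact h
  | succ a ih => rw [Function.iterate_succ_apply']; exact ih.deriv

theorem mul (h : IsTestWeight ρ) (hσ : ContDiff ℝ ∞ σ) : IsTestWeight (ρ * σ) :=
  ⟨h.contDiff.mul hσ, h.hasCompactSupport.mul_right⟩

theorem add (h : IsTestWeight ρ) (hσ : IsTestWeight σ) : IsTestWeight (ρ + σ) :=
  ⟨h.contDiff.add hσ.contDiff, h.hasCompactSupport.add hσ.hasCompactSupport⟩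

theorem const_smul (h : IsTestWeight ρ) (c : ℝ) : IsTestWeight (c • ρ) :=
  ⟨contDiff_const.smul h.contDiff, h.hasCompactSupport.smul_left⟩

theorem pow (h : IsTestWeight ρ) {k : ℕ} (hk : k ≠ 0) : IsTestWeight (ρ ^ k) := by
  obtain ⟨k, rfl⟩ := Nat.exists_eq_succ_of_ne_zero hk
  rw [Nat.succ_eq_add_one, pow_succ']
  exact h.mul (h.contDiff.pow k)

theorem translate (h : IsTestWeight ρ) (T : ℝ) : IsTestWeight (translate T ρ) :=
  ⟨h.contDiff.comp (contDiff_id.sub contDiff_const),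
    h.hasCompactSupport.comp_homeomorph (Homeomorph.subRight T)⟩

end IsTestWeight

/-! ### Weighted bilinear forms -/

/-- Positive linear functionals on test weights, the common shape of all the energies below. -/
structure IsPositiveFunctional (Φ : (ℝ → ℝ) → ℝ) : Prop where
  map_add : ∀ {ρ σ}, IsTestWeight ρ → IsTestWeight σ → Φ (ρ + σ) = Φ ρ + Φ σ
  map_smul : ∀ {ρ}, IsTestWeight ρ → ∀ c : ℝ, Φ (c • ρ) = c * Φ ρ
  nonneg : ∀ {ρ}, IsTestWeight ρ → 0 ≤ ρ → 0 ≤ Φ ρ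

namespace IsPositiveFunctional

variable {Φ Ψ : (ℝ → ℝ) → ℝ} {ρ σ : ℝ → ℝ}

theorem mono (h : IsPositiveFunctional Φ) (hρ : IsTestWeight ρ) (hσ : IsTestWeight σ)
    (hle : ρ ≤ σ) : Φ ρ ≤ Φ σ := by
  have hsub : σ = ρ + (σ + (-1 : ℝ) • ρ) := by ext; simp
  have hdiff := hσ.add (hρ.const_smul (-1))
  rw [hsub, h.map_add hρ hdiff]
  have := h.nonneg hdiff fun t ↦ by simpa using hle t
  linarith

theorem abs_le (h : IsPositiveFunctional Φ) (hρ : IsTestWeight ρ) (hσ : IsTestWeight σ) {C : ℝ}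
    (hle : ∀ t, |ρ t| ≤ C * σ t) : |Φ ρ| ≤ C * Φ σ := by
  have hupper := h.mono hρ (hσ.const_smul C) fun t ↦ (le_abs_self _).trans (hle t)
  have hlower := h.mono (hρ.const_smul (-1)) (hσ.const_smul C)
    fun t ↦ by simpa using (neg_le_abs (ρ t)).trans (hle t)
  rw [h.map_smul hσ] at hupper hlower
  rw [h.map_smul hρ] at hlower
  exact _root_.abs_le.2 ⟨by linarith, hupper⟩

theorem isBigO {ι : Type*} {l : Filter ι} (h : IsPositiveFunctional Φ) {ρ σ : ι → ℝ → ℝ}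
    (hρ : ∀ k, IsTestWeight (ρ k)) (hσ : ∀ k, IsTestWeight (σ k)) {C : ℝ}
    (hle : ∀ᶠ k in l, ∀ t, |ρ k t| ≤ C * σ k t) :
    (fun k ↦ Φ (ρ k)) =O[l] fun k ↦ Φ (σ k) := by
  refine .of_bound |C| (hle.mono fun k hk ↦ ?_)
  rw [Real.norm_eq_abs, Real.norm_eq_abs, ← abs_mul]
  exact (h.abs_le (hρ k) (hσ k) hk).trans (le_abs_self _)

theorem add (h : IsPositiveFunctional Φ) (h' : IsPositiveFunctional Ψ) :
    IsPositiveFunctional (Φ + Ψ) where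
  map_add hρ hσ := by
    simp only [Pi.add_apply, h.map_add hρ hσ, h'.map_add hρ hσ, add_add_add_comm]
  map_smul hρ c := by simp only [Pi.add_apply, h.map_smul hρ, h'.map_smul hρ, mul_add]
  nonneg hρ h0 := add_nonneg (h.nonneg hρ h0) (h'.nonneg hρ h0)

theorem sum {κ : Type*} {s : Finset κ} {Φ : κ → (ℝ → ℝ) → ℝ}
    (h : ∀ x ∈ s, IsPositiveFunctional (Φ x)) : IsPositiveFunctional (∑ x ∈ s, Φ x) where
  map_add hρ hσ := by
    simp only [Finset.sum_apply, ← sum_add_distrib]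
    exact sum_congr rfl fun x hx ↦ (h x hx).map_add hρ hσ
  map_smul hρ c := by
    simp only [Finset.sum_apply, mul_sum]
    exact sum_congr rfl fun x hx ↦ (h x hx).map_smul hρ c
  nonneg hρ h0 := by
    simp only [Finset.sum_apply]
    exact sum_nonneg fun x hx ↦ (h x hx).nonneg hρ h0

end IsPositiveFunctional

/-- A weighted bilinear form `b ρ f g = ∫ ρ(log r) f B g`, for a nonnegative operator `B` commuting
with the derivation `D = r ∂_r`; `integral_by_parts` moves `D` from one factor to the other.
The space `W` carries no linear structure, since only the weight is ever varied linearly. -/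
structure IsWeightedForm {W : Type*} (D : W → W) (b : (ℝ → ℝ) → W → W → ℝ) : Prop where
  symm : ∀ {ρ}, IsTestWeight ρ → ∀ f g, b ρ f g = b ρ g f
  add_weight : ∀ {ρ σ}, IsTestWeight ρ → IsTestWeight σ → ∀ f g,
    b (ρ + σ) f g = b ρ f g + b σ f g
  smul_weight : ∀ {ρ}, IsTestWeight ρ → ∀ (c : ℝ) f g, b (c • ρ) f g = c * b ρ f g
  self_nonneg : ∀ {ρ}, IsTestWeight ρ → 0 ≤ ρ → ∀ f, 0 ≤ b ρ f f
  integral_by_parts : ∀ {ρ}, IsTestWeight ρ → ∀ f g,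
    b (deriv ρ) f g + b ρ (D f) g + b ρ f (D g) = 0
  sq_nonneg : ∀ {σ τ}, IsTestWeight σ → IsTestWeight τ → ∀ f g,
    0 ≤ b (σ ^ 2) f f + 2 * b (σ * τ) f g + b (τ ^ 2) g g

/-- The coefficients in the diagonalisation of `b ρ w (D^m w)` obtained by repeated integration by
parts, see `IsWeightedForm.apply_iterate_eq_sum`. -/
def diagCoeff : ℕ → ℕ → ℝ
  | 0, 0 => 1
  | 0, _ + 1 => 0
  | 1, 0 => -1 / 2
  | 1, _ + 1 => 0
  | m + 2, 0 => -diagCoeff (m + 1) 0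
  | m + 2, i + 1 => -diagCoeff (m + 1) (i + 1) - diagCoeff m i

theorem diagCoeff_eq_zero {m i : ℕ} (h : m < 2 * i) : diagCoeff m i = 0 := by
  induction m, i using diagCoeff.induct with
  | case1 | case3 | case5 => omega
  | case2 | case4 => rfl
  | case6 m i ih₁ ih₂ => rw [diagCoeff, ih₁ (by omega), ih₂ (by omega), neg_zero, sub_zero]

theorem diagCoeff_two_mul (i : ℕ) : diagCoeff (2 * i) i = (-1) ^ i := by
  induction i with
  | zero => rfl
  | succ i ih =>
    rw [mul_add_one, diagCoeff, diagCoeff_eq_zero (m := 2 * i + 1) (by omega), ih, pow_succ]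
    ring

namespace IsWeightedForm

variable {W : Type*} {D : W → W} {b : (ℝ → ℝ) → W → W → ℝ} {ρ σ τ : ℝ → ℝ}

theorem self_isPositiveFunctional (h : IsWeightedForm D b) (f : W) :
    IsPositiveFunctional fun ρ ↦ b ρ f f :=
  ⟨fun hρ hσ ↦ h.add_weight hρ hσ f f, fun hρ c ↦ h.smul_weight hρ c f f,
    fun hρ h0 ↦ h.self_nonneg hρ h0 f⟩

theorem abs_mul_weight_le (h : IsWeightedForm D b) (hσ : IsTestWeight σ) (hτ : IsTestWeight τ)
    {ε : ℝ} (hε : 0 < ε) (f g : W) :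
    |b (σ * τ) f g| ≤ ε * b (σ ^ 2) f f + 1 / (4 * ε) * b (τ ^ 2) g g := by
  have key (c : ℝ) (hc : c ^ 2 = 1) :
      c * b (σ * τ) f g ≤ ε * b (σ ^ 2) f f + 1 / (4 * ε) * b (τ ^ 2) g g := by
    have hsq := h.sq_nonneg (hσ.const_smul (2 * ε)) (hτ.const_smul (-c)) f g
    rw [smul_pow, smul_pow, neg_sq, hc, one_smul, smul_mul_smul_comm,
      h.smul_weight (hσ.pow two_ne_zero), h.smul_weight (hσ.mul hτ.contDiff)] at hsq
    have hscaled := mul_nonneg (show 0 ≤ 1 / (4 * ε) by positivity) hsq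
    field_simp at hscaled ⊢
    linarith
  exact abs_le'.2 ⟨by simpa using key 1 (by norm_num), by simpa using key (-1) (by norm_num)⟩

theorem apply_iterate_add_two (h : IsWeightedForm D b) (hρ : IsTestWeight ρ) (w : W) (m : ℕ) :
    b ρ w (D^[m + 2] w) = -b (deriv ρ) w (D^[m + 1] w) - b ρ (D w) (D^[m] (D w)) := by
  have hparts := h.integral_by_parts hρ w (D^[m + 1] w)
  rw [← Function.iterate_succ_apply' D, Function.iterate_succ_apply D m] at hparts
  rw [Function.iterate_succ_apply D m]
  linarith

theorem apply_iterate_eq_sum (h : IsWeightedForm D b) {m N : ℕ} (hm : m < 2 * N)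
    (hρ : IsTestWeight ρ) (w : W) :
    b ρ w (D^[m] w) = ∑ i ∈ range N,
      diagCoeff m i * b (deriv^[m - 2 * i] ρ) (D^[i] w) (D^[i] w) := by
  obtain ⟨N, rfl⟩ := Nat.exists_eq_succ_of_ne_zero (show N ≠ 0 by omega)
  induction m using Nat.twoStepInduction generalizing N ρ w with
  | zero => simp [sum_range_succ', diagCoeff]
  | one =>
    have hparts := h.integral_by_parts hρ w w
    rw [h.symm hρ (D w) w] at hparts
    simp only [sum_range_succ', diagCoeff, Function.iterate_one, zero_mul, sum_const_zero,
      mul_zero, Nat.sub_zero, Function.iterate_zero, id]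
    linarith
  | more m ih₁ ih₂ =>
    obtain ⟨N, rfl⟩ := Nat.exists_eq_succ_of_ne_zero (show N ≠ 0 by omega)
    rw [h.apply_iterate_add_two hρ, ih₂ hρ.deriv w (N + 1) (by omega), ih₁ hρ (D w) N (by omega),
      Nat.succ_eq_add_one, Nat.succ_eq_add_one, sum_range_succ' _ (N + 1),
      sum_range_succ' _ (N + 1), neg_add, ← sub_eq_add_neg, sub_right_comm, ← sum_neg_distrib,
      ← sum_sub_distrib, diagCoeff, neg_mul, ← sub_eq_add_neg]
    refine congrArg₂ _ (sum_congr rfl fun i _ ↦ ?_) rfl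
    rw [diagCoeff, show m + 2 - 2 * (i + 1) = m - 2 * i by omega]
    rcases lt_or_ge (m + 1) (2 * (i + 1)) with hi | hi
    · simp [diagCoeff_eq_zero hi, Function.iterate_succ_apply]
    · rw [show m - 2 * i = (m + 1 - 2 * (i + 1)) + 1 by omega, Function.iterate_succ_apply deriv,
        Function.iterate_succ_apply D]
      ring

theorem apply_D_self_le (h : IsWeightedForm D b) (hσ : IsTestWeight σ) (hτ : IsTestWeight τ)
    {C : ℝ} (hC : ∀ t, |deriv^[2] (σ * τ) t| ≤ C * (τ ^ 2) t) {ε : ℝ} (hε : 0 < ε) (f : W) :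
    b (σ * τ) (D f) (D f) ≤
      ε * b (σ ^ 2) (D (D f)) (D (D f)) + (1 / (4 * ε) + C / 2) * b (τ ^ 2) f f := by
  have hστ := hσ.mul hτ.contDiff
  have hparts : b (σ * τ) (D (D f)) f =
      1 / 2 * b (deriv^[2] (σ * τ)) f f - b (σ * τ) (D f) (D f) := by
    have := h.apply_iterate_eq_sum (m := 2) (N := 2) (by norm_num) hστ f
    norm_num [sum_range_succ, diagCoeff] at this
    rw [h.symm hστ]
    exact this.trans (sub_eq_add_neg _ _).symm
  have hcut := (abs_le.1 ((h.self_isPositiveFunctional f).abs_le (hστ.iterate_deriv 2)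
    (hτ.pow two_ne_zero) hC)).2
  have hyoung := (abs_le.1 (h.abs_mul_weight_le hσ hτ hε (D (D f)) f)).1
  linarith

end IsWeightedForm

/-! ### Towers of weighted forms -/

/-- The forms `b_j ρ f g = ∫ ρ(log r) r^{-n} f A^j g` attached to the powers of the nonnegative
operator `A` (minus the spherical Laplacian), together with `D = r ∂_r`. Since `A` is given only
through these forms, the inequality `⟨A f, f⟩ ≤ ε ‖A f‖² + ‖f‖² / 4ε` is a field. -/
structure FormTower (W : Type*) where
  /-- The derivation `D = r ∂_r`. -/
  D : W → W
  /-- The form `b_j`. -/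
  form : ℕ → (ℝ → ℝ) → W → W → ℝ
  isWeightedForm : ∀ j, IsWeightedForm D (form j)
  form_succ_le : ∀ {σ τ}, IsTestWeight σ → IsTestWeight τ → ∀ (j : ℕ) {ε : ℝ}, 0 < ε → ∀ f,
    form (j + 1) (σ * τ) f f ≤
      ε * form (j + 2) (σ ^ 2) f f + 1 / (4 * ε) * form j (τ ^ 2) f f

/-- The exponents `(m, j)` of the operators `A^j D^m` of order at most six. -/
def sixthOrder : Finset (ℕ × ℕ) :=
  {q ∈ range 7 ×ˢ range 4 | q.1 + 2 * q.2 ≤ 6}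

theorem mem_sixthOrder {q : ℕ × ℕ} : q ∈ sixthOrder ↔ q.1 + 2 * q.2 ≤ 6 := by
  simp only [sixthOrder, mem_filter, mem_product, mem_range]
  omega

/-- The pairs `(i, j)` with `i + j ≤ N`. -/
def simplex (N : ℕ) : Finset (ℕ × ℕ) :=
  {x ∈ range (N + 1) ×ˢ range (N + 1) | x.1 + x.2 ≤ N}

theorem mem_simplex {N : ℕ} {x : ℕ × ℕ} : x ∈ simplex N ↔ x.1 + x.2 ≤ N := by
  simp only [simplex, mem_filter, mem_product, mem_range]
  omega

theorem sum_sixthOrder_eq_even_add_odd (F : ℕ × ℕ → ℝ) :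
    ∑ q ∈ sixthOrder, F q =
      ∑ x ∈ simplex 3, F (2 * x.1, x.2) + ∑ x ∈ simplex 2, F (2 * x.1 + 1, x.2) := by
  simp [sixthOrder, simplex, sum_filter, sum_product, sum_range_succ]
  ring

/-- The weights `∂^d (η ∂^a η)` produced by moving derivatives from `w` to the cutoff `η`. -/
def cutoffDeriv (a d : ℕ) (η : ℝ → ℝ) : ℝ → ℝ := deriv^[d] (η * deriv^[a] η)

theorem cutoffDeriv_translate (a d : ℕ) (T : ℝ) (η : ℝ → ℝ) :
    cutoffDeriv a d (translate T η) = translate T (cutoffDeriv a d η) := by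
  rw [cutoffDeriv, cutoffDeriv, ← iterate_deriv_translate, iterate_deriv_translate T η a]
  rfl

protected theorem IsTestWeight.cutoffDeriv {η : ℝ → ℝ} (h : IsTestWeight η) (a d : ℕ) :
    IsTestWeight (cutoffDeriv a d η) :=
  (h.mul (h.contDiff.iterate_deriv a)).iterate_deriv d

namespace FormTower

variable {W : Type*} (𝓕 : FormTower W) (w : W)

/-- The energy `∫ ρ(log r) r^{-n} D^i w A^j D^i w`. -/
def energy (i j : ℕ) (ρ : ℝ → ℝ) : ℝ := 𝓕.form j ρ (𝓕.D^[i] w) (𝓕.D^[i] w)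

/-- The pairing of `f` with the operator `∑ c_{mj} A^j D^m` of order six applied to `w`. -/
def pairing (c : ℕ → ℕ → ℝ) (ρ : ℝ → ℝ) (f : W) : ℝ :=
  ∑ q ∈ sixthOrder, c q.1 q.2 * 𝓕.form q.2 ρ f (𝓕.D^[q.1] w)

/-- The pairing of `η w` with the operator `∑ s_{mj} A^j D^m` applied to `η w`, expanded by the
Leibniz rule: the second variation in the direction `η w`. -/
def stabilityForm (s : ℕ → ℕ → ℝ) (η : ℝ → ℝ) : ℝ :=
  ∑ q ∈ sixthOrder, s q.1 q.2 * ∑ l ∈ range (q.1 + 1),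
    (q.1.choose l : ℝ) * 𝓕.form q.2 (η * deriv^[q.1 - l] η) w (𝓕.D^[l] w)

theorem energy_isPositiveFunctional (i j : ℕ) : IsPositiveFunctional (𝓕.energy w i j) :=
  (𝓕.isWeightedForm j).self_isPositiveFunctional _

section Expansion

variable {ι : Type*} {l : Filter ι} {ρ η : ι → ℝ → ℝ} {L : ι → ℝ} {j : ℕ}

theorem isBigO_form_iterate (hρ : ∀ k, IsTestWeight (ρ k)) {m : ℕ}
    (hL : ∀ i, 2 * i ≤ m → (fun k ↦ 𝓕.energy w i j (deriv^[m - 2 * i] (ρ k))) =O[l] L) :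
    (fun k ↦ 𝓕.form j (ρ k) w (𝓕.D^[m] w)) =O[l] L := by
  simp only [fun k ↦ (𝓕.isWeightedForm j).apply_iterate_eq_sum
    (show m < 2 * (m + 1) by omega) (hρ k) w]
  refine .fun_sum fun i _ ↦ ?_
  rcases lt_or_ge m (2 * i) with hi | hi
  · simpa only [diagCoeff_eq_zero hi, zero_mul] using isBigO_zero L l
  · exact (hL i hi).const_mul_left _

theorem isBigO_form_iterate_two_mul_sub (hρ : ∀ k, IsTestWeight (ρ k)) {m : ℕ}
    (hL : ∀ i < m, (fun k ↦ 𝓕.energy w i j (deriv^[2 * m - 2 * i] (ρ k))) =O[l] L) :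
    (fun k ↦ 𝓕.form j (ρ k) w (𝓕.D^[2 * m] w) - (-1) ^ m * 𝓕.energy w m j (ρ k)) =O[l] L := by
  simp only [fun k ↦ (𝓕.isWeightedForm j).apply_iterate_eq_sum
    (show 2 * m < 2 * (m + 1) by omega) (hρ k) w, sum_range_succ _ m, diagCoeff_two_mul,
    Nat.sub_self, Function.iterate_zero, id, energy, add_sub_cancel_right]
  exact .fun_sum fun i hi ↦ (hL i (mem_range.1 hi)).const_mul_left _

theorem isBigO_pairing_sub (hη : ∀ k, IsTestWeight (η k))
    (hL : ∀ i j a d, 1 ≤ a + d → 2 * (i + j) + a + d ≤ 6 →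
      (fun k ↦ 𝓕.energy w i j (cutoffDeriv a d (η k))) =O[l] L) (c : ℕ → ℕ → ℝ) :
    (fun k ↦ 𝓕.pairing w c (η k * η k) w -
      ∑ x ∈ simplex 3, (-1) ^ x.1 * c (2 * x.1) x.2 * 𝓕.energy w x.1 x.2 (η k * η k)) =O[l] L := by
  have hη₂ k : IsTestWeight (η k * η k) := (hη k).mul (hη k).contDiff
  have hsplit k : 𝓕.pairing w c (η k * η k) w -
      ∑ x ∈ simplex 3, (-1) ^ x.1 * c (2 * x.1) x.2 * 𝓕.energy w x.1 x.2 (η k * η k) =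
      ∑ x ∈ simplex 3, c (2 * x.1) x.2 * (𝓕.form x.2 (η k * η k) w (𝓕.D^[2 * x.1] w) -
        (-1) ^ x.1 * 𝓕.energy w x.1 x.2 (η k * η k)) +
      ∑ x ∈ simplex 2, c (2 * x.1 + 1) x.2 *
        𝓕.form x.2 (η k * η k) w (𝓕.D^[2 * x.1 + 1] w) := by
    rw [pairing, sum_sixthOrder_eq_even_add_odd, add_sub_right_comm, ← sum_sub_distrib]
    exact congrArg₂ _ (sum_congr rfl fun x _ ↦ by ring) rfl
  simp only [hsplit]
  refine .add (.fun_sum fun x hx ↦ .const_mul_left ?_ _) (.fun_sum fun x hx ↦ .const_mul_left ?_ _)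
  all_goals have := mem_simplex.1 hx
  · exact 𝓕.isBigO_form_iterate_two_mul_sub w hη₂ fun i hi ↦
      hL i x.2 0 (2 * x.1 - 2 * i) (by omega) (by omega)
  · exact 𝓕.isBigO_form_iterate w hη₂ fun i hi ↦
      hL i x.2 0 (2 * x.1 + 1 - 2 * i) (by omega) (by omega)

theorem isBigO_stabilityForm_sub (hη : ∀ k, IsTestWeight (η k))
    (hL : ∀ i j a d, 1 ≤ a + d → 2 * (i + j) + a + d ≤ 6 →
      (fun k ↦ 𝓕.energy w i j (cutoffDeriv a d (η k))) =O[l] L) (s : ℕ → ℕ → ℝ) :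
    (fun k ↦ 𝓕.stabilityForm w s (η k) -
      ∑ x ∈ simplex 3, (-1) ^ x.1 * s (2 * x.1) x.2 * 𝓕.energy w x.1 x.2 (η k * η k)) =O[l] L := by
  have hlower : (fun k ↦ 𝓕.stabilityForm w s (η k) - 𝓕.pairing w s (η k * η k) w) =O[l] L := by
    have hsplit k : 𝓕.stabilityForm w s (η k) - 𝓕.pairing w s (η k * η k) w =
        ∑ q ∈ sixthOrder, s q.1 q.2 * ∑ i ∈ range q.1, (q.1.choose i : ℝ) *
          𝓕.form q.2 (η k * deriv^[q.1 - i] (η k)) w (𝓕.D^[i] w) := by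
      rw [stabilityForm, pairing, ← sum_sub_distrib]
      refine sum_congr rfl fun q _ ↦ ?_
      simp [sum_range_succ, mul_add]
    simp only [hsplit]
    refine .fun_sum fun q hq ↦ .const_mul_left (.fun_sum fun i hi ↦ .const_mul_left ?_ _) _
    have := mem_sixthOrder.1 hq
    have := mem_range.1 hi
    exact 𝓕.isBigO_form_iterate w (fun k ↦ (hη k).mul ((hη k).contDiff.iterate_deriv _))
      fun m hm ↦ hL m q.2 (q.1 - i) (i - 2 * m) (by omega) (by omega)
  exact (hlower.add (𝓕.isBigO_pairing_sub w hη hL s)).congr_left fun k ↦ by ring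

theorem isBigO_pairing_D_sub (hρ : ∀ k, IsTestWeight (ρ k))
    (hL : ∀ i j a, i + j ≤ 3 → 1 ≤ a → a ≤ 6 →
      (fun k ↦ 𝓕.energy w i j (deriv^[a] (ρ k))) =O[l] L) (c : ℕ → ℕ → ℝ) :
    (fun k ↦ 𝓕.pairing w c (ρ k) (𝓕.D w) -
      ∑ x ∈ simplex 2, (-1) ^ x.1 * c (2 * x.1 + 1) x.2 * 𝓕.energy w (x.1 + 1) x.2 (ρ k))
        =O[l] L := by
  have hsplit k : 𝓕.pairing w c (ρ k) (𝓕.D w) -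
      ∑ x ∈ simplex 2, (-1) ^ x.1 * c (2 * x.1 + 1) x.2 * 𝓕.energy w (x.1 + 1) x.2 (ρ k) =
      ∑ x ∈ simplex 3, c (2 * x.1) x.2 * 𝓕.form x.2 (ρ k) (𝓕.D w) (𝓕.D^[2 * x.1] w) +
      ∑ x ∈ simplex 2, c (2 * x.1 + 1) x.2 *
        (𝓕.form x.2 (ρ k) (𝓕.D w) (𝓕.D^[2 * x.1] (𝓕.D w)) -
          (-1) ^ x.1 * 𝓕.energy (𝓕.D w) x.1 x.2 (ρ k)) := by
    rw [pairing, sum_sixthOrder_eq_even_add_odd, add_sub_assoc, ← sum_sub_distrib]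
    exact congrArg₂ _ rfl (sum_congr rfl fun x _ ↦ by
      simp only [energy, Function.iterate_succ_apply]; ring)
  have hLD i j a (hij : i + 1 + j ≤ 3) (ha : 1 ≤ a) (ha' : a ≤ 6) :
      (fun k ↦ 𝓕.energy (𝓕.D w) i j (deriv^[a] (ρ k))) =O[l] L := hL (i + 1) j a hij ha ha'
  simp only [hsplit]
  refine .add (.fun_sum fun x hx ↦ .const_mul_left ?_ _) (.fun_sum fun x hx ↦ .const_mul_left ?_ _)
  all_goals have := mem_simplex.1 hx
  · obtain ⟨_ | m, j⟩ := x
    · have hlow := hL 0 j 1 (by omega) le_rfl (by norm_num)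
      refine (hlow.const_mul_left (-1 / 2)).congr_left fun k ↦ ?_
      have hparts := (𝓕.isWeightedForm j).integral_by_parts (hρ k) w w
      have hsymm := (𝓕.isWeightedForm j).symm (hρ k) (𝓕.D w) w
      simp only [energy, Function.iterate_one, mul_zero, Function.iterate_zero, id]
      linarith
    · simp only [mul_add_one, Function.iterate_succ_apply]
      exact 𝓕.isBigO_form_iterate (𝓕.D w) hρ fun i hi ↦
        hLD i j (2 * m + 1 - 2 * i) (by grind) (by omega) (by grind)
  · exact 𝓕.isBigO_form_iterate_two_mul_sub (𝓕.D w) hρ fun i hi ↦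
      hLD i x.2 (2 * x.1 - 2 * i) (by omega) (by omega) (by omega)

end Expansion

end FormTower

/-! ### Interpolation -/

/-- `f` is controlled by an arbitrarily small multiple of `g` plus a multiple of `h`, uniformly
along `l`; this is the shape of Ehrling and Young inequalities. -/
def InterpolatedBetween {ι : Type*} (l : Filter ι) (f g h : ι → ℝ) : Prop :=
  ∀ ε > 0, ∃ C, 0 ≤ C ∧ ∀ᶠ k in l, f k ≤ ε * g k + C * h k

namespace InterpolatedBetween

variable {ι : Type*} {l : Filter ι} {f f' g g' h h' : ι → ℝ}

theorem of_le (hg : 0 ≤ g) (hfh : f ≤ h) : InterpolatedBetween l f g h := fun ε hε ↦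
  ⟨1, one_pos.le, .of_forall fun k ↦ by linarith [mul_nonneg hε.le (hg k), hfh k]⟩

theorem mono (hf : InterpolatedBetween l f g h) (hg : g ≤ g') (hh : h ≤ h') :
    InterpolatedBetween l f g' h' := fun ε hε ↦ by
  obtain ⟨C, hC, hle⟩ := hf ε hε
  refine ⟨C, hC, hle.mono fun k hk ↦ hk.trans ?_⟩
  gcongr
  exacts [hg k, hh k]

theorem add (hf : InterpolatedBetween l f g h) (hf' : InterpolatedBetween l f' g h) :
    InterpolatedBetween l (f + f') g h := fun ε hε ↦ by
  obtain ⟨C, hC, hle⟩ := hf (ε / 2) (half_pos hε)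
  obtain ⟨C', hC', hle'⟩ := hf' (ε / 2) (half_pos hε)
  refine ⟨C + C', add_nonneg hC hC', ?_⟩
  filter_upwards [hle, hle'] with k hk hk'
  rw [Pi.add_apply]
  linarith

theorem sum {κ : Type*} {s : Finset κ} {f : κ → ι → ℝ} (hg : 0 ≤ g) (hh : 0 ≤ h)
    (hf : ∀ x ∈ s, InterpolatedBetween l (f x) g h) :
    InterpolatedBetween l (∑ x ∈ s, f x) g h :=
  Finset.sum_induction _ (InterpolatedBetween l · g h) (fun _ _ ↦ add) (of_le hg hh) hf

theorem trans_right (hf0 : 0 ≤ f) (hf : InterpolatedBetween l f g h')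
    (hh' : InterpolatedBetween l h' f h) : InterpolatedBetween l f g h := fun ε hε ↦ by
  obtain ⟨C, hC, hle⟩ := hf (ε / 2) (half_pos hε)
  obtain ⟨C', hC', hle'⟩ := hh' (1 / (2 * (C + 1))) (by positivity)
  refine ⟨2 * (C * C'), by positivity, ?_⟩
  filter_upwards [hle, hle'] with k hk hk'
  have hsmall : C * (1 / (2 * (C + 1)) * f k) ≤ f k / 2 := by
    have : 0 ≤ f k := hf0 k
    field_simp
    linarith
  have := mul_le_mul_of_nonneg_left hk' hC
  linarith

theorem trans_left (hf : InterpolatedBetween l f g' h) (hg' : InterpolatedBetween l g' g h) :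
    InterpolatedBetween l f g h := fun ε hε ↦ by
  obtain ⟨C, hC, hle⟩ := hf 1 one_pos
  obtain ⟨C', hC', hle'⟩ := hg' ε hε
  refine ⟨C + C', add_nonneg hC hC', ?_⟩
  filter_upwards [hle, hle'] with k hk hk'
  linarith

theorem isBigO (hf : InterpolatedBetween l f g h) (hf0 : 0 ≤ f) (hg : g =O[l] f) : f =O[l] h := by
  obtain ⟨c, hc, hgf⟩ := hg.exists_pos
  obtain ⟨C, hC, hle⟩ := hf (1 / (2 * c)) (by positivity)
  refine .of_bound (2 * C) ?_
  filter_upwards [hgf.bound, hle] with k hgk hk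
  rw [Real.norm_eq_abs, Real.norm_eq_abs, abs_of_nonneg (hf0 k)] at hgk
  rw [Real.norm_eq_abs, Real.norm_eq_abs, abs_of_nonneg (hf0 k)]
  have habsorb : 1 / (2 * c) * g k ≤ f k / 2 := by
    field_simp
    linarith [le_abs_self (g k)]
  have := mul_le_mul_of_nonneg_left (le_abs_self (h k)) hC
  linarith

theorem chain_succ {K : ℕ → ι → ℝ} (hK0 : ∀ s, 0 ≤ K s)
    (hK : ∀ s, InterpolatedBetween l (K (s + 1)) (K (s + 2)) (K s)) (s : ℕ) :
    InterpolatedBetween l (K s) (K (s + 1)) (K 0) := by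
  induction s with
  | zero => exact of_le (hK0 1) le_rfl
  | succ s ih => exact (hK s).trans_right (hK0 _) ih

theorem chain {K : ℕ → ι → ℝ} (hK0 : ∀ s, 0 ≤ K s)
    (hK : ∀ s, InterpolatedBetween l (K (s + 1)) (K (s + 2)) (K s)) {s N : ℕ} (hs : s < N) :
    InterpolatedBetween l (K s) (K N) (K 0) := by
  induction N, hs using Nat.le_induction with
  | base => exact chain_succ hK0 hK s
  | succ N _ ih => exact ih.trans_left (chain_succ hK0 hK N)

end InterpolatedBetween

theorem isBigO_of_sum_le {ι κ : Type*} {l : Filter ι} {s : Finset κ} {c : κ → ℝ}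
    {f : κ → ι → ℝ} {g β : ι → ℝ} (hf : ∀ x ∈ s, 0 ≤ f x)
    (hc : ∀ x ∈ s, c x ≤ 0 → f x =O[l] β) (hg : g =O[l] β)
    (hle : ∀ᶠ k in l, ∑ x ∈ s, c x * f x k ≤ g k) {x : κ} (hx : x ∈ s) : f x =O[l] β := by
  rcases le_or_gt (c x) 0 with hcx | hcx
  · exact hc x hx hcx
  let G k := g k - ∑ y ∈ s with c y ≤ 0, c y * f y k
  have hG : G =O[l] β := hg.sub <| .fun_sum fun y hy ↦
    (hc y (mem_filter.1 hy).1 (mem_filter.1 hy).2).const_mul_left _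
  refine .trans (.of_bound (1 / c x) (hle.mono fun k hk ↦ ?_)) hG
  have hmem : x ∈ {y ∈ s | ¬ c y ≤ 0} := mem_filter.2 ⟨hx, hcx.not_ge⟩
  have hsingle := single_le_sum (f := fun y ↦ c y * f y k) (fun y hy ↦
    mul_nonneg (not_le.1 (mem_filter.1 hy).2).le (hf y (mem_filter.1 hy).1 k)) hmem
  rw [← sum_filter_add_sum_filter_not s (fun y ↦ c y ≤ 0)] at hk
  rw [Real.norm_eq_abs, Real.norm_eq_abs, abs_of_nonneg (hf x hx k), one_div, le_inv_mul_iff₀ hcx]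
  exact le_trans (by linarith) (le_abs_self (G k))

/-! ### Powers of a bump as weights -/

theorem exists_iterate_deriv_pow_mul_eq {ψ h : ℝ → ℝ} (hψ : ContDiff ℝ ∞ ψ) (hh : ContDiff ℝ ∞ h)
    {m k : ℕ} (hk : k ≤ m) :
    ∃ g : ℝ → ℝ, ContDiff ℝ ∞ g ∧ deriv^[k] (ψ ^ m * h) = ψ ^ (m - k) * g := by
  induction k with
  | zero => exact ⟨h, hh, rfl⟩
  | succ k ih =>
    obtain ⟨g, hg, hgk⟩ := ih (by omega)
    obtain ⟨r, hr⟩ : ∃ r, m - k = r + 1 := ⟨m - (k + 1), by omega⟩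
    refine ⟨((r + 1 : ℕ) : ℝ → ℝ) * deriv ψ * g + ψ * deriv g, ?_, ?_⟩
    · exact (((contDiff_const (c := ((r + 1 : ℕ) : ℝ))).mul (hψ.iterate_deriv 1)).mul hg).add
        (hψ.mul (hg.iterate_deriv 1))
    · rw [Function.iterate_succ_apply', hgk, show m - (k + 1) = r by omega, hr]
      ext t
      have hψt := (hψ.differentiable (by simp) t).hasDerivAt
      have hgt := (hg.differentiable (by simp) t).hasDerivAt
      rw [((hψt.pow (r + 1)).mul hgt).deriv]
      simp only [Pi.mul_apply, Pi.add_apply, Pi.pow_apply, Pi.natCast_apply, pow_succ,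
        Nat.add_sub_cancel]
      ring

section Bump

variable {ψ : ℝ → ℝ}

theorem IsTestWeight.exists_abs_cutoffDeriv_pow_le (hψ : IsTestWeight ψ) (h0 : 0 ≤ ψ) (h1 : ψ ≤ 1)
    {m a d e : ℕ} (hm : m ≠ 0) (had : a + d ≤ m) (he : e + (a + d) ≤ 2 * m) :
    ∃ C, ∀ t, |cutoffDeriv a d (ψ ^ m) t| ≤ C * (ψ ^ e) t := by
  obtain ⟨g, hg, hga⟩ := exists_iterate_deriv_pow_mul_eq hψ.contDiff contDiff_const
    (h := 1) (m := m) (k := a) (by omega)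
  obtain ⟨g', hg', hgd⟩ := exists_iterate_deriv_pow_mul_eq hψ.contDiff hg
    (m := 2 * m - a) (k := d) (by omega)
  have hform : cutoffDeriv a d (ψ ^ m) = ψ ^ (2 * m - a - d) * g' := by
    rw [mul_one] at hga
    rw [cutoffDeriv, hga, ← mul_assoc, ← pow_add, show m + (m - a) = 2 * m - a by omega, hgd]
  obtain ⟨C, hC⟩ := hψ.hasCompactSupport.isCompact.exists_bound_of_continuousOn
    hg'.continuous.continuousOn
  refine ⟨|C|, fun t ↦ ?_⟩
  have hψt : 0 ≤ ψ t := h0 t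
  rw [hform, Pi.mul_apply, Pi.pow_apply, Pi.pow_apply, abs_mul, abs_of_nonneg (by positivity),
    mul_comm]
  by_cases ht : t ∈ tsupport ψ
  · exact mul_le_mul ((hC t ht).trans (le_abs_self C))
      (pow_le_pow_of_le_one hψt (h1 t) (by omega)) (by positivity) (abs_nonneg C)
  · rw [image_eq_zero_of_notMem_tsupport ht, zero_pow (by omega), mul_zero]
    positivity

theorem translate_pow_sq (T : ℝ) (ψ : ℝ → ℝ) (k : ℕ) :
    translate T (ψ ^ k) ^ 2 = translate T (ψ ^ (2 * k)) := by
  rw [mul_comm, pow_mul]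
  rfl

theorem translate_pow_add_two_mul (T : ℝ) (ψ : ℝ → ℝ) (r : ℕ) :
    translate T (ψ ^ (r + 2)) * translate T (ψ ^ r) = translate T (ψ ^ (2 * (r + 1))) := by
  rw [show 2 * (r + 1) = r + 2 + r by ring, pow_add ψ (r + 2) r]
  rfl

namespace FormTower

variable {W : Type*} (𝓕 : FormTower W) (w : W) {l : Filter ℝ}

theorem interpolatedBetween_energy_succ_left (hψ : IsTestWeight ψ) (h0 : 0 ≤ ψ) (h1 : ψ ≤ 1)
    {r : ℕ} (hr : r ≠ 0) (i j : ℕ) :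
    InterpolatedBetween l (fun T ↦ 𝓕.energy w (i + 1) j (translate T (ψ ^ (2 * (r + 1)))))
      (fun T ↦ 𝓕.energy w (i + 2) j (translate T (ψ ^ (2 * (r + 2)))))
      fun T ↦ 𝓕.energy w i j (translate T (ψ ^ (2 * r))) := fun ε hε ↦ by
  obtain ⟨C, hC⟩ := hψ.exists_abs_cutoffDeriv_pow_le h0 h1 (m := r + 1) (a := 0) (d := 2)
    (e := 2 * r) (by omega) (by omega) (by omega)
  refine ⟨1 / (4 * ε) + |C| / 2, by positivity, .of_forall fun T ↦ ?_⟩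
  have hσ := (hψ.pow (show r + 2 ≠ 0 by omega)).translate T
  have hτ := (hψ.pow hr).translate T
  have hcut t : |deriv^[2] (translate T (ψ ^ (r + 2)) * translate T (ψ ^ r)) t| ≤
      |C| * (translate T (ψ ^ r) ^ 2) t := by
    rw [translate_pow_add_two_mul, translate_pow_sq, iterate_deriv_translate, two_mul (r + 1),
      pow_add]
    exact (hC (t - T)).trans (mul_le_mul_of_nonneg_right (le_abs_self C) (pow_nonneg (h0 _) _))
  have := (𝓕.isWeightedForm j).apply_D_self_le hσ hτ hcut hε (𝓕.D^[i] w)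
  simpa only [translate_pow_add_two_mul, translate_pow_sq, energy,
    Function.iterate_succ_apply'] using this

theorem interpolatedBetween_energy_succ_right (hψ : IsTestWeight ψ) {r : ℕ} (hr : r ≠ 0)
    (i j : ℕ) :
    InterpolatedBetween l (fun T ↦ 𝓕.energy w i (j + 1) (translate T (ψ ^ (2 * (r + 1)))))
      (fun T ↦ 𝓕.energy w i (j + 2) (translate T (ψ ^ (2 * (r + 2)))))
      fun T ↦ 𝓕.energy w i j (translate T (ψ ^ (2 * r))) := fun ε hε ↦ by
  refine ⟨1 / (4 * ε), by positivity, .of_forall fun T ↦ ?_⟩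
  have := 𝓕.form_succ_le ((hψ.pow (show r + 2 ≠ 0 by omega)).translate T)
    ((hψ.pow hr).translate T) j hε (𝓕.D^[i] w)
  simpa only [translate_pow_add_two_mul, translate_pow_sq, energy] using this

/-- The total energy of level `s` in the window `translate T ψ`; the power of the bump grows with
the order, which is what makes interpolation between the levels possible. -/
def levelEnergy (ψ : ℝ → ℝ) (q s : ℕ) (T : ℝ) : ℝ :=
  ∑ x ∈ antidiagonal s, 𝓕.energy w x.1 x.2 (translate T (ψ ^ (2 * (q + s))))

variable {𝓕 w}

theorem levelEnergy_nonneg (hψ : IsTestWeight ψ) (h0 : 0 ≤ ψ) {q : ℕ} (hq : q ≠ 0) (s : ℕ) :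
    0 ≤ 𝓕.levelEnergy w ψ q s := fun T ↦ sum_nonneg fun x _ ↦
  (𝓕.energy_isPositiveFunctional w x.1 x.2).nonneg
    ((hψ.pow (by omega)).translate T) fun t ↦ pow_nonneg (h0 (t - T)) _

theorem energy_le_levelEnergy (hψ : IsTestWeight ψ) (h0 : 0 ≤ ψ) {q : ℕ} (hq : q ≠ 0)
    (i j : ℕ) (T : ℝ) :
    𝓕.energy w i j (translate T (ψ ^ (2 * (q + (i + j))))) ≤ 𝓕.levelEnergy w ψ q (i + j) T :=
  single_le_sum (f := fun x ↦ 𝓕.energy w x.1 x.2 (translate T (ψ ^ (2 * (q + (i + j))))))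
    (a := (i, j)) (fun x _ ↦ (𝓕.energy_isPositiveFunctional w x.1 x.2).nonneg
      ((hψ.pow (by omega)).translate T) fun t ↦ pow_nonneg (h0 (t - T)) _)
    (mem_antidiagonal.2 rfl)

theorem interpolatedBetween_levelEnergy_succ (hψ : IsTestWeight ψ) (h0 : 0 ≤ ψ) (h1 : ψ ≤ 1)
    {q : ℕ} (hq : q ≠ 0) (s : ℕ) :
    InterpolatedBetween l (𝓕.levelEnergy w ψ q (s + 1)) (𝓕.levelEnergy w ψ q (s + 2))
      (𝓕.levelEnergy w ψ q s) := by
  have hsum : 𝓕.levelEnergy w ψ q (s + 1) = ∑ x ∈ antidiagonal (s + 1), fun T ↦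
      𝓕.energy w x.1 x.2 (translate T (ψ ^ (2 * (q + s + 1)))) := by
    ext T
    rw [Finset.sum_apply]
    rfl
  rw [hsum]
  refine .sum (levelEnergy_nonneg hψ h0 hq _) (levelEnergy_nonneg hψ h0 hq _) fun x hx ↦ ?_
  have hr : q + s ≠ 0 := by omega
  obtain ⟨_ | i, j⟩ := x
  · obtain rfl : j = s + 1 := by simpa using hx
    refine (𝓕.interpolatedBetween_energy_succ_right w hψ hr 0 s).mono (fun T ↦ ?_) fun T ↦ ?_
    · have := energy_le_levelEnergy (𝓕 := 𝓕) (w := w) hψ h0 hq 0 (s + 2) T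
      rwa [zero_add] at this
    · have := energy_le_levelEnergy (𝓕 := 𝓕) (w := w) hψ h0 hq 0 s T
      rwa [zero_add] at this
  · obtain rfl : s = i + j := by have := mem_antidiagonal.1 hx; omega
    refine (𝓕.interpolatedBetween_energy_succ_left w hψ h0 h1 hr i j).mono (fun T ↦ ?_) fun T ↦ ?_
    · have := energy_le_levelEnergy (𝓕 := 𝓕) (w := w) hψ h0 hq (i + 2) j T
      rwa [show i + 2 + j = i + j + 2 by ring] at this
    · exact energy_le_levelEnergy hψ h0 hq i j T

end FormTower

end Bump

/-! ### Cutoffs -/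

theorem iterate_deriv_congr {f g : ℝ → ℝ} {t : ℝ} (h : f =ᶠ[𝓝 t] g) (a : ℕ) :
    deriv^[a] f =ᶠ[𝓝 t] deriv^[a] g := by
  induction a with
  | zero => exact h
  | succ a ih => simpa only [Function.iterate_succ_apply'] using ih.deriv

theorem cutoffDeriv_congr {f g : ℝ → ℝ} {t : ℝ} (h : f =ᶠ[𝓝 t] g) (a d : ℕ) :
    cutoffDeriv a d f t = cutoffDeriv a d g t :=
  (iterate_deriv_congr (h.mul (iterate_deriv_congr h a)) d).eq_of_nhds

theorem iterate_deriv_const (c : ℝ) {a : ℕ} (ha : a ≠ 0) :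
    deriv^[a] (Function.const ℝ c) = 0 := by
  rw [← iteratedDeriv_eq_iterate]
  exact funext fun t ↦ (iteratedDeriv_const.trans (if_neg ha))

theorem cutoffDeriv_const (c : ℝ) {a d : ℕ} (h : 1 ≤ a + d) :
    cutoffDeriv a d (Function.const ℝ c) = 0 := by
  rcases eq_or_ne a 0 with rfl | ha
  · exact iterate_deriv_const (c * c) (by omega)
  · rw [cutoffDeriv, iterate_deriv_const c ha, mul_zero]
    rcases eq_or_ne d 0 with rfl | hd
    · rfl
    · exact iterate_deriv_const 0 hd

/-- A bump equal to one on `[0, 1]` and supported in `[-1, 2]`. -/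
def bump (t : ℝ) : ℝ := Real.smoothTransition (t + 1) * Real.smoothTransition (2 - t)

theorem bump_eq_zero {t : ℝ} (h : t ∉ Set.Ioo (-1) 2) : bump t = 0 := by
  rw [Set.mem_Ioo, not_and_or, not_lt, not_lt] at h
  rcases h with h | h
  · rw [bump, Real.smoothTransition.zero_of_nonpos (by linarith), zero_mul]
  · rw [bump, Real.smoothTransition.zero_of_nonpos (x := 2 - t) (by linarith), mul_zero]

theorem bump_eq_one {t : ℝ} (h : t ∈ Set.Icc 0 1) : bump t = 1 := by
  rw [bump, Real.smoothTransition.one_of_one_le (by linarith [h.1]),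
    Real.smoothTransition.one_of_one_le (by linarith [h.2]), mul_one]

theorem bump_nonneg : 0 ≤ bump := fun _ ↦
  mul_nonneg (Real.smoothTransition.nonneg _) (Real.smoothTransition.nonneg _)

theorem bump_le_one : bump ≤ 1 := fun _ ↦
  mul_le_one₀ (Real.smoothTransition.le_one _) (Real.smoothTransition.nonneg _)
    (Real.smoothTransition.le_one _)

theorem isTestWeight_bump : IsTestWeight bump where
  contDiff := (Real.smoothTransition.contDiff.comp (contDiff_id.add contDiff_const)).mul
    (Real.smoothTransition.contDiff.comp (contDiff_const.sub contDiff_id))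
  hasCompactSupport := .intro (isCompact_Icc (a := -1) (b := 2)) fun _ ht ↦
    bump_eq_zero fun h ↦ ht (Set.Ioo_subset_Icc_self h)

theorem exists_abs_cutoffDeriv_le_bump_pow {η : ℝ → ℝ} (hη : ContDiff ℝ ∞ η) {c₀ c₁ : ℝ}
    (hl : ∀ t ≤ 0, η t = c₀) (hr : ∀ t ≥ 1, η t = c₁) {a d : ℕ} (had : 1 ≤ a + d) (m : ℕ) :
    ∃ C, 0 ≤ C ∧ ∀ t, |cutoffDeriv a d η t| ≤ C * bump t ^ m := by
  have hcont : Continuous (cutoffDeriv a d η) :=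
    ((hη.mul (hη.iterate_deriv a)).iterate_deriv d).continuous
  obtain ⟨C, hC⟩ := isCompact_Icc.exists_bound_of_continuousOn (s := Set.Icc (0 : ℝ) 1)
    hcont.continuousOn
  refine ⟨|C|, abs_nonneg C, fun t ↦ ?_⟩
  by_cases ht : t ∈ Set.Icc 0 1
  · rw [bump_eq_one ht, one_pow, mul_one]
    exact (hC t ht).trans (le_abs_self C)
  have hconst : ∃ c, η =ᶠ[𝓝 t] Function.const ℝ c := by
    rw [Set.mem_Icc, not_and_or, not_le, not_le] at ht
    rcases ht with ht | ht
    · exact ⟨c₀, (gt_mem_nhds ht).mono fun x hx ↦ hl x hx.le⟩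
    · exact ⟨c₁, (lt_mem_nhds ht).mono fun x hx ↦ hr x hx.le⟩
  obtain ⟨c, hc⟩ := hconst
  rw [cutoffDeriv_congr hc, cutoffDeriv_const c had, Pi.zero_apply, abs_zero]
  exact mul_nonneg (abs_nonneg C) (pow_nonneg (bump_nonneg t) m)

/-- A cutoff equal to one on `[A + 1, B]` and supported in `[A, B + 1]`. -/
def longCutoff (A B : ℝ) : ℝ → ℝ :=
  translate A Real.smoothTransition - translate B Real.smoothTransition

theorem longCutoff_nonneg {A B : ℝ} (h : A ≤ B) : 0 ≤ longCutoff A B := fun _ ↦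
  sub_nonneg.2 (Real.smoothTransition.monotone (by linarith))

theorem longCutoff_eq_one {A B t : ℝ} (hA : A + 1 ≤ t) (hB : t ≤ B) : longCutoff A B t = 1 := by
  rw [longCutoff, Pi.sub_apply, translate, translate,
    Real.smoothTransition.one_of_one_le (by linarith),
    Real.smoothTransition.zero_of_nonpos (by linarith), sub_zero]

theorem longCutoff_eq_zero_of_le {A B t : ℝ} (hA : t ≤ A) (hB : t ≤ B) : longCutoff A B t = 0 := by
  rw [longCutoff, Pi.sub_apply, translate, translate,
    Real.smoothTransition.zero_of_nonpos (by linarith),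
    Real.smoothTransition.zero_of_nonpos (by linarith), sub_zero]

theorem longCutoff_eq_zero_of_ge {A B t : ℝ} (hA : A + 1 ≤ t) (hB : B + 1 ≤ t) :
    longCutoff A B t = 0 := by
  rw [longCutoff, Pi.sub_apply, translate, translate,
    Real.smoothTransition.one_of_one_le (by linarith),
    Real.smoothTransition.one_of_one_le (by linarith), sub_self]

theorem isTestWeight_longCutoff (A B : ℝ) : IsTestWeight (longCutoff A B) where
  contDiff := (Real.smoothTransition.contDiff.comp (contDiff_id.sub contDiff_const)).sub
    (Real.smoothTransition.contDiff.comp (contDiff_id.sub contDiff_const))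
  hasCompactSupport := .intro (isCompact_Icc (a := min A B) (b := max A B + 1)) fun t ht ↦ by
    rw [Set.mem_Icc, not_and_or, not_le, not_le] at ht
    rcases ht with ht | ht
    · exact longCutoff_eq_zero_of_le (ht.le.trans (min_le_left A B))
        (ht.le.trans (min_le_right A B))
    · exact longCutoff_eq_zero_of_ge (by linarith [le_max_left A B])
        (by linarith [le_max_right A B])

theorem exists_abs_cutoffDeriv_longCutoff_le {a d : ℕ} (had : 1 ≤ a + d) (m : ℕ) :
    ∃ C, ∀ A B : ℝ, A + 2 ≤ B → ∀ t,
      |cutoffDeriv a d (longCutoff A B) t| ≤ C * (bump (t - A) ^ m + bump (t - B) ^ m) := by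
  obtain ⟨C₁, hC₁, hup⟩ := exists_abs_cutoffDeriv_le_bump_pow Real.smoothTransition.contDiff
    (c₀ := 0) (c₁ := 1) (fun _ ↦ Real.smoothTransition.zero_of_nonpos)
    (fun _ ↦ Real.smoothTransition.one_of_one_le) had m
  obtain ⟨C₂, hC₂, hdown⟩ := exists_abs_cutoffDeriv_le_bump_pow
    (η := 1 - Real.smoothTransition) (contDiff_const.sub Real.smoothTransition.contDiff)
    (c₀ := 1) (c₁ := 0) (fun t ht ↦ by simp [Real.smoothTransition.zero_of_nonpos ht])
    (fun t ht ↦ by simp [Real.smoothTransition.one_of_one_le ht]) had m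
  refine ⟨C₁ + C₂, fun A B hAB t ↦ ?_⟩
  have hA := pow_nonneg (bump_nonneg (t - A)) m
  have hB := pow_nonneg (bump_nonneg (t - B)) m
  rw [add_mul]
  rcases lt_or_ge t B with ht | ht
  · have hloc : longCutoff A B =ᶠ[𝓝 t] translate A Real.smoothTransition := by
      filter_upwards [gt_mem_nhds ht] with x hx
      rw [longCutoff, Pi.sub_apply, sub_eq_self]
      exact Real.smoothTransition.zero_of_nonpos (by linarith)
    rw [cutoffDeriv_congr hloc, cutoffDeriv_translate]
    exact (hup _).trans (le_add_of_le_of_nonneg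
      (mul_le_mul_of_nonneg_left (le_add_of_nonneg_right hB) hC₁)
      (mul_nonneg hC₂ (add_nonneg hA hB)))
  · have hloc : longCutoff A B =ᶠ[𝓝 t] translate B (1 - Real.smoothTransition) := by
      filter_upwards [lt_mem_nhds (show A + 1 < t by linarith)] with x hx
      rw [longCutoff, Pi.sub_apply, translate,
        Real.smoothTransition.one_of_one_le (x := x - A) (by linarith)]
      rfl
    rw [cutoffDeriv_congr hloc, cutoffDeriv_translate]
    exact (hdown _).trans (le_add_of_nonneg_of_le (mul_nonneg hC₁ (add_nonneg hA hB))
      (mul_le_mul_of_nonneg_left (le_add_of_nonneg_left hA) hC₂))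

/-- The cutoff of the unit window at `T`. -/
def windowCutoff (q : ℕ) (T : ℝ) : ℝ → ℝ := translate T (bump ^ (q + 3))

theorem isTestWeight_windowCutoff (q : ℕ) (T : ℝ) : IsTestWeight (windowCutoff q T) :=
  (isTestWeight_bump.pow (by omega)).translate T

/-- The weight of the unit window at `T`. -/
def window (q : ℕ) (T : ℝ) : ℝ → ℝ := windowCutoff q T * windowCutoff q T

theorem isTestWeight_window (q : ℕ) (T : ℝ) : IsTestWeight (window q T) :=
  (isTestWeight_windowCutoff q T).mul (isTestWeight_windowCutoff q T).contDiff

theorem window_nonneg (q : ℕ) (T : ℝ) : 0 ≤ window q T := fun _ ↦ mul_self_nonneg _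

theorem window_eq_translate (q : ℕ) (T : ℝ) :
    window q T = translate T (bump ^ (2 * (q + 3))) := by
  rw [two_mul, pow_add]
  rfl

theorem window_eq_zero {q : ℕ} {T t : ℝ} (h : t ∉ Set.Ioo (T - 1) (T + 2)) : window q T t = 0 := by
  rw [window_eq_translate, translate, Pi.pow_apply, bump_eq_zero, zero_pow (by omega)]
  exact fun h' ↦ h ⟨by linarith [h'.1], by linarith [h'.2]⟩

theorem window_le_one (q : ℕ) (T : ℝ) : window q T ≤ 1 := fun t ↦ by
  rw [window_eq_translate]
  exact pow_le_one₀ (bump_nonneg _) (bump_le_one _)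

theorem longCutoff_mul_self_add_window_le (q : ℕ) {A B : ℝ} (h : A + 2 ≤ B) :
    longCutoff A B * longCutoff A B + window q (B + 2) ≤
      longCutoff A (B + 4) * longCutoff A (B + 4) := fun t ↦ by
  simp only [Pi.add_apply, Pi.mul_apply]
  by_cases ht : t ∈ Set.Ioo (B + 1) (B + 4)
  · rw [longCutoff_eq_zero_of_ge (by linarith [ht.1]) ht.1.le,
      longCutoff_eq_one (by linarith [ht.1]) ht.2.le]
    linarith [show window q (B + 2) t ≤ 1 from window_le_one q (B + 2) t]
  · have hmono : longCutoff A B t ≤ longCutoff A (B + 4) t :=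
      sub_le_sub_left (Real.smoothTransition.monotone (by linarith)) _
    rw [window_eq_zero fun h' ↦ ht ⟨by linarith [h'.1], by linarith [h'.2]⟩, add_zero]
    exact mul_self_le_mul_self (longCutoff_nonneg (by linarith) t) hmono

/-- The admissible end points `(A, B)` of long cutoffs. -/
def longIntervals : Filter (ℝ × ℝ) := 𝓟 {x | x.1 + 2 ≤ x.2}

theorem IsPositiveFunctional.isBigO_cutoffDeriv_longCutoff {Φ : (ℝ → ℝ) → ℝ}
    (h : IsPositiveFunctional Φ) {a d : ℕ} (had : 1 ≤ a + d) (q : ℕ) :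
    (fun x ↦ Φ (cutoffDeriv a d (longCutoff x.1 x.2))) =O[longIntervals]
      fun x ↦ Φ (window q x.1 + window q x.2) := by
  obtain ⟨C, hC⟩ := exists_abs_cutoffDeriv_longCutoff_le had (2 * (q + 3))
  refine h.isBigO (fun x ↦ (isTestWeight_longCutoff x.1 x.2).cutoffDeriv a d)
    (fun x ↦ (isTestWeight_window q x.1).add (isTestWeight_window q x.2)) (C := C) ?_
  filter_upwards [mem_principal_self _] with x hx t
  rw [window_eq_translate, window_eq_translate]
  exact hC x.1 x.2 hx t

/-! ### Energy estimates -/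

namespace FormTower

variable {W : Type*} (𝓕 : FormTower W) (w : W) (c : ℕ → ℕ → ℝ)

theorem pairing_isPositiveFunctional
    (h : ∀ {ρ}, IsTestWeight ρ → 0 ≤ ρ → 0 ≤ 𝓕.pairing w c ρ w) :
    IsPositiveFunctional fun ρ ↦ 𝓕.pairing w c ρ w where
  map_add hρ hσ := by
    simp only [pairing, (𝓕.isWeightedForm _).add_weight hρ hσ, mul_add, sum_add_distrib]
  map_smul hρ e := by
    simp only [pairing, (𝓕.isWeightedForm _).smul_weight hρ, mul_sum, mul_left_comm]
  nonneg := h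

/-- All energies of order at most six together with the potential energy. -/
def totalEnergy : (ℝ → ℝ) → ℝ :=
  ∑ x ∈ simplex 3, 𝓕.energy w x.1 x.2 + fun ρ ↦ 𝓕.pairing w c ρ w

variable {𝓕 w c} {ι : Type*} {l : Filter ι}

theorem isBigO_pairing {η : ι → ℝ → ℝ} {L : ι → ℝ} (hη : ∀ k, IsTestWeight (η k))
    (hL : ∀ i j a d, 1 ≤ a + d → 2 * (i + j) + a + d ≤ 6 →
      (fun k ↦ 𝓕.energy w i j (cutoffDeriv a d (η k))) =O[l] L)
    (henergy : ∀ x ∈ simplex 3, (fun k ↦ 𝓕.energy w x.1 x.2 (η k * η k)) =O[l] L) :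
    (fun k ↦ 𝓕.pairing w c (η k * η k) w) =O[l] L :=
  ((𝓕.isBigO_pairing_sub w hη hL c).add
    (.fun_sum fun x hx ↦ (henergy x hx).const_mul_left _)).congr_left fun _ ↦ sub_add_cancel _ _

theorem isBigO_totalEnergy {ρ : ι → ℝ → ℝ} {L : ι → ℝ}
    (henergy : ∀ x ∈ simplex 3, (fun k ↦ 𝓕.energy w x.1 x.2 (ρ k)) =O[l] L)
    (hpot : (fun k ↦ 𝓕.pairing w c (ρ k) w) =O[l] L) :
    (fun k ↦ 𝓕.totalEnergy w c (ρ k)) =O[l] L :=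
  ((IsBigO.fun_sum henergy).add hpot).congr_left fun _ ↦ by
    simp only [totalEnergy, Pi.add_apply, Finset.sum_apply]

theorem pairing_le_totalEnergy {ρ : ℝ → ℝ} (hρ : IsTestWeight ρ) (h0 : 0 ≤ ρ) :
    𝓕.pairing w c ρ w ≤ 𝓕.totalEnergy w c ρ := by
  rw [totalEnergy, Pi.add_apply, Finset.sum_apply]
  exact le_add_of_nonneg_left (sum_nonneg fun x _ ↦
    (𝓕.energy_isPositiveFunctional w x.1 x.2).nonneg hρ h0)

theorem isBigO_energy_windowCutoff {l : Filter ℝ} {q : ℕ} (hq : 3 ≤ q) {i j a d N : ℕ}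
    (h : 2 * (i + j) + a + d ≤ 6) (hN : i + j < N) :
    (fun T ↦ 𝓕.energy w i j (cutoffDeriv a d (windowCutoff q T))) =O[l]
      ∑ r ∈ range N, 𝓕.levelEnergy w bump q r := by
  obtain ⟨C, hC⟩ := isTestWeight_bump.exists_abs_cutoffDeriv_pow_le bump_nonneg bump_le_one
    (m := q + 3) (a := a) (d := d) (e := 2 * (q + (i + j))) (by omega) (by omega) (by omega)
  have hlevel T : IsTestWeight (translate T (bump ^ (2 * (q + (i + j))))) :=
    (isTestWeight_bump.pow (by omega)).translate T
  have hpos r : 0 ≤ 𝓕.levelEnergy w bump q r :=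
    levelEnergy_nonneg isTestWeight_bump bump_nonneg (by omega) r
  refine ((𝓕.energy_isPositiveFunctional w i j).isBigO (C := C)
    (fun T ↦ (isTestWeight_windowCutoff q T).cutoffDeriv a d) hlevel
    (.of_forall fun T t ↦ ?_)).trans (.of_bound' (.of_forall fun T ↦ ?_))
  · rw [windowCutoff, cutoffDeriv_translate]
    exact hC (t - T)
  · rw [Finset.sum_apply, Real.norm_of_nonneg ((𝓕.energy_isPositiveFunctional w i j).nonneg
      (hlevel T) fun t ↦ pow_nonneg (bump_nonneg (t - T)) _)]
    exact (energy_le_levelEnergy isTestWeight_bump bump_nonneg (by omega) i j T).trans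
      ((single_le_sum (f := fun r ↦ 𝓕.levelEnergy w bump q r T) (fun r _ ↦ hpos r T)
        (mem_range.2 hN)).trans (le_abs_self _))

end FormTower

/-- The sign conditions on the Emden–Fowler operator `∑ c_{mj} A^j D^m` and the operator
`∑ s_{mj} A^j D^m` of the second variation: `top` and `zero` make stability coercive up to the
derivative energies, which `dissipation` controls. -/
structure SubcriticalCoefficients (p : ℝ) (c s : ℕ → ℕ → ℝ) : Prop where
  top : ∀ {i j}, i + j = 3 → 0 < (-1) ^ i * (p * c (2 * i) j - s (2 * i) j)
  zero : ∀ {j}, j ≤ 3 → 0 < p * c 0 j - s 0 j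
  dissipation : ∀ {i j}, i + j ≤ 2 → 0 < (-1) ^ i * -c (2 * i + 1) j

/-- The properties of the Emden–Fowler transform `w` of a solution stable for `t > T₀` on which the
Liouville argument rests; the potential energy `∫ ρ |w|^{p+1}` is the pairing of `w` with the
equation. -/
structure EmdenFowlerSystem {W : Type*} (𝓕 : FormTower W) (w : W) (p T₀ : ℝ) (c s : ℕ → ℕ → ℝ)
    (q : ℕ) : Prop where
  coefficients : SubcriticalCoefficients p c s
  three_le : 3 ≤ q
  potential_nonneg : ∀ {ρ}, IsTestWeight ρ → 0 ≤ ρ → 0 ≤ 𝓕.pairing w c ρ w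
  pairing_D : ∀ {ρ}, IsTestWeight ρ →
    𝓕.pairing w c ρ (𝓕.D w) = -(1 / (p + 1)) * 𝓕.pairing w c (deriv ρ) w
  stability : ∀ {η}, IsTestWeight η → (∀ t ≤ T₀, η t = 0) →
    p * 𝓕.pairing w c (η * η) w ≤ 𝓕.stabilityForm w s η
  young : ∀ l, InterpolatedBetween l (𝓕.levelEnergy w bump q 0)
    (fun T ↦ 𝓕.pairing w c (window q T) w) 1
  tendsto_form : ∀ {ρ}, IsTestWeight ρ → ∀ i m j,
    Tendsto (fun T ↦ 𝓕.form j (translate T ρ) (𝓕.D^[i] w) (𝓕.D^[m] w)) atBot (𝓝 0)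

namespace EmdenFowlerSystem

variable {W : Type*} {𝓕 : FormTower W} {w : W} {p T₀ : ℝ} {c s : ℕ → ℕ → ℝ} {q : ℕ}

theorem totalEnergy_isPositiveFunctional (H : EmdenFowlerSystem 𝓕 w p T₀ c s q) :
    IsPositiveFunctional (𝓕.totalEnergy w c) :=
  (IsPositiveFunctional.sum fun x _ ↦ 𝓕.energy_isPositiveFunctional w x.1 x.2).add
    (𝓕.pairing_isPositiveFunctional w c H.potential_nonneg)

theorem energy_le_totalEnergy (H : EmdenFowlerSystem 𝓕 w p T₀ c s q) {i j : ℕ} (hij : i + j ≤ 3)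
    {ρ : ℝ → ℝ} (hρ : IsTestWeight ρ) (h0 : 0 ≤ ρ) :
    𝓕.energy w i j ρ ≤ 𝓕.totalEnergy w c ρ := by
  rw [FormTower.totalEnergy, Pi.add_apply, Finset.sum_apply]
  exact (single_le_sum (f := fun x ↦ 𝓕.energy w x.1 x.2 ρ) (a := (i, j))
    (fun x _ ↦ (𝓕.energy_isPositiveFunctional w x.1 x.2).nonneg hρ h0)
    (mem_simplex.2 hij)).trans (le_add_of_nonneg_right (H.potential_nonneg hρ h0))

theorem exists_sum_energy_le (H : EmdenFowlerSystem 𝓕 w p T₀ c s q) {ι : Type*} {l : Filter ι}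
    {η : ι → ℝ → ℝ} {L : ι → ℝ} (hη : ∀ k, IsTestWeight (η k))
    (hη0 : ∀ᶠ k in l, ∀ t ≤ T₀, η k t = 0)
    (hL : ∀ i j a d, 1 ≤ a + d → 2 * (i + j) + a + d ≤ 6 →
      (fun k ↦ 𝓕.energy w i j (cutoffDeriv a d (η k))) =O[l] L) :
    ∃ g : ι → ℝ, g =O[l] L ∧ ∀ᶠ k in l,
      ∑ x ∈ simplex 3, (-1) ^ x.1 * (p * c (2 * x.1) x.2 - s (2 * x.1) x.2) *
        𝓕.energy w x.1 x.2 (η k * η k) ≤ g k := by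
  refine ⟨_, (𝓕.isBigO_stabilityForm_sub w hη hL s).sub
    ((𝓕.isBigO_pairing_sub w hη hL c).const_mul_left p), hη0.mono fun k hk ↦ ?_⟩
  have hsplit : ∑ x ∈ simplex 3, (-1) ^ x.1 * (p * c (2 * x.1) x.2 - s (2 * x.1) x.2) *
      𝓕.energy w x.1 x.2 (η k * η k) =
      p * ∑ x ∈ simplex 3, (-1) ^ x.1 * c (2 * x.1) x.2 * 𝓕.energy w x.1 x.2 (η k * η k) -
        ∑ x ∈ simplex 3, (-1) ^ x.1 * s (2 * x.1) x.2 * 𝓕.energy w x.1 x.2 (η k * η k) := by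
    rw [mul_sum, ← sum_sub_distrib]
    exact sum_congr rfl fun x _ ↦ by ring
  rw [hsplit]
  linarith [H.stability (hη k) hk]

/-! ### The uniform window bound -/

theorem isBigO_energy_window (H : EmdenFowlerSystem 𝓕 w p T₀ c s q) {x : ℕ × ℕ}
    (hx : x ∈ simplex 3) :
    (fun T ↦ 𝓕.energy w x.1 x.2 (window q T)) =O[𝓟 (Set.Ici (T₀ + 1))]
      ∑ r ∈ range 3, 𝓕.levelEnergy w bump q r := by
  have hq := H.three_le
  obtain ⟨g, hg, hle⟩ := H.exists_sum_energy_le (isTestWeight_windowCutoff q)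
    (l := 𝓟 (Set.Ici (T₀ + 1))) (by
      filter_upwards [mem_principal_self _] with T (hT : T₀ + 1 ≤ T) t ht
      rw [windowCutoff, translate, Pi.pow_apply, bump_eq_zero, zero_pow (by omega)]
      exact fun h ↦ by linarith [h.1])
    fun i j a d _ h ↦ FormTower.isBigO_energy_windowCutoff hq h (N := 3) (by omega)
  refine isBigO_of_sum_le (f := fun x T ↦ 𝓕.energy w x.1 x.2 (window q T))
    (fun x _ T ↦ (𝓕.energy_isPositiveFunctional w x.1 x.2).nonneg
      (isTestWeight_window q T) (window_nonneg q T)) (fun x hx hc ↦ ?_) hg hle hx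
  rcases (mem_simplex.1 hx).lt_or_eq with hlt | heq
  · exact FormTower.isBigO_energy_windowCutoff hq (a := 0) (d := 0) (by omega) hlt
  · exact absurd (H.coefficients.top heq) hc.not_gt

theorem isBigO_levelEnergy (H : EmdenFowlerSystem 𝓕 w p T₀ c s q) :
    (∑ r ∈ range 3, 𝓕.levelEnergy w bump q r) =O[𝓟 (Set.Ici (T₀ + 1))]
      𝓕.levelEnergy w bump q 0 := by
  have hq : q ≠ 0 := by have := H.three_le; omega
  have hpos r : 0 ≤ 𝓕.levelEnergy w bump q r :=
    FormTower.levelEnergy_nonneg isTestWeight_bump bump_nonneg hq r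
  have htop : 𝓕.levelEnergy w bump q 3 =O[𝓟 (Set.Ici (T₀ + 1))]
      ∑ r ∈ range 3, 𝓕.levelEnergy w bump q r := by
    change (fun T ↦ ∑ x ∈ antidiagonal 3,
      𝓕.energy w x.1 x.2 (translate T (bump ^ (2 * (q + 3))))) =O[_] _
    refine .fun_sum fun x hx ↦ ?_
    simpa only [window_eq_translate] using
      H.isBigO_energy_window (mem_simplex.2 (mem_antidiagonal.1 hx).le)
  refine InterpolatedBetween.isBigO (.sum (hpos 3) (hpos 0) fun r hr ↦ ?_)
    (sum_nonneg fun r _ ↦ hpos r) htop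
  exact InterpolatedBetween.chain hpos (FormTower.interpolatedBetween_levelEnergy_succ
    isTestWeight_bump bump_nonneg bump_le_one hq) (mem_range.1 hr)

theorem isBigO_totalEnergy_window (H : EmdenFowlerSystem 𝓕 w p T₀ c s q) :
    (fun T ↦ 𝓕.totalEnergy w c (window q T)) =O[𝓟 (Set.Ici (T₀ + 1))] (1 : ℝ → ℝ) := by
  have hq := H.three_le
  have henergy (x) (hx : x ∈ simplex 3) : (fun T ↦ 𝓕.energy w x.1 x.2 (window q T))
      =O[𝓟 (Set.Ici (T₀ + 1))] 𝓕.levelEnergy w bump q 0 :=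
    (H.isBigO_energy_window hx).trans H.isBigO_levelEnergy
  have hpot : (fun T ↦ 𝓕.pairing w c (window q T) w) =O[𝓟 (Set.Ici (T₀ + 1))]
      𝓕.levelEnergy w bump q 0 :=
    FormTower.isBigO_pairing (isTestWeight_windowCutoff q) (fun i j a d _ h ↦
      (FormTower.isBigO_energy_windowCutoff hq h (N := 3) (by omega)).trans H.isBigO_levelEnergy)
      henergy
  exact (FormTower.isBigO_totalEnergy henergy hpot).trans
    ((H.young _).isBigO (FormTower.levelEnergy_nonneg isTestWeight_bump bump_nonneg
      (by omega) 0) hpot)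

end EmdenFowlerSystem

/-! ### Dissipation and the Liouville argument -/

namespace EmdenFowlerSystem

variable {W : Type*} {𝓕 : FormTower W} {w : W} {p T₀ : ℝ} {c s : ℕ → ℕ → ℝ} {q : ℕ}

theorem isBigO_energy_cutoffDeriv_longCutoff (H : EmdenFowlerSystem 𝓕 w p T₀ c s q)
    {i j a d : ℕ} (hij : i + j ≤ 3) (had : 1 ≤ a + d) :
    (fun x ↦ 𝓕.energy w i j (cutoffDeriv a d (longCutoff x.1 x.2))) =O[longIntervals]
      fun x ↦ 𝓕.totalEnergy w c (window q x.1 + window q x.2) := by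
  refine ((𝓕.energy_isPositiveFunctional w i j).isBigO_cutoffDeriv_longCutoff had q).trans
    (.of_bound' (.of_forall fun x ↦ ?_))
  have hwin := (isTestWeight_window q x.1).add (isTestWeight_window q x.2)
  have hwin0 := add_nonneg (window_nonneg q x.1) (window_nonneg q x.2)
  rw [Real.norm_of_nonneg ((𝓕.energy_isPositiveFunctional w i j).nonneg hwin hwin0)]
  exact (H.energy_le_totalEnergy hij hwin hwin0).trans (le_abs_self _)

theorem isBigO_pairing_D_longCutoff (H : EmdenFowlerSystem 𝓕 w p T₀ c s q) :
    (fun x ↦ 𝓕.pairing w c (longCutoff x.1 x.2 * longCutoff x.1 x.2) (𝓕.D w)) =O[longIntervals]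
      fun x ↦ 𝓕.totalEnergy w c (window q x.1 + window q x.2) := by
  have hpot := 𝓕.pairing_isPositiveFunctional w c H.potential_nonneg
  have hderiv := ((hpot.isBigO_cutoffDeriv_longCutoff (a := 0) (d := 1) le_rfl q).const_mul_left
    (-(1 / (p + 1)))).congr_left fun x ↦ (H.pairing_D
      ((isTestWeight_longCutoff x.1 x.2).mul (isTestWeight_longCutoff x.1 x.2).contDiff)).symm
  refine hderiv.trans (.of_bound' (.of_forall fun x ↦ ?_))
  have hwin := (isTestWeight_window q x.1).add (isTestWeight_window q x.2)
  have hwin0 := add_nonneg (window_nonneg q x.1) (window_nonneg q x.2)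
  rw [Real.norm_of_nonneg (hpot.nonneg hwin hwin0)]
  exact (FormTower.pairing_le_totalEnergy hwin hwin0).trans (le_abs_self _)

theorem isBigO_energy_succ_longCutoff (H : EmdenFowlerSystem 𝓕 w p T₀ c s q) {x : ℕ × ℕ}
    (hx : x ∈ simplex 2) :
    (fun k ↦ 𝓕.energy w (x.1 + 1) x.2 (longCutoff k.1 k.2 * longCutoff k.1 k.2))
      =O[longIntervals] fun k ↦ 𝓕.totalEnergy w c (window q k.1 + window q k.2) := by
  have hcut (k : ℝ × ℝ) : IsTestWeight (longCutoff k.1 k.2 * longCutoff k.1 k.2) :=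
    (isTestWeight_longCutoff k.1 k.2).mul (isTestWeight_longCutoff k.1 k.2).contDiff
  have hsub := 𝓕.isBigO_pairing_D_sub w hcut (fun i j a hij ha _ ↦
    H.isBigO_energy_cutoffDeriv_longCutoff (a := 0) (d := a) hij (by omega)) c
  refine isBigO_of_sum_le (c := fun x ↦ (-1) ^ x.1 * -c (2 * x.1 + 1) x.2)
    (f := fun x k ↦ 𝓕.energy w (x.1 + 1) x.2 (longCutoff k.1 k.2 * longCutoff k.1 k.2))
    (fun x _ k ↦ (𝓕.energy_isPositiveFunctional w (x.1 + 1) x.2).nonneg (hcut k)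
      fun t ↦ mul_self_nonneg _)
    (fun x hx hc ↦ absurd (H.coefficients.dissipation (mem_simplex.1 hx)) hc.not_gt)
    (hsub.sub H.isBigO_pairing_D_longCutoff) (.of_forall fun k ↦ ?_) hx
  rw [sub_sub_cancel_left, ← sum_neg_distrib]
  exact (sum_congr rfl fun x _ ↦ by ring).le

theorem isBigO_totalEnergy_longCutoff (H : EmdenFowlerSystem 𝓕 w p T₀ c s q) :
    (fun x : ℝ × ℝ ↦ 𝓕.totalEnergy w c (longCutoff x.1 x.2 * longCutoff x.1 x.2))
      =O[𝓟 {x | T₀ ≤ x.1 ∧ x.1 + 2 ≤ x.2}]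
        fun x ↦ 𝓕.totalEnergy w c (window q x.1 + window q x.2) := by
  have hl : 𝓟 {x : ℝ × ℝ | T₀ ≤ x.1 ∧ x.1 + 2 ≤ x.2} ≤ longIntervals :=
    principal_mono.2 fun x hx ↦ hx.2
  have hη (x : ℝ × ℝ) := isTestWeight_longCutoff x.1 x.2
  have hL i j a d (had : 1 ≤ a + d) (h : 2 * (i + j) + a + d ≤ 6) :=
    (H.isBigO_energy_cutoffDeriv_longCutoff (i := i) (j := j) (by omega) had).mono hl
  obtain ⟨g, hg, hle⟩ := H.exists_sum_energy_le hη (by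
    filter_upwards [mem_principal_self _] with x hx t ht
    exact longCutoff_eq_zero_of_le (ht.trans hx.1) (by linarith [hx.1, hx.2])) hL
  have henergy (x) (hx : x ∈ simplex 3) :
      (fun k : ℝ × ℝ ↦ 𝓕.energy w x.1 x.2 (longCutoff k.1 k.2 * longCutoff k.1 k.2))
        =O[𝓟 {x | T₀ ≤ x.1 ∧ x.1 + 2 ≤ x.2}]
          fun k ↦ 𝓕.totalEnergy w c (window q k.1 + window q k.2) := by
    refine isBigO_of_sum_le
      (f := fun x k ↦ 𝓕.energy w x.1 x.2 (longCutoff k.1 k.2 * longCutoff k.1 k.2))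
      (fun x _ k ↦ (𝓕.energy_isPositiveFunctional w x.1 x.2).nonneg
        ((hη k).mul (hη k).contDiff) fun t ↦ mul_self_nonneg _) ?_ hg hle hx
    rintro ⟨_ | i, j⟩ hx hc
    · exact absurd (by simpa using H.coefficients.zero (by simpa using mem_simplex.1 hx)) hc.not_gt
    · exact (H.isBigO_energy_succ_longCutoff
        (mem_simplex.2 (by have := mem_simplex.1 hx; omega) : (i, j) ∈ simplex 2)).mono hl
  exact FormTower.isBigO_totalEnergy henergy (FormTower.isBigO_pairing hη hL henergy)

theorem nsmul_le_totalEnergy_longCutoff (H : EmdenFowlerSystem 𝓕 w p T₀ c s q) {A ε : ℝ}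
    (hA : ∀ T ≥ A, ε ≤ 𝓕.totalEnergy w c (window q T)) (k : ℕ) :
    k * ε ≤ 𝓕.totalEnergy w c
      (longCutoff A (A + 2 + 4 * k) * longCutoff A (A + 2 + 4 * k)) := by
  have hE := H.totalEnergy_isPositiveFunctional
  have hcut B : IsTestWeight (longCutoff A B * longCutoff A B) :=
    (isTestWeight_longCutoff A B).mul (isTestWeight_longCutoff A B).contDiff
  induction k with
  | zero => simpa using hE.nonneg (hcut _) fun t ↦ mul_self_nonneg _
  | succ k ih =>
    let B := A + 2 + 4 * (k : ℝ)
    have hAB : A + 2 ≤ B := le_add_of_nonneg_right (by positivity)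
    have hstep := hE.mono ((hcut B).add (isTestWeight_window q (B + 2))) (hcut (B + 4))
      (longCutoff_mul_self_add_window_le q hAB)
    rw [hE.map_add (hcut B) (isTestWeight_window q (B + 2))] at hstep
    have hnext : A + 2 + 4 * ((k + 1 : ℕ) : ℝ) = B + 4 := by push_cast; ring
    rw [hnext]
    push_cast
    linarith [hA (B + 2) (by linarith)]

theorem exists_totalEnergy_window_le (H : EmdenFowlerSystem 𝓕 w p T₀ c s q) (M : ℝ) {ε : ℝ}
    (hε : 0 < ε) : ∃ T ≥ M, 𝓕.totalEnergy w c (window q T) ≤ ε := by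
  by_contra! hlarge
  let A := max (T₀ + 1) M
  have hA : T₀ + 1 ≤ A := le_max_left _ _
  have hE := H.totalEnergy_isPositiveFunctional
  obtain ⟨K, hK⟩ := isBigO_principal.1 H.isBigO_totalEnergy_window
  obtain ⟨C, hC0, hC⟩ := H.isBigO_totalEnergy_longCutoff.exists_nonneg
  obtain ⟨k, hk⟩ := exists_nat_gt (C * (K + K) / ε)
  let B := A + 2 + 4 * (k : ℝ)
  have hAB : A + 2 ≤ B := le_add_of_nonneg_right (by positivity)
  have hwindow (T) (hT : T₀ + 1 ≤ T) : 𝓕.totalEnergy w c (window q T) ≤ K := by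
    simpa using (le_abs_self _).trans (hK T hT)
  have hboundary : ‖𝓕.totalEnergy w c (window q A + window q B)‖ ≤ K + K := by
    rw [Real.norm_of_nonneg (hE.nonneg ((isTestWeight_window q A).add (isTestWeight_window q B))
      (add_nonneg (window_nonneg q A) (window_nonneg q B))),
      hE.map_add (isTestWeight_window q A) (isTestWeight_window q B)]
    exact add_le_add (hwindow A hA) (hwindow B (by linarith))
  have hlong : 𝓕.totalEnergy w c (longCutoff A B * longCutoff A B) ≤ C * (K + K) :=
    (le_abs_self _).trans ((isBigOWith_principal.1 hC (A, B) ⟨by linarith, hAB⟩).trans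
      (mul_le_mul_of_nonneg_left hboundary hC0))
  have := H.nsmul_le_totalEnergy_longCutoff (A := A)
    (fun T hT ↦ (hlarge T ((le_max_right _ _).trans hT)).le) k
  linarith [(div_lt_iff₀ hε).1 hk]

theorem tendsto_totalEnergy_window_atBot (H : EmdenFowlerSystem 𝓕 w p T₀ c s q) :
    Tendsto (fun T ↦ 𝓕.totalEnergy w c (window q T)) atBot (𝓝 0) := by
  have hbump : IsTestWeight (bump ^ (2 * (q + 3))) := isTestWeight_bump.pow (by omega)
  simp only [FormTower.totalEnergy, FormTower.energy, FormTower.pairing, window_eq_translate,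
    Pi.add_apply, Finset.sum_apply]
  simpa using (tendsto_finsetSum (simplex 3) fun x _ ↦ H.tendsto_form hbump x.1 x.1 x.2).add
    (tendsto_finsetSum sixthOrder fun x _ ↦
      (H.tendsto_form hbump 0 x.1 x.2).const_mul (c x.1 x.2))

theorem exists_form_D_le (H : EmdenFowlerSystem 𝓕 w p T₀ c s q) {ρ : ℝ → ℝ}
    (hρ : IsTestWeight ρ) : ∃ C ≥ 0, ∃ R, ∀ A ≤ -R, ∀ B ≥ R, 𝓕.form 0 ρ (𝓕.D w) (𝓕.D w) ≤
      C * (𝓕.totalEnergy w c (window q A) + 𝓕.totalEnergy w c (window q B)) := by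
  obtain ⟨R, hR⟩ := hρ.hasCompactSupport.isCompact.isBounded.subset_closedBall 0
  obtain ⟨K, hK⟩ := hρ.hasCompactSupport.exists_bound_of_continuous hρ.contDiff.continuous
  obtain ⟨C, hC0, hC⟩ := (H.isBigO_energy_succ_longCutoff (mem_simplex.2 (Nat.zero_le 2) :
    (0, 0) ∈ simplex 2)).exists_nonneg
  have hK0 : 0 ≤ K := (norm_nonneg _).trans (hK 0)
  have hE := H.totalEnergy_isPositiveFunctional
  refine ⟨K * C, mul_nonneg hK0 hC0, |R| + 1, fun A hA B hB ↦ ?_⟩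
  have hcut := (isTestWeight_longCutoff A B).mul (isTestWeight_longCutoff A B).contDiff
  have hle t : |ρ t| ≤ K * (longCutoff A B * longCutoff A B) t := by
    by_cases ht : t ∈ tsupport ρ
    · have hRt := abs_le.1 ((mem_closedBall_zero_iff.1 (hR ht)).trans (le_abs_self R))
      rw [Pi.mul_apply, longCutoff_eq_one (by linarith [hRt.1]) (by linarith [hRt.2])]
      simpa using hK t
    · rw [image_eq_zero_of_notMem_tsupport ht, abs_zero]
      exact mul_nonneg hK0 (mul_self_nonneg _)
  have hform := (le_abs_self _).trans
    ((𝓕.energy_isPositiveFunctional w 1 0).abs_le hρ hcut hle)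
  have hdiss := (le_abs_self _).trans (isBigOWith_principal.1 hC (A, B)
    (show A + 2 ≤ B by linarith [abs_nonneg R]))
  have hwin := (isTestWeight_window q A).add (isTestWeight_window q B)
  rw [Real.norm_of_nonneg (hE.nonneg hwin (add_nonneg (window_nonneg q A) (window_nonneg q B))),
    hE.map_add (isTestWeight_window q A) (isTestWeight_window q B)] at hdiss
  rw [mul_assoc]
  exact hform.trans (mul_le_mul_of_nonneg_left hdiss hK0)

theorem form_D_nonpos (H : EmdenFowlerSystem 𝓕 w p T₀ c s q) {ρ : ℝ → ℝ}
    (hρ : IsTestWeight ρ) : 𝓕.form 0 ρ (𝓕.D w) (𝓕.D w) ≤ 0 := by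
  obtain ⟨C, hC, R, hle⟩ := H.exists_form_D_le hρ
  refine le_of_forall_pos_le_add fun ε hε ↦ ?_
  have hδ : 0 < ε / (2 * (C + 1)) := by positivity
  obtain ⟨B, hB, hBδ⟩ := H.exists_totalEnergy_window_le R hδ
  obtain ⟨A, hAδ, hA⟩ := ((H.tendsto_totalEnergy_window_atBot.eventually (gt_mem_nhds hδ)).and
    (eventually_le_atBot (-R))).exists
  have hsum : C * (ε / (2 * (C + 1)) + ε / (2 * (C + 1))) ≤ ε := by
    rw [← add_div, ← two_mul, mul_div_mul_left _ _ two_ne_zero, mul_div_assoc',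
      div_le_iff₀ (by positivity)]
    linarith
  rw [zero_add]
  exact (hle A hA B hB).trans
    ((mul_le_mul_of_nonneg_left (add_le_add hAδ.le hBδ) hC).trans hsum)

end EmdenFowlerSystem

/-! ### Polar calculus in an algebra with partial derivatives -/

/-- Commuting partial derivatives on a commutative algebra together with their coordinates. The
polar form of the Laplacian depends only on these identities. -/
structure PartialDerivations (R : Type*) [CommRing R] [Algebra ℝ R] (n : ℕ) where
  /-- The partial derivative `∂_i`. -/
  pderiv : Fin n → Derivation ℝ R R
  /-- The coordinate `x_i`. -/
  coord : Fin n → R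
  pderiv_comm : ∀ i j f, pderiv i (pderiv j f) = pderiv j (pderiv i f)
  pderiv_coord : ∀ i j, pderiv i (coord j) = if i = j then 1 else 0

namespace PartialDerivations

variable {R : Type*} [CommRing R] [Algebra ℝ R] {n : ℕ} (K : PartialDerivations R n)

/-- The Euler derivation `D = ∑ x_i ∂_i = r ∂_r`. -/
def euler : Derivation ℝ R R := ∑ i, K.coord i • K.pderiv i

/-- The Laplacian `∑ ∂_i²`. -/
def laplace : R →ₗ[ℝ] R := ∑ i, (K.pderiv i : R →ₗ[ℝ] R) ∘ₗ (K.pderiv i : R →ₗ[ℝ] R)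

/-- The squared radius `r² = ∑ x_i²`. -/
def radiusSq : R := ∑ i, K.coord i * K.coord i

/-- The nonnegative operator `A = -Δ_S`, minus the Laplacian of the unit sphere, in the polar
decomposition `r² Δ = D² + (n - 2) D - A`. -/
def spherical : R →ₗ[ℝ] R :=
  (K.euler : R →ₗ[ℝ] R) ∘ₗ (K.euler : R →ₗ[ℝ] R) + ((n : ℝ) - 2) • (K.euler : R →ₗ[ℝ] R)
    - LinearMap.mulLeft ℝ K.radiusSq ∘ₗ K.laplace

/-- Radial elements: those whose gradient is proportional to the position vector. -/
def IsRadial (h : R) : Prop := ∀ i, K.radiusSq * K.pderiv i h = K.coord i * K.euler h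

/-- The carré du champ `r² ∇f·∇g - Df Dg` of `A`: the inner product of the spherical gradients. -/
def carreDuChamp (f g : R) : R :=
  K.radiusSq * (∑ i, K.pderiv i f * K.pderiv i g) - K.euler f * K.euler g

/-- The operator `r^{2-s} Δ r^s`, see `radiusSq_mul_laplace_mul`. -/
def conjLaplace (s : ℝ) (f : R) : R :=
  K.euler (K.euler f) + (2 * s + n - 2) • K.euler f + (s ^ 2 + (n - 2) * s) • f - K.spherical f

theorem euler_apply (f : R) : K.euler f = ∑ i, K.coord i * K.pderiv i f := by
  rw [euler, ← Derivation.coeFnAddMonoidHom_apply, map_sum, Finset.sum_apply]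
  rfl

theorem laplace_apply (f : R) : K.laplace f = ∑ i, K.pderiv i (K.pderiv i f) := by
  simp [laplace]

theorem spherical_apply (f : R) :
    K.spherical f =
      K.euler (K.euler f) + ((n : ℝ) - 2) • K.euler f - K.radiusSq * K.laplace f := by
  simp [spherical]

theorem euler_pderiv (i : Fin n) (f : R) :
    K.euler (K.pderiv i f) = K.pderiv i (K.euler f) - K.pderiv i f := by
  simp [euler_apply, K.pderiv_coord, sum_add_distrib, K.pderiv_comm i]

theorem iterate_euler_mul (f g : R) (m : ℕ) :
    K.euler^[m] (f * g) =
      ∑ x ∈ antidiagonal m, m.choose x.1 • (K.euler^[x.1] f * K.euler^[x.2] g) := by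
  induction m with
  | zero => simp
  | succ m ih =>
    rw [sum_antidiagonal_choose_succ_nsmul
      (M := R) (fun i j ↦ K.euler^[i] f * K.euler^[j] g) m]
    simp only [Function.iterate_succ_apply', ih, map_sum, map_nsmul, Derivation.leibniz,
      smul_eq_mul, smul_add, sum_add_distrib, add_right_inj]
    refine sum_congr rfl fun x hx ↦ ?_
    rw [m.choose_symm_of_eq_add (mem_antidiagonal.1 hx).symm, mul_comm]

theorem euler_laplace (f : R) :
    K.euler (K.laplace f) = K.laplace (K.euler f) - (2 : ℝ) • K.laplace f := by
  rw [laplace_apply, laplace_apply, map_sum, smul_sum, ← sum_sub_distrib]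
  refine sum_congr rfl fun i _ ↦ ?_
  rw [euler_pderiv, euler_pderiv, map_sub]
  module

theorem euler_coord (i : Fin n) : K.euler (K.coord i) = K.coord i := by
  simp [euler_apply, K.pderiv_coord]

theorem euler_radiusSq : K.euler K.radiusSq = (2 : ℝ) • K.radiusSq := by
  simp [radiusSq, euler_coord, smul_sum, two_smul]

theorem pderiv_radiusSq (i : Fin n) : K.pderiv i K.radiusSq = 2 * K.coord i := by
  simp [radiusSq, K.pderiv_coord, sum_add_distrib, two_mul]

theorem euler_spherical (f : R) : K.euler (K.spherical f) = K.spherical (K.euler f) := by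
  simp only [spherical_apply, map_sub, map_add, Derivation.leibniz, euler_laplace, euler_radiusSq,
    Derivation.map_smul, smul_eq_mul, mul_sub, mul_smul_comm, smul_mul_assoc,
    mul_comm (K.laplace f)]
  abel

theorem carreDuChamp_comm (f g : R) : K.carreDuChamp f g = K.carreDuChamp g f := by
  simp only [carreDuChamp, mul_comm]

theorem carreDuChamp_add_left (f₁ f₂ g : R) :
    K.carreDuChamp (f₁ + f₂) g = K.carreDuChamp f₁ g + K.carreDuChamp f₂ g := by
  simp only [carreDuChamp, map_add, add_mul, sum_add_distrib, mul_add]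
  ring

theorem carreDuChamp_mul_left (h f g : R) :
    K.carreDuChamp (h * f) g = h * K.carreDuChamp f g + f * K.carreDuChamp h g := by
  simp only [carreDuChamp, Derivation.leibniz, smul_eq_mul, add_mul, sum_add_distrib, mul_assoc,
    ← mul_sum]
  ring

theorem euler_carreDuChamp (f g : R) :
    K.euler (K.carreDuChamp f g) =
      K.carreDuChamp (K.euler f) g + K.carreDuChamp f (K.euler g) := by
  simp only [carreDuChamp, map_sub, Derivation.leibniz, map_sum, smul_eq_mul, euler_radiusSq,
    euler_pderiv, mul_sub, sub_mul, sum_add_distrib, sum_sub_distrib, Algebra.smul_def, map_ofNat,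
    mul_comm (K.pderiv _ g)]
  ring

theorem laplace_mul (h f : R) :
    K.laplace (h * f) =
      h * K.laplace f + 2 * (∑ i, K.pderiv i h * K.pderiv i f) + f * K.laplace h := by
  simp only [laplace_apply, mul_sum, ← sum_add_distrib]
  refine sum_congr rfl fun i _ ↦ ?_
  simp only [Derivation.leibniz, map_add, smul_eq_mul]
  ring

theorem spherical_mul (h f : R) :
    K.spherical (h * f) =
      h * K.spherical f + f * K.spherical h - 2 * K.carreDuChamp h f := by
  simp only [spherical_apply, laplace_mul, Derivation.leibniz, map_add, smul_eq_mul, carreDuChamp,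
    smul_add, mul_add, mul_sub, mul_smul_comm]
  ring

theorem sum_pderiv_coord_mul (g : R) :
    ∑ i, K.pderiv i (K.coord i * g) = (n : ℝ) • g + K.euler g := by
  simp [K.pderiv_coord, sum_add_distrib, euler_apply, add_comm, Algebra.smul_def]

namespace IsRadial

variable {K} {h : R}

theorem radiusSq_mul_sum (hr : K.IsRadial h) (f : R) :
    K.radiusSq * ∑ i, K.pderiv i h * K.pderiv i f = K.euler h * K.euler f := by
  rw [K.euler_apply f, mul_sum, mul_sum]
  refine sum_congr rfl fun i _ ↦ ?_
  rw [← mul_assoc, hr i]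
  ring

theorem carreDuChamp_left (hr : K.IsRadial h) (f : R) : K.carreDuChamp h f = 0 := by
  rw [carreDuChamp, hr.radiusSq_mul_sum, sub_self]

theorem carreDuChamp_mul (hr : K.IsRadial h) (f g : R) :
    K.carreDuChamp (h * f) g = h * K.carreDuChamp f g := by
  rw [carreDuChamp_mul_left, hr.carreDuChamp_left, mul_zero, add_zero]

theorem spherical_eq_zero (hr : K.IsRadial h) : K.spherical h = 0 := by
  have hdiv : ∑ i, K.pderiv i (K.coord i * K.euler h) =
      K.radiusSq * K.laplace h + 2 * K.euler h := by
    rw [laplace_apply, euler_apply K h, mul_sum, mul_sum, ← sum_add_distrib, ← euler_apply]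
    refine sum_congr rfl fun i _ ↦ ?_
    rw [← hr i, Derivation.leibniz, pderiv_radiusSq, smul_eq_mul, smul_eq_mul]
    ring
  rw [sum_pderiv_coord_mul] at hdiv
  rw [spherical_apply, eq_sub_of_add_eq hdiv.symm, sub_smul, Algebra.smul_def (2 : ℝ), map_ofNat]
  ring

theorem spherical_mul (hr : K.IsRadial h) (f : R) : K.spherical (h * f) = h * K.spherical f := by
  rw [K.spherical_mul, hr.carreDuChamp_left, hr.spherical_eq_zero]
  ring

/-- The integrand `g A f - Γ(f, g)`, with a weight of the homogeneity of `r^{-n}`, is a divergence,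
so that `Γ` is the form of `A`. -/
theorem sum_pderiv_flux (hr : K.IsRadial h) (hD : K.euler h = -(n : ℝ) • h) (f g : R) :
    ∑ i, K.pderiv i (h * g * (K.coord i * K.euler f - K.radiusSq * K.pderiv i f)) =
      h * (g * K.spherical f) - h * K.carreDuChamp f g := by
  have hterm i : K.pderiv i (h * g * (K.coord i * K.euler f - K.radiusSq * K.pderiv i f)) =
      K.pderiv i (K.coord i * (h * g * K.euler f)) -
        g * (K.radiusSq * (K.pderiv i h * K.pderiv i f)) -
        h * (K.radiusSq * (K.pderiv i f * K.pderiv i g)) -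
        h * g * (K.radiusSq * K.pderiv i (K.pderiv i f)) -
        2 * (h * g * (K.coord i * K.pderiv i f)) := by
    simp only [Derivation.leibniz, map_sub, smul_eq_mul, pderiv_radiusSq]
    ring
  simp only [hterm, sum_sub_distrib, sum_pderiv_coord_mul, ← mul_sum, hr.radiusSq_mul_sum,
    ← laplace_apply, ← euler_apply, spherical_apply, carreDuChamp]
  simp only [Derivation.leibniz, hD, Algebra.smul_def (_ : ℝ), smul_eq_mul, map_sub, map_neg,
    map_ofNat]
  ring

theorem radiusSq_mul_laplace_mul (hr : K.IsRadial h) {s : ℝ} (hs : K.euler h = s • h) (f : R) :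
    K.radiusSq * K.laplace (h * f) = h * K.conjLaplace s f := by
  have hpolar := K.spherical_apply (h * f)
  rw [hr.spherical_mul, eq_sub_iff_add_eq', ← eq_sub_iff_add_eq] at hpolar
  rw [hpolar, conjLaplace]
  simp only [Derivation.leibniz, hs, smul_eq_mul, map_add, Derivation.map_algebraMap,
    Algebra.smul_def, map_sub, map_mul, map_pow, map_ofNat, map_natCast]
  ring

end IsRadial

end PartialDerivations

/-! ### The Emden–Fowler operator -/

/-- The coefficient of `A^j D^m` in the product of the commuting factors
`A + N - (D + a + 2 ε)²`, `ε = -1, 0, 1`. With `a = s + (n - 6) / 2` and `N = ((n - 2) / 2)²` this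
product is `r^{6-s} (-Δ)³ r^s`, see `PartialDerivations.conjLaplace_triple`. -/
def emdenFowlerCoeff (a N : ℝ) : ℕ → ℕ → ℝ
  | 0, 0 => -a ^ 6 + (3 * N + 8) * a ^ 4 - (3 * N ^ 2 + 16) * a ^ 2 + N * (N - 4) ^ 2
  | 0, 1 => 3 * a ^ 4 - 6 * N * a ^ 2 + (3 * N ^ 2 - 16 * N + 16)
  | 0, 2 => -3 * a ^ 2 + 3 * N - 8
  | 0, 3 => 1
  | 1, 0 => -6 * a ^ 5 + 4 * (3 * N + 8) * a ^ 3 - 2 * (3 * N ^ 2 + 16) * a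
  | 1, 1 => 12 * a ^ 3 - 12 * N * a
  | 1, 2 => -6 * a
  | 2, 0 => -15 * a ^ 4 + 6 * (3 * N + 8) * a ^ 2 - (3 * N ^ 2 + 16)
  | 2, 1 => 18 * a ^ 2 - 6 * N
  | 2, 2 => -3
  | 3, 0 => -20 * a ^ 3 + 4 * (3 * N + 8) * a
  | 3, 1 => 12 * a
  | 4, 0 => -15 * a ^ 2 + 3 * N + 8
  | 4, 1 => 3
  | 5, 0 => -6 * a
  | 6, 0 => -1
  | _, _ => 0

namespace PartialDerivations

variable {R : Type*} [CommRing R] [Algebra ℝ R] {n : ℕ} (K : PartialDerivations R n)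

/-- The operator `∑ c_{mj} A^j D^m` of order six with the coefficients `emdenFowlerCoeff a N`. -/
def emdenFowler (a N : ℝ) (f : R) : R :=
  ∑ q ∈ sixthOrder, emdenFowlerCoeff a N q.1 q.2 • K.spherical^[q.2] (K.euler^[q.1] f)

theorem conjLaplace_triple {a s : ℝ} (ha : a = s + (n - 6) / 2) (f : R) :
    K.conjLaplace (s - 4) (K.conjLaplace (s - 2) (K.conjLaplace s f)) =
      -K.emdenFowler a (((n - 2 : ℝ) / 2) ^ 2) f := by
  obtain rfl : s = a - (n - 6) / 2 := by linarith
  simp only [emdenFowler, conjLaplace, sixthOrder, sum_filter, sum_product, sum_range_succ,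
    range_zero, sum_empty]
  norm_num [emdenFowlerCoeff, euler_spherical]
  module

end PartialDerivations

/-! ### The Joseph–Lundgren exponent -/

section JosephLundgren

/-- The cubic polynomial `y ↦ (v²/4 - y) ((v/2 + 2)² - y) ((v/2 - 2)² - y)`. When `v` is the
dimension, `(-Δ)³ |x|^{-k}` is `k / (k + 6)` times its value at `y = ((v - 8) / 2 - k)²`, times
`|x|^{-k-6}`, for `k = 6 / (p - 1)`. -/
def hardyPoly (v y : ℝ) : ℝ := (v ^ 2 / 4 - y) * (((v / 2 + 2) ^ 2 - y) * ((v / 2 - 2) ^ 2 - y))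

/-- The best constant in the Hardy inequality `C ∫ |x|⁻⁶ φ² ≤ ∫ |∇Δφ|²` in dimension `v`. -/
def hardyConst (v : ℝ) : ℝ := ((v + 2) * (v - 2) * (v - 6)) ^ 2 / 64

/-- The root `y` of `hardyPoly v y = hardyConst v` given by Cardano's formula, see
`hardyPoly_hardyRoot`. -/
def hardyRoot (v : ℝ) : ℝ :=
  (9 * v ^ 2 + 96 - ((1536 + 1152 * v ^ 2) / dd0 v + 3 / 2 * dd0 v)) / 36

variable {v a p : ℝ}

theorem hardyPoly_strictAntiOn (hv : 4 < v) :
    StrictAntiOn (hardyPoly v) (Set.Iic ((v / 2 - 2) ^ 2)) := by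
  intro y (_ : y ≤ _) z (_ : z ≤ _) hyz
  have : (v / 2 - 2) ^ 2 < v ^ 2 / 4 := by nlinarith
  have : (v / 2 - 2) ^ 2 < (v / 2 + 2) ^ 2 := by nlinarith
  have hpos : 0 < ((v / 2 + 2) ^ 2 - y) * ((v / 2 - 2) ^ 2 - y) :=
    mul_pos (by linarith) (by linarith)
  calc hardyPoly v z ≤ (v ^ 2 / 4 - z) * (((v / 2 + 2) ^ 2 - y) * ((v / 2 - 2) ^ 2 - y)) := by
        refine mul_le_mul_of_nonneg_left (mul_le_mul ?_ ?_ ?_ ?_) ?_ <;> linarith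
    _ < hardyPoly v y := mul_lt_mul_of_pos_right (by linarith) hpos

theorem hardyConst_lt_hardyPoly_one (hv : 6 < v) : hardyConst v < hardyPoly v 1 := by
  have hdiff : hardyPoly v 1 - hardyConst v = (v ^ 2 - 4) ^ 2 * (12 * (v - 6)) / 64 := by
    unfold hardyPoly hardyConst
    ring
  have : 0 < v ^ 2 - 4 := by nlinarith
  have : 0 < v - 6 := by linarith
  have : 0 < (v ^ 2 - 4) ^ 2 * (12 * (v - 6)) / 64 := by positivity
  linarith

theorem dd1_sq_sub_dd2 (v : ℝ) : dd1 v ^ 2 - 1296 * dd2 v = (768 * v ^ 2 + 1024) ^ 3 := by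
  unfold dd1 dd2
  ring

theorem dd1_neg (hv : 15 ≤ v) : dd1 v < 0 := by
  obtain ⟨j, hj, rfl⟩ := le_iff_exists_nonneg_add.1 hv
  have : 0 < -dd1 (15 + j) := by
    unfold dd1
    ring_nf
    positivity
  linarith

theorem dd2_nonneg (hv : 15 ≤ v) : 0 ≤ dd2 v := by
  obtain ⟨j, hj, rfl⟩ := le_iff_exists_nonneg_add.1 hv
  unfold dd2
  ring_nf
  positivity

theorem neg_dd1_add_mul_neg_dd1_sub (hv : 15 ≤ v) :
    -(dd1 v + 36 * √(dd2 v)) * -(dd1 v - 36 * √(dd2 v)) = (768 * v ^ 2 + 1024) ^ 3 := by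
  linear_combination dd1_sq_sub_dd2 v - 1296 * Real.sq_sqrt (dd2_nonneg hv)

theorem neg_dd1_add_pos (hv : 15 ≤ v) : 0 < -(dd1 v + 36 * √(dd2 v)) := by
  have hprod : 0 < -(dd1 v + 36 * √(dd2 v)) * -(dd1 v - 36 * √(dd2 v)) := by
    rw [neg_dd1_add_mul_neg_dd1_sub hv]
    positivity
  exact pos_of_mul_pos_left hprod (by linarith [dd1_neg hv, Real.sqrt_nonneg (dd2 v)])

theorem dd0_pos (hv : 15 ≤ v) : 0 < dd0 v := Real.rpow_pos_of_pos (neg_dd1_add_pos hv) _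

theorem dd0_pow_three (hv : 15 ≤ v) : dd0 v ^ 3 = -(dd1 v + 36 * √(dd2 v)) := by
  unfold dd0
  rw [← Real.rpow_natCast, ← Real.rpow_mul (neg_dd1_add_pos hv).le]
  norm_num

theorem div_dd0_pow_three (hv : 15 ≤ v) :
    ((1536 + 1152 * v ^ 2) / dd0 v) ^ 3 = 27 / 8 * -(dd1 v - 36 * √(dd2 v)) := by
  rw [div_pow, dd0_pow_three hv, div_eq_iff (neg_dd1_add_pos hv).ne']
  linear_combination -27 / 8 * neg_dd1_add_mul_neg_dd1_sub hv

theorem hardyPoly_hardyRoot (hv : 15 ≤ v) : hardyPoly v (hardyRoot v) = hardyConst v := by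
  have hf := div_dd0_pow_three hv
  have he := dd0_pow_three hv
  have hmul := div_mul_cancel₀ (1536 + 1152 * v ^ 2) (dd0_pos hv).ne'
  unfold hardyPoly hardyConst hardyRoot
  generalize (1536 + 1152 * v ^ 2) / dd0 v = f at *
  generalize dd0 v = e at *
  have hcubic : (f + 3 / 2 * e) ^ 3 =
      -27 / 4 * dd1 v + 9 / 2 * (1536 + 1152 * v ^ 2) * (f + 3 / 2 * e) := by
    linear_combination hf + 27 / 8 * he + 9 / 2 * (f + 3 / 2 * e) * hmul
  unfold dd1 at hcubic
  linear_combination (1 / 46656) * hcubic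

theorem hardyRoot_lt (hv : 15 ≤ v) : hardyRoot v < (v / 2 - 2) ^ 2 := by
  have he := dd0_pos hv
  have hf : 0 < (1536 + 1152 * v ^ 2) / dd0 v := by positivity
  have hmul := div_mul_cancel₀ (1536 + 1152 * v ^ 2) he.ne'
  unfold hardyRoot
  generalize (1536 + 1152 * v ^ 2) / dd0 v = f at *
  generalize dd0 v = e at *
  have : 72 * v - 48 < f + 3 / 2 * e := by
    refine lt_of_pow_lt_pow_left₀ 2 (by positivity) ?_
    nlinarith [sq_nonneg (f - 3 / 2 * e)]
  nlinarith

theorem one_lt_hardyRoot (hv : 15 ≤ v) : 1 < hardyRoot v := by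
  rw [← (hardyPoly_strictAntiOn (by linarith)).lt_iff_gt (hardyRoot_lt hv).le
    (show (1 : ℝ) ≤ (v / 2 - 2) ^ 2 by nlinarith), hardyPoly_hardyRoot hv]
  exact hardyConst_lt_hardyPoly_one (by linarith)

theorem dfn_sq (hv : 15 ≤ v) : dfn v ^ 2 = hardyRoot v := by
  have := one_lt_hardyRoot hv
  unfold hardyRoot at this
  rw [dfn, mul_pow, Real.sq_sqrt (by linarith), hardyRoot]
  ring

theorem sub_one_lt_dfn (hp : 1 < p) (hap : ((v - 6) / 2 - a) * (p - 1) = 6) (hpc : p < pc v) :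
    a - 1 < dfn v := by
  have hd : 0 ≤ dfn v := mul_nonneg (by norm_num) (Real.sqrt_nonneg _)
  rw [pc] at hpc
  have hden : 0 < v - 8 - 2 * dfn v := by
    by_contra hneg
    rcases (not_lt.1 hneg).lt_or_eq with h | h
    · rw [lt_div_iff_of_neg h] at hpc
      nlinarith
    · rw [h, div_zero] at hpc
      linarith
  rw [lt_div_iff₀ hden] at hpc
  by_contra! hle
  nlinarith [mul_le_mul_of_nonneg_right hle (sub_nonneg.2 hp.le)]

theorem hardyConst_lt_hardyPoly_sq (hv : 6 < v) {t d : ℝ} (ht : -1 < t) (htd : t < d)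
    (hd : d ^ 2 ≤ (v / 2 - 2) ^ 2) (hle : hardyConst v ≤ hardyPoly v (d ^ 2)) :
    t ^ 2 < (v / 2 - 2) ^ 2 ∧ hardyConst v < hardyPoly v (t ^ 2) := by
  have hanti := hardyPoly_strictAntiOn (show 4 < v by linarith)
  rcases le_or_gt 0 t with h0 | h0
  · have hlt : t ^ 2 < d ^ 2 := pow_lt_pow_left₀ htd h0 two_ne_zero
    exact ⟨hlt.trans_le hd, hle.trans_lt (hanti (hlt.le.trans hd) hd hlt)⟩
  · have h1 : t ^ 2 < 1 := by nlinarith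
    have h2 : (1 : ℝ) ≤ (v / 2 - 2) ^ 2 := by nlinarith
    exact ⟨h1.trans_le h2, (hardyConst_lt_hardyPoly_one hv).trans (hanti (h1.le.trans h2) h2 h1)⟩

theorem hardyConst_lt_of_lt_pc (hv : 15 ≤ v) (ha : 0 < a) (hp : 1 < p)
    (hap : ((v - 6) / 2 - a) * (p - 1) = 6) (hpc : p < pc v) :
    (a - 1) ^ 2 < (v / 2 - 2) ^ 2 ∧ hardyConst v < hardyPoly v ((a - 1) ^ 2) := by
  refine hardyConst_lt_hardyPoly_sq (by linarith) (by linarith) (sub_one_lt_dfn hp hap hpc) ?_ ?_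
  · exact (dfn_sq hv).trans_le (hardyRoot_lt hv).le
  · rw [dfn_sq hv, hardyPoly_hardyRoot hv]

theorem sq_lt_of_hardyConst_lt (hv : 15 ≤ v) {y : ℝ} (hy : y ≤ (v / 2 - 2) ^ 2)
    (hlt : hardyConst v < hardyPoly v y) : y < v := by
  refine ((hardyPoly_strictAntiOn (by linarith)).lt_iff_gt
    (show v ≤ (v / 2 - 2) ^ 2 by nlinarith) hy).1 (lt_trans ?_ hlt)
  obtain ⟨j, hj, rfl⟩ := le_iff_exists_nonneg_add.1 hv
  refine sub_pos.1 ?_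
  unfold hardyPoly hardyConst
  ring_nf
  positivity

theorem hardyConst_lt_of_le_fourteen {n : ℕ} (hn : 7 ≤ n) (hn' : n ≤ 14) (ha : 0 < a)
    (han : a < ((n : ℝ) - 6) / 2) : hardyConst n < hardyPoly n ((a - 1) ^ 2) := by
  have hv : (7 : ℝ) ≤ n := by exact_mod_cast hn
  refine (hardyConst_lt_hardyPoly_sq (d := (n : ℝ) / 2 - 4) (by linarith) (by linarith)
    (by linarith) (by nlinarith) ?_).2
  unfold hardyConst hardyPoly
  interval_cases n <;> norm_num

end JosephLundgren

/-! ### Signs of the coefficients -/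

section Coefficients

variable {v a p : ℝ}

theorem five_mul_sq_lt_of_le_fourteen (hv : v ≤ 14) (ha : 0 < a) (hav : a < (v - 6) / 2) :
    5 * a ^ 2 < 3 * ((v - 2) / 2) ^ 2 + 8 := by
  nlinarith

theorem mul_sq_lt_of_le_fourteen (hv : v ≤ 14) (ha : 0 < a) (hav : a < (v - 6) / 2) :
    (v / 2 + 3 - a) * a ^ 2 < 2 * (3 * ((v - 2) / 2) ^ 2 - 8) := by
  obtain ⟨r, hr, rfl⟩ : ∃ r, 0 < r ∧ v = 2 * (a + r) + 6 :=
    ⟨(v - 6) / 2 - a, by linarith, by ring⟩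
  nlinarith [mul_pos ha hr, mul_nonneg (sq_nonneg a) (show 0 ≤ 4 - (a + r) by linarith)]

theorem mul_sq_mul_lt_of_le_fourteen (hv : v ≤ 14) (ha : 0 < a) (hav : a < (v - 6) / 2) :
    (v / 2 + 3 - a) * a ^ 2 * (2 * ((v - 2) / 2) ^ 2 - a ^ 2) <
      2 * (3 * (((v - 2) / 2) ^ 2) ^ 2 - 16 * ((v - 2) / 2) ^ 2 + 16) := by
  obtain ⟨r, hr, rfl⟩ : ∃ r, 0 < r ∧ v = 2 * (a + r) + 6 :=
    ⟨(v - 6) / 2 - a, by linarith, by ring⟩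
  have hquartic : 0 < a ^ 4 + 4 * a ^ 3 - 24 * a ^ 2 + 32 * a + 64 := by
    nlinarith [sq_nonneg (a - 2), sq_nonneg (a ^ 2 - 4), mul_nonneg ha.le (sq_nonneg (a - 2))]
  have hlinear : 0 < 4 * a ^ 4 - 8 * a ^ 3 + 64 * a ^ 2 + 224 * a + 64 := by
    nlinarith [mul_pos ha ha, mul_nonneg (sq_nonneg a) (sq_nonneg (a - 1))]
  have hpos : 0 < 6 * r ^ 4 + (24 * a + 48) * r ^ 3 +
      (16 * a ^ 2 + 2 * a ^ 3 + 144 * a + 112) * r ^ 2 +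
      (4 * a ^ 4 - 8 * a ^ 3 + 64 * a ^ 2 + 224 * a + 64) * r +
      a * (a ^ 4 + 4 * a ^ 3 - 24 * a ^ 2 + 32 * a + 64) := by
    have := mul_pos ha hquartic
    have := mul_pos hlinear hr
    positivity
  have hrest : 0 ≤ (4 - a - r) * (a ^ 2 * (2 * (a + r) ^ 2 + 8 * (a + r) + 8 - a ^ 2)) :=
    mul_nonneg (by linarith) (mul_nonneg (sq_nonneg a) (by nlinarith [mul_pos ha hr]))
  refine sub_pos.1 ((add_pos_of_pos_of_nonneg hpos hrest).trans_eq ?_)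
  ring

theorem five_mul_sq_lt_of_sq_lt (hv : 15 ≤ v) (hav : (a - 1) ^ 2 < v) :
    5 * a ^ 2 < 3 * ((v - 2) / 2) ^ 2 + 8 := by
  nlinarith [sq_nonneg (a - 5)]

theorem mul_sq_lt_of_sq_lt (hv : 15 ≤ v) (ha : 0 < a) (hav : (a - 1) ^ 2 < v) :
    (v / 2 + 3 - a) * a ^ 2 < 2 * (3 * ((v - 2) / 2) ^ 2 - 8) := by
  rcases lt_or_ge a 2 with h2 | h2
  · nlinarith [mul_pos ha ha, pow_pos ha 3]
  · have hsq : a ^ 2 ≤ 5 + 5 / 4 * v := by nlinarith [sq_nonneg (a - 5)]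
    have : (v / 2 + 3 - a) * a ^ 2 ≤ (v / 2 + 1) * (5 + 5 / 4 * v) := by
      apply mul_le_mul _ hsq (sq_nonneg a) <;> linarith
    nlinarith

theorem mul_sq_mul_lt_of_sq_lt (hv : 15 ≤ v) (ha : 0 < a) (hav : (a - 1) ^ 2 < v) :
    (v / 2 + 3 - a) * a ^ 2 * (2 * ((v - 2) / 2) ^ 2 - a ^ 2) <
      2 * (3 * (((v - 2) / 2) ^ 2) ^ 2 - 16 * ((v - 2) / 2) ^ 2 + 16) := by
  obtain ⟨j, hj, rfl⟩ : ∃ j, 0 ≤ j ∧ v = (387 / 100 + j) ^ 2 :=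
    ⟨√v - 387 / 100, sub_nonneg.2 (Real.le_sqrt_of_sq_le (by linarith)), by
      rw [add_sub_cancel, Real.sq_sqrt (by linarith)]⟩
  obtain ⟨α, hα⟩ : ∃ α, α = 1 + (387 / 100 + j) := ⟨_, rfl⟩
  have haα : a ≤ α := by nlinarith
  set v := (387 / 100 + j) ^ 2 with hv_def
  have hvertex : 0 ≤ v / 2 + 3 - α - α := by
    rw [hv_def, hα]
    ring_nf
    positivity
  have hcubic : 0 ≤ 2 * ((v - 2) / 2) ^ 2 - 3 * α ^ 2 := by
    rw [hv_def, hα]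
    ring_nf
    positivity
  have hfirst : (v / 2 + 3 - a) * a ≤ (v / 2 + 3 - α) * α := by nlinarith
  have hsq : a ^ 2 ≤ α ^ 2 := pow_le_pow_left₀ ha.le haα 2
  have hsecond : a * (2 * ((v - 2) / 2) ^ 2 - a ^ 2) ≤ α * (2 * ((v - 2) / 2) ^ 2 - α ^ 2) := by
    have hmul : a * α ≤ α ^ 2 := by nlinarith
    nlinarith [mul_nonneg (sub_nonneg.2 haα)
      (show 0 ≤ 2 * ((v - 2) / 2) ^ 2 - (a ^ 2 + a * α + α ^ 2) by linarith)]
  calc (v / 2 + 3 - a) * a ^ 2 * (2 * ((v - 2) / 2) ^ 2 - a ^ 2)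
      = (v / 2 + 3 - a) * a * (a * (2 * ((v - 2) / 2) ^ 2 - a ^ 2)) := by ring
    _ ≤ (v / 2 + 3 - α) * α * (α * (2 * ((v - 2) / 2) ^ 2 - α ^ 2)) :=
      mul_le_mul hfirst hsecond (mul_nonneg ha.le (by nlinarith))
        (mul_nonneg (by linarith) (by linarith))
    _ < 2 * (3 * (((v - 2) / 2) ^ 2) ^ 2 - 16 * ((v - 2) / 2) ^ 2 + 16) := by
      refine sub_pos.1 ?_
      rw [hv_def, hα]
      ring_nf
      positivity

theorem emdenFowlerCoeff_one_zero_neg (hv : 7 ≤ v) (ha : 0 < a) (hav : a < (v - 6) / 2) :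
    emdenFowlerCoeff a (((v - 2) / 2) ^ 2) 1 0 < 0 := by
  obtain ⟨j, hj, rfl⟩ := le_iff_exists_nonneg_add.1 hv
  obtain ⟨z, hz, haz⟩ : ∃ z, 0 < z ∧ a ^ 2 = ((7 + j - 6) / 2) ^ 2 - z :=
    ⟨((7 + j - 6) / 2) ^ 2 - a ^ 2, by nlinarith, by ring⟩
  have : 0 < 3 * (a ^ 2) ^ 2 - 2 * (3 * ((7 + j - 2) / 2) ^ 2 + 8) * a ^ 2 +
      3 * (((7 + j - 2) / 2) ^ 2) ^ 2 + 16 := by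
    rw [haz]
    ring_nf
    positivity
  rw [emdenFowlerCoeff]
  nlinarith [mul_pos ha this]

theorem emdenFowlerCoeff_one_one_neg (ha : 0 < a) (hav : a < (v - 2) / 2) :
    emdenFowlerCoeff a (((v - 2) / 2) ^ 2) 1 1 < 0 := by
  have : 0 < ((v - 2) / 2) ^ 2 - a ^ 2 := by nlinarith
  rw [emdenFowlerCoeff]
  nlinarith [mul_pos ha this]

theorem emdenFowlerCoeff_three_zero_pos (ha : 0 < a)
    (h : 5 * a ^ 2 < 3 * ((v - 2) / 2) ^ 2 + 8) :
    0 < emdenFowlerCoeff a (((v - 2) / 2) ^ 2) 3 0 := by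
  rw [emdenFowlerCoeff]
  nlinarith [mul_pos ha (sub_pos.2 h)]

theorem emdenFowlerCoeff_zero_zero_lt (hap : ((v - 6) / 2 - a) * (p - 1) = 6)
    (h : hardyConst v < hardyPoly v ((a - 1) ^ 2)) :
    emdenFowlerCoeff 0 (((v - 2) / 2) ^ 2) 0 0 <
      p * emdenFowlerCoeff a (((v - 2) / 2) ^ 2) 0 0 := by
  simp only [emdenFowlerCoeff]
  unfold hardyConst hardyPoly at h
  linear_combination h - (v / 2 - 1 - a) * (v / 2 + 1 - a) * (v / 2 - 1 + a) * (v / 2 + 1 + a) *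
    (v / 2 - 3 + a) * hap

theorem emdenFowlerCoeff_zero_one_lt (hav : a < (v - 6) / 2)
    (hap : ((v - 6) / 2 - a) * (p - 1) = 6)
    (h : (v / 2 + 3 - a) * a ^ 2 * (2 * ((v - 2) / 2) ^ 2 - a ^ 2) <
      2 * (3 * (((v - 2) / 2) ^ 2) ^ 2 - 16 * ((v - 2) / 2) ^ 2 + 16)) :
    emdenFowlerCoeff 0 (((v - 2) / 2) ^ 2) 0 1 <
      p * emdenFowlerCoeff a (((v - 2) / 2) ^ 2) 0 1 := by
  rw [emdenFowlerCoeff, emdenFowlerCoeff, ← mul_lt_mul_iff_right₀ (sub_pos.2 hav)]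
  linear_combination 3 * h - (3 * a ^ 4 - 6 * ((v - 2) / 2) ^ 2 * a ^ 2 +
    (3 * (((v - 2) / 2) ^ 2) ^ 2 - 16 * ((v - 2) / 2) ^ 2 + 16)) * hap

theorem emdenFowlerCoeff_zero_two_lt (hav : a < (v - 6) / 2)
    (hap : ((v - 6) / 2 - a) * (p - 1) = 6)
    (h : (v / 2 + 3 - a) * a ^ 2 < 2 * (3 * ((v - 2) / 2) ^ 2 - 8)) :
    emdenFowlerCoeff 0 (((v - 2) / 2) ^ 2) 0 2 <
      p * emdenFowlerCoeff a (((v - 2) / 2) ^ 2) 0 2 := by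
  rw [emdenFowlerCoeff, emdenFowlerCoeff, ← mul_lt_mul_iff_right₀ (sub_pos.2 hav)]
  linear_combination 3 * h - (-3 * a ^ 2 + 3 * ((v - 2) / 2) ^ 2 - 8) * hap

theorem subcriticalCoefficients_emdenFowlerCoeff (hv : 7 ≤ v) (hp : 1 < p) (ha : 0 < a)
    (hav : a < (v - 6) / 2) (h30 : 0 < emdenFowlerCoeff a (((v - 2) / 2) ^ 2) 3 0)
    (hzero : ∀ j ≤ 2, emdenFowlerCoeff 0 (((v - 2) / 2) ^ 2) 0 j <
      p * emdenFowlerCoeff a (((v - 2) / 2) ^ 2) 0 j) :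
    SubcriticalCoefficients p (emdenFowlerCoeff a (((v - 2) / 2) ^ 2))
      (emdenFowlerCoeff 0 (((v - 2) / 2) ^ 2)) where
  top {i j} hij := by
    obtain rfl : j = 3 - i := by omega
    have hi : i ≤ 3 := by omega
    interval_cases i <;> norm_num [emdenFowlerCoeff] <;> linarith
  zero {j} hj := by
    rcases hj.lt_or_eq with h | rfl
    · exact sub_pos.2 (hzero j (by omega))
    · simpa [emdenFowlerCoeff] using hp
  dissipation {i j} hij := by
    have h10 := emdenFowlerCoeff_one_zero_neg hv ha hav
    have h11 := emdenFowlerCoeff_one_one_neg (v := v) ha (by linarith)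
    have hi : i ≤ 2 := by omega
    have hj : j ≤ 2 := by omega
    interval_cases i <;> interval_cases j <;> simp_all [emdenFowlerCoeff]

end Coefficients

/-! ### Young's inequality for powers -/

theorem exists_rpow_le_mul_rpow_add {a b : ℝ} (ha : 0 ≤ a) (hab : a < b) {ε : ℝ} (hε : 0 < ε) :
    ∃ C, 0 ≤ C ∧ ∀ z : ℝ, 0 ≤ z → z ^ a ≤ ε * z ^ b + C := by
  set M : ℝ := (1 / ε) ^ (1 / (b - a))
  have hM : 0 < M := by positivity
  have hMpow : M ^ (b - a) = 1 / ε := by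
    rw [← Real.rpow_mul (by positivity), one_div_mul_cancel (sub_pos.2 hab).ne', Real.rpow_one]
  refine ⟨M ^ a, by positivity, fun z hz ↦ ?_⟩
  rcases le_total z M with h | h
  · exact (Real.rpow_le_rpow hz h ha).trans (le_add_of_nonneg_left (by positivity))
  · have hlarge : 1 ≤ ε * z ^ (b - a) := by
      rw [← div_le_iff₀' hε, ← hMpow]
      exact Real.rpow_le_rpow hM.le h (sub_pos.2 hab).le
    calc z ^ a ≤ ε * z ^ (b - a) * z ^ a := le_mul_of_one_le_left (by positivity) hlarge
      _ = ε * z ^ b := by rw [mul_assoc, ← Real.rpow_add (hM.trans_le h), sub_add_cancel]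
      _ ≤ ε * z ^ b + M ^ a := le_add_of_nonneg_right (by positivity)

theorem pow_mul_rpow_pow_le {y : ℝ} (h0 : 0 ≤ y) (h1 : y ≤ 1) {r s t : ℕ} {b : ℝ} (hr : r ≠ 0)
    (h : (s : ℝ) ≤ r + t * b) : y ^ r * (y ^ t) ^ b ≤ y ^ s := by
  rcases h0.eq_or_lt with rfl | hy
  · rw [zero_pow hr, zero_mul]
    positivity
  · rw [← Real.rpow_natCast, ← Real.rpow_natCast y t, ← Real.rpow_natCast y s, ← Real.rpow_mul h0,
      ← Real.rpow_add hy]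
    exact Real.rpow_le_rpow_of_exponent_ge hy h1 h

theorem exists_pow_mul_sq_le {p : ℝ} (hp : 1 < p) {q : ℕ} (hq0 : q ≠ 0)
    (hq : 6 ≤ ((q : ℝ) - 1) * (p - 1)) {ε : ℝ} (hε : 0 < ε) :
    ∃ C, 0 ≤ C ∧ ∀ y W : ℝ, 0 ≤ y → y ≤ 1 →
      y ^ (2 * q) * (W * W) ≤ ε * (y ^ (2 * (q + 3)) * |W| ^ (p + 1)) + C * y ^ 2 := by
  obtain ⟨r, rfl⟩ := Nat.exists_eq_succ_of_ne_zero hq0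
  obtain ⟨C, hC, hle⟩ := exists_rpow_le_mul_rpow_add (a := 2) (b := p + 1) (by norm_num)
    (by linarith) hε
  refine ⟨C, hC, fun y W h0 h1 ↦ ?_⟩
  have hyoung := hle (y ^ r * |W|) (by positivity)
  rw [Real.rpow_two, Real.mul_rpow (by positivity) (abs_nonneg _)] at hyoung
  have hpow : y ^ 2 * (y ^ r) ^ (p + 1) ≤ y ^ (2 * (r + 1 + 3)) :=
    pow_mul_rpow_pow_le h0 h1 two_ne_zero (by push_cast at hq ⊢; linarith)
  calc y ^ (2 * (r + 1)) * (W * W)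
      = y ^ 2 * (y ^ r * |W|) ^ 2 := by rw [mul_pow, sq_abs]; ring
    _ ≤ y ^ 2 * (ε * ((y ^ r) ^ (p + 1) * |W| ^ (p + 1)) + C) := by gcongr
    _ = ε * (y ^ 2 * (y ^ r) ^ (p + 1) * |W| ^ (p + 1)) + C * y ^ 2 := by ring
    _ ≤ ε * (y ^ (2 * (r + 1 + 3)) * |W| ^ (p + 1)) + C * y ^ 2 := by gcongr

/-! ### Smooth functions on the punctured space -/

/-- The Euclidean space `ℝⁿ`. -/
abbrev Space (n : ℕ) := EuclideanSpace ℝ (Fin n)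

variable {n : ℕ}

theorem extend_val_apply (f : {x : Space n // x ≠ 0} → ℝ) {x : Space n} (hx : x ≠ 0) :
    Function.extend Subtype.val f 0 x = f ⟨x, hx⟩ :=
  Subtype.val_injective.extend_apply f 0 ⟨x, hx⟩

variable (n) in
/-- The smooth functions on `ℝⁿ \ {0}`, as a subalgebra of all functions there. Smoothness is
expressed through the extension by zero to `ℝⁿ`. -/
def puncturedSubalgebra : Subalgebra ℝ ({x : Space n // x ≠ 0} → ℝ) where
  carrier := {f | ContDiffOn ℝ ∞ (Function.extend Subtype.val f 0) {0}ᶜ}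
  mul_mem' hf hg := (ContDiffOn.mul hf hg).congr fun x hx ↦ by
    simp only [extend_val_apply _ hx, Pi.mul_apply]
  add_mem' hf hg := (ContDiffOn.add hf hg).congr fun x hx ↦ by
    simp only [extend_val_apply _ hx, Pi.add_apply]
  algebraMap_mem' _ := contDiffOn_const.congr fun _ hx ↦ extend_val_apply _ hx

variable (n) in
/-- The algebra of smooth functions on `ℝⁿ \ {0}`; its elements are regarded as functions on `ℝⁿ`
with the value `0` at the origin. -/
def PuncturedSmooth : Type := puncturedSubalgebra n

namespace PuncturedSmooth

instance : CommRing (PuncturedSmooth n) := inferInstanceAs (CommRing (puncturedSubalgebra n))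

instance : Algebra ℝ (PuncturedSmooth n) := inferInstanceAs (Algebra ℝ (puncturedSubalgebra n))

instance : FunLike (PuncturedSmooth n) (Space n) ℝ where
  coe f := Function.extend Subtype.val (Subtype.val (p := (· ∈ puncturedSubalgebra n)) f) 0
  coe_injective f g h := Subtype.ext (funext fun x ↦ by
    simpa only [Subtype.val_injective.extend_apply] using congrFun h x.1)

section Algebra

variable (f g : PuncturedSmooth n)

protected theorem contDiffOn : ContDiffOn ℝ ∞ f {0}ᶜ :=
  (Subtype.property f : Subtype.val f ∈ puncturedSubalgebra n)

protected theorem contDiffAt {x : Space n} (hx : x ≠ 0) : ContDiffAt ℝ ∞ f x :=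
  f.contDiffOn.contDiffAt (isOpen_compl_singleton.mem_nhds hx)

protected theorem differentiableAt {x : Space n} (hx : x ≠ 0) : DifferentiableAt ℝ f x :=
  (f.contDiffAt hx).differentiableAt (by simp)

@[simp]
theorem apply_zero : f 0 = 0 :=
  Function.extend_apply' _ _ _ fun ⟨x, hx⟩ ↦ x.2 hx

theorem coe_mul : ⇑(f * g) = f * g := by
  refine Eq.trans ?_ (Function.extend_mul Subtype.val _ _ (0 : Space n → ℝ) 0)
  rw [mul_zero]
  rfl

theorem coe_add : ⇑(f + g) = f + g := by
  refine Eq.trans ?_ (Function.extend_add Subtype.val _ _ (0 : Space n → ℝ) 0)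
  rw [add_zero]
  rfl

theorem coe_smul (c : ℝ) : ⇑(c • f) = c • ⇑f := by
  refine Eq.trans ?_ (Function.extend_smul c Subtype.val _ (0 : Space n → ℝ))
  rw [smul_zero]
  rfl

variable (n) in
/-- The embedding of the algebra into functions on `ℝⁿ`, linear but not unital. -/
def coeLinearMap : PuncturedSmooth n →ₗ[ℝ] (Space n → ℝ) where
  toFun := (⇑)
  map_add' := coe_add
  map_smul' c f := coe_smul f c

@[simp]
theorem mul_apply (x : Space n) : (f * g) x = f x * g x := congrFun (coe_mul f g) x

@[simp]
theorem add_apply (x : Space n) : (f + g) x = f x + g x := congrFun (coe_add f g) x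

@[simp]
theorem smul_apply (c : ℝ) (x : Space n) : (c • f) x = c * f x := congrFun (coe_smul f c) x

@[simp]
theorem sub_apply (x : Space n) : (f - g) x = f x - g x :=
  congrFun (map_sub (coeLinearMap n) f g) x

@[simp]
theorem neg_apply (x : Space n) : (-f) x = -f x := congrFun (map_neg (coeLinearMap n) f) x

@[simp]
theorem zero_apply (x : Space n) : (0 : PuncturedSmooth n) x = 0 :=
  congrFun (map_zero (coeLinearMap n)) x

@[simp]
theorem sum_apply {ι : Type*} (s : Finset ι) (f : ι → PuncturedSmooth n) (x : Space n) :
    (∑ i ∈ s, f i) x = ∑ i ∈ s, f i x := by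
  have := congrFun (map_sum (coeLinearMap n) f s) x
  rwa [Finset.sum_apply] at this

theorem one_apply {x : Space n} (hx : x ≠ 0) : (1 : PuncturedSmooth n) x = 1 :=
  extend_val_apply _ hx

variable {f g} in
theorem ext_of_ne_zero (h : ∀ x ≠ 0, f x = g x) : f = g :=
  DFunLike.ext _ _ fun x ↦ by
    rcases eq_or_ne x 0 with rfl | hx
    · simp
    · exact h x hx

/-- The element of the algebra given by a function on `ℝⁿ`, whose value at the origin is lost. -/
def ofContDiffOn (F : Space n → ℝ) (hF : ContDiffOn ℝ ∞ F {0}ᶜ) : PuncturedSmooth n :=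
  ⟨fun x ↦ F x, (hF.congr fun _ hx ↦ extend_val_apply _ hx :
    ContDiffOn ℝ ∞ (Function.extend Subtype.val (fun x ↦ F x.1) 0) {0}ᶜ)⟩

theorem ofContDiffOn_apply {F : Space n → ℝ} (hF : ContDiffOn ℝ ∞ F {0}ᶜ) {x : Space n}
    (hx : x ≠ 0) : ofContDiffOn F hF x = F x :=
  extend_val_apply _ hx

/-- The partial derivative `∂_i` on the punctured space. -/
def pderiv (i : Fin n) : Derivation ℝ (PuncturedSmooth n) (PuncturedSmooth n) :=
  let toFun (f : PuncturedSmooth n) : PuncturedSmooth n :=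
    ofContDiffOn (fun x ↦ fderiv ℝ f x (EuclideanSpace.single i 1))
      ((f.contDiffOn.fderiv_of_isOpen isOpen_compl_singleton (m := ∞) (by simp)).clm_apply
        contDiffOn_const)
  .mk' { toFun
         map_add' f g := ext_of_ne_zero fun x hx ↦ by
          simp only [toFun, ofContDiffOn_apply _ hx, coe_add, add_apply,
            fderiv_add (f.differentiableAt hx) (g.differentiableAt hx),
            _root_.add_apply]
         map_smul' c f := ext_of_ne_zero fun x hx ↦ by
          simp only [toFun, ofContDiffOn_apply _ hx, coe_smul, smul_apply, RingHom.id_apply,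
            fderiv_const_smul (f.differentiableAt hx), _root_.smul_apply,
            smul_eq_mul] }
    fun f g ↦ ext_of_ne_zero fun x hx ↦ by
      simp only [LinearMap.coe_mk, AddHom.coe_mk, toFun, ofContDiffOn_apply _ hx, coe_mul,
        fderiv_mul (f.differentiableAt hx) (g.differentiableAt hx), _root_.add_apply,
        _root_.smul_apply, smul_eq_mul, add_apply, mul_apply]

theorem pderiv_apply (i : Fin n) {x : Space n} (hx : x ≠ 0) :
    pderiv i f x = fderiv ℝ f x (EuclideanSpace.single i 1) :=
  ofContDiffOn_apply _ hx

theorem pderiv_pderiv_apply (i j : Fin n) {x : Space n} (hx : x ≠ 0) :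
    pderiv i (pderiv j f) x =
      fderiv ℝ (fderiv ℝ f) x (EuclideanSpace.single i 1) (EuclideanSpace.single j 1) := by
  have hev : ⇑(pderiv j f) =ᶠ[𝓝 x] fun y ↦ fderiv ℝ f y (EuclideanSpace.single j 1) := by
    filter_upwards [isOpen_compl_singleton.mem_nhds hx] with y hy using pderiv_apply f j hy
  have hd : DifferentiableAt ℝ (fderiv ℝ f) x :=
    ((f.contDiffAt hx).fderiv_right (m := ∞) (by simp)).differentiableAt (by simp)
  rw [pderiv_apply _ _ hx, hev.fderiv_eq, fderiv_clm_apply hd (differentiableAt_const _)]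
  simp

/-- The coordinate function `x_i`. -/
def coord (i : Fin n) : PuncturedSmooth n := ofContDiffOn (fun x ↦ x i) (by fun_prop)

@[simp]
theorem coord_apply (i : Fin n) (x : Space n) : coord i x = x i := by
  rcases eq_or_ne x 0 with rfl | hx
  · simp
  · exact ofContDiffOn_apply _ hx

variable (n) in
/-- Polar calculus in the algebra of smooth functions on the punctured space. -/
def partialDerivations : PartialDerivations (PuncturedSmooth n) n where
  pderiv := pderiv
  coord := coord
  pderiv_comm i j f := ext_of_ne_zero fun x hx ↦ by
    rw [pderiv_pderiv_apply f i j hx, pderiv_pderiv_apply f j i hx]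
    exact (f.contDiffAt hx).isSymmSndFDerivAt
      (by simpa using WithTop.coe_le_coe.2 (le_top : (2 : ℕ∞) ≤ ⊤)) _ _
  pderiv_coord i j := ext_of_ne_zero fun x hx ↦ by
    have hcoe : ⇑(coord j : PuncturedSmooth n) = EuclideanSpace.proj (𝕜 := ℝ) j :=
      funext (coord_apply j)
    rw [pderiv_apply _ _ hx, hcoe, ContinuousLinearMap.fderiv]
    rcases eq_or_ne i j with rfl | h
    · simp [one_apply hx]
    · simp [h, h.symm]

end Algebra

local notation "𝒫" => partialDerivations n

section PolarCalculus

variable (f : PuncturedSmooth n)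

theorem radiusSq_apply (x : Space n) : (𝒫).radiusSq x = ‖x‖ ^ 2 := by
  rw [EuclideanSpace.norm_sq_eq]
  simp [PartialDerivations.radiusSq, partialDerivations, sq]

theorem euler_apply (x : Space n) : (𝒫).euler f x = ∑ i, x i * pderiv i f x := by
  simp [PartialDerivations.euler_apply, partialDerivations]

theorem laplace_apply {x : Space n} (hx : x ≠ 0) : (𝒫).laplace f x = laplacian f x := by
  simp only [PartialDerivations.laplace_apply, sum_apply, laplacian, iteratedFDeriv_two_apply]
  exact sum_congr rfl fun i _ ↦ pderiv_pderiv_apply f i i hx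

variable {f} in
theorem laplace_apply_of_eq {u : Space n → ℝ} (h : ∀ x ≠ 0, f x = u x) {x : Space n}
    (hx : x ≠ 0) : (𝒫).laplace f x = laplacian u x := by
  have hev : ⇑f =ᶠ[𝓝 x] u := by
    filter_upwards [isOpen_compl_singleton.mem_nhds hx] with y hy using h y hy
  simp only [laplace_apply f hx, laplacian, iteratedFDeriv_two_apply, hev.fderiv.fderiv_eq]

theorem carreDuChamp_self_nonneg (x : Space n) : 0 ≤ (𝒫).carreDuChamp f f x := by
  have hcs := sum_mul_sq_le_sq_mul_sq univ (fun i ↦ x i) fun i ↦ pderiv i f x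
  simp only [PartialDerivations.carreDuChamp, sub_apply, mul_apply, radiusSq_apply, euler_apply,
    sum_apply, EuclideanSpace.norm_sq_eq, Real.norm_eq_abs, sq_abs, sub_nonneg]
  simpa only [sq, partialDerivations] using hcs

end PolarCalculus

/-! ### Radial functions -/

section Radial

variable (f : PuncturedSmooth n)

/-- The radial function `χ(log ‖x‖)`. -/
def radial (χ : ℝ → ℝ) (hχ : ContDiff ℝ ∞ χ) : PuncturedSmooth n :=
  ofContDiffOn (fun x ↦ χ (Real.log ‖x‖))
    (hχ.comp_contDiffOn ((contDiffOn_id.norm ℝ fun _ hx ↦ hx).log fun _ hx ↦ norm_ne_zero_iff.2 hx))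

variable {χ : ℝ → ℝ} (hχ : ContDiff ℝ ∞ χ)

theorem radial_apply {x : Space n} (hx : x ≠ 0) : radial χ hχ x = χ (Real.log ‖x‖) :=
  ofContDiffOn_apply _ hx

theorem radial_mul_apply (x : Space n) :
    (radial χ hχ * f : PuncturedSmooth n) x = χ (Real.log ‖x‖) * f x := by
  rcases eq_or_ne x 0 with rfl | hx
  · simp
  · rw [mul_apply, radial_apply hχ hx]

theorem hasFDerivAt_log_norm {x : Space n} (hx : x ≠ 0) :
    HasFDerivAt (fun y : Space n ↦ Real.log ‖y‖) ((‖x‖ ^ 2)⁻¹ • innerSL ℝ x) x := by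
  have hsq : HasFDerivAt (fun y : Space n ↦ ‖y‖ ^ 2) (2 • innerSL ℝ x) x :=
    (hasStrictFDerivAt_norm_sq x).hasFDerivAt
  have hlog : (fun y : Space n ↦ Real.log ‖y‖) = fun y ↦ 1 / 2 * Real.log (‖y‖ ^ 2) := by
    ext y
    rw [Real.log_pow]
    ring
  rw [hlog]
  refine ((hsq.log (by positivity)).const_mul (1 / 2)).congr_fderiv ?_
  ext v
  simp
  ring

theorem pderiv_radial_apply (i : Fin n) {x : Space n} (hx : x ≠ 0) :
    pderiv i (radial χ hχ) x = x i * (deriv χ (Real.log ‖x‖) / ‖x‖ ^ 2) := by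
  have hev : ⇑(radial χ hχ) =ᶠ[𝓝 x] χ ∘ fun y : Space n ↦ Real.log ‖y‖ := by
    filter_upwards [isOpen_compl_singleton.mem_nhds hx] with y hy using radial_apply hχ hy
  have hd : HasDerivAt χ (deriv χ (Real.log ‖x‖)) (Real.log ‖x‖) :=
    (hχ.differentiable (by simp) _).hasDerivAt
  rw [pderiv_apply _ _ hx, hev.fderiv_eq, (hd.comp_hasFDerivAt x (hasFDerivAt_log_norm hx)).fderiv]
  simp [EuclideanSpace.inner_single_right]
  ring

theorem euler_radial :
    (𝒫).euler (radial χ hχ) = radial (deriv χ) (contDiff_infty_iff_deriv.1 hχ).2 :=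
  ext_of_ne_zero fun x hx ↦ by
    have hx' : ‖x‖ ^ 2 ≠ 0 := pow_ne_zero 2 (norm_ne_zero_iff.2 hx)
    have hsum : ∑ i, x i * x i = ‖x‖ ^ 2 := by
      rw [← radiusSq_apply]
      simp [PartialDerivations.radiusSq, partialDerivations]
    simp only [euler_apply, pderiv_radial_apply hχ _ hx, radial_apply _ hx, ← mul_assoc, ← sum_mul,
      hsum, mul_div_cancel₀ _ hx']

theorem isRadial_radial : (𝒫).IsRadial (radial χ hχ) := fun i ↦ ext_of_ne_zero fun x hx ↦ by
  have hpd := pderiv_radial_apply hχ i hx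
  have hx' : ‖x‖ ≠ 0 := norm_ne_zero_iff.2 hx
  rw [mul_apply, mul_apply, radiusSq_apply, euler_radial, radial_apply _ hx]
  simp only [partialDerivations, hpd, coord_apply]
  field_simp

/-- The power `‖x‖^s` of the radius. -/
def radiusPow (s : ℝ) : PuncturedSmooth n := radial (fun t ↦ Real.exp (s * t)) (by fun_prop)

theorem radiusPow_apply (s : ℝ) {x : Space n} (hx : x ≠ 0) : radiusPow s x = ‖x‖ ^ s := by
  rw [radiusPow, radial_apply _ hx, Real.rpow_def_of_pos (norm_pos_iff.2 hx), mul_comm]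

theorem radiusPow_nonneg (s : ℝ) (x : Space n) : 0 ≤ radiusPow s x := by
  rcases eq_or_ne x 0 with rfl | hx
  · simp
  · exact radiusPow_apply s hx ▸ Real.rpow_nonneg (norm_nonneg x) s

theorem isRadial_radiusPow (s : ℝ) : (𝒫).IsRadial (radiusPow s) := isRadial_radial _

theorem euler_radiusPow (s : ℝ) : (𝒫).euler (radiusPow s) = s • radiusPow s := by
  rw [radiusPow, euler_radial]
  refine ext_of_ne_zero fun x hx ↦ ?_
  rw [smul_apply, radial_apply _ hx, radial_apply _ hx]
  simpa [mul_comm] using (((hasDerivAt_id (Real.log ‖x‖)).const_mul s).exp).deriv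

theorem radiusPow_mul (s t : ℝ) : (radiusPow s * radiusPow t : PuncturedSmooth n) =
    radiusPow (s + t) := ext_of_ne_zero fun x hx ↦ by
  rw [mul_apply, radiusPow_apply s hx, radiusPow_apply t hx, radiusPow_apply _ hx,
    Real.rpow_add (norm_pos_iff.2 hx)]

theorem radiusPow_zero : (radiusPow 0 : PuncturedSmooth n) = 1 := ext_of_ne_zero fun x hx ↦ by
  rw [radiusPow_apply 0 hx, one_apply hx, Real.rpow_zero]

theorem radiusPow_two : radiusPow 2 = (𝒫).radiusSq := ext_of_ne_zero fun x hx ↦ by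
  rw [radiusPow_apply 2 hx, radiusSq_apply, Real.rpow_two]

theorem laplace_radiusPow_mul (s : ℝ) :
    (𝒫).laplace (radiusPow s * f) = radiusPow (s - 2) * (𝒫).conjLaplace s f := by
  have hpolar := (isRadial_radiusPow s).radiusSq_mul_laplace_mul (euler_radiusPow s) f
  rw [← radiusPow_two] at hpolar
  calc (𝒫).laplace (radiusPow s * f)
      = radiusPow (-2) * (radiusPow 2 * (𝒫).laplace (radiusPow s * f)) := by
        rw [← mul_assoc, radiusPow_mul, neg_add_cancel, radiusPow_zero, one_mul]
    _ = radiusPow (s - 2) * (𝒫).conjLaplace s f := by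
        rw [hpolar, ← mul_assoc, radiusPow_mul, neg_add_eq_sub]

theorem laplace_triple_radiusPow_mul {s a : ℝ} (ha : a = s + (n - 6) / 2) :
    (𝒫).laplace ((𝒫).laplace ((𝒫).laplace (radiusPow s * f))) =
      -(radiusPow (s - 6) * (𝒫).emdenFowler a (((n - 2 : ℝ) / 2) ^ 2) f) := by
  rw [laplace_radiusPow_mul, laplace_radiusPow_mul, laplace_radiusPow_mul,
    show s - 2 - 2 = s - 4 by ring, show s - 4 - 2 = s - 6 by ring,
    (𝒫).conjLaplace_triple ha, mul_neg]

end Radial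

/-! ### Integration over the punctured space -/

/-- Test functions on the punctured space: the support is compact and avoids the origin. -/
def IsAnnular (g : PuncturedSmooth n) : Prop :=
  HasCompactSupport g ∧ (0 : Space n) ∉ tsupport g

namespace IsAnnular

variable {g : PuncturedSmooth n}

theorem of_support_subset (hg : IsAnnular g) {f : PuncturedSmooth n}
    (hs : Function.support f ⊆ tsupport g) : IsAnnular f :=
  ⟨hg.1.mono' hs, fun h0 ↦ hg.2 (closure_minimal hs (isClosed_tsupport _) h0)⟩

theorem mul_right (hg : IsAnnular g) (f : PuncturedSmooth n) : IsAnnular (g * f) :=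
  hg.of_support_subset (by
    rw [coe_mul]
    exact (Function.support_mul_subset_left _ _).trans subset_closure)

theorem mul_left (hg : IsAnnular g) (f : PuncturedSmooth n) : IsAnnular (f * g) :=
  mul_comm g f ▸ hg.mul_right f

theorem eventuallyEq_zero (hg : IsAnnular g) : g =ᶠ[𝓝 0] 0 :=
  notMem_tsupport_iff_eventuallyEq.1 hg.2

protected theorem contDiff (hg : IsAnnular g) : ContDiff ℝ ∞ g :=
  contDiff_iff_contDiffAt.2 fun x ↦ by
    rcases eq_or_ne x 0 with rfl | hx
    · exact contDiffAt_const.congr_of_eventuallyEq hg.eventuallyEq_zero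
    · exact g.contDiffAt hx

theorem integrable (hg : IsAnnular g) : Integrable g :=
  hg.contDiff.continuous.integrable_of_hasCompactSupport hg.1

theorem pderiv_eq_fderiv (hg : IsAnnular g) (i : Fin n) :
    ⇑(pderiv i g) = fun x ↦ fderiv ℝ g x (EuclideanSpace.single i 1) := by
  funext x
  rcases eq_or_ne x 0 with rfl | hx
  · simp [hg.eventuallyEq_zero.fderiv_eq]
  · exact pderiv_apply g i hx

protected theorem pderiv (hg : IsAnnular g) (i : Fin n) : IsAnnular (pderiv i g) :=
  hg.of_support_subset fun x hx ↦ support_fderiv_subset ℝ fun h0 ↦ hx (by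
    simp [hg.pderiv_eq_fderiv, h0])

theorem integral_pderiv (hg : IsAnnular g) (i : Fin n) :
    ∫ x, (pderiv i g) x = 0 := by
  have hparts := integral_mul_fderiv_eq_neg_fderiv_mul_of_integrable (μ := volume) (𝕜 := ℝ)
    (f := fun _ : Space n ↦ (1 : ℝ)) (g := g) (v := EuclideanSpace.single i 1)
    (by simp) (by simpa [← hg.pderiv_eq_fderiv] using (hg.pderiv i).integrable)
    (by simpa using hg.integrable) (by simp) fun x _ ↦ hg.contDiff.differentiable (by simp) x
  simpa [hg.pderiv_eq_fderiv] using hparts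

end IsAnnular

theorem integral_sum_pderiv_eq_zero {V : Fin n → PuncturedSmooth n} (hV : ∀ i, IsAnnular (V i)) :
    ∫ x, (∑ i, (𝒫).pderiv i (V i)) x = 0 := by
  simp only [sum_apply, partialDerivations]
  rw [integral_finsetSum _ fun i _ ↦ ((hV i).pderiv i).integrable]
  exact sum_eq_zero fun i _ ↦ (hV i).integral_pderiv i

theorem isAnnular_radial {ρ : ℝ → ℝ} (hρ : IsTestWeight ρ) :
    IsAnnular (radial ρ hρ.contDiff : PuncturedSmooth n) := by
  obtain ⟨R, hR⟩ := hρ.hasCompactSupport.isCompact.isBounded.subset_closedBall 0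
  have hclosed : IsClosed {x : Space n | Real.exp (-R) ≤ ‖x‖ ∧ ‖x‖ ≤ Real.exp R} :=
    (isClosed_le continuous_const continuous_norm).inter
      (isClosed_le continuous_norm continuous_const)
  have hsupp : Function.support (radial ρ hρ.contDiff : PuncturedSmooth n) ⊆
      {x | Real.exp (-R) ≤ ‖x‖ ∧ ‖x‖ ≤ Real.exp R} := fun x hx ↦ by
    have hx0 : x ≠ 0 := fun h ↦ hx (h ▸ apply_zero _)
    rw [Function.mem_support, radial_apply hρ.contDiff hx0] at hx
    have hlog := hR (subset_closure (Function.mem_support.2 hx))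
    rw [mem_closedBall_zero_iff, Real.norm_eq_abs, abs_le] at hlog
    have hpos := norm_pos_iff.2 hx0
    exact ⟨(Real.le_log_iff_exp_le hpos).1 hlog.1, (Real.log_le_iff_le_exp hpos).1 hlog.2⟩
  refine ⟨.of_support_subset_isCompact (isCompact_closedBall 0 (Real.exp R)) fun x hx ↦ ?_,
    fun h0 ↦ ?_⟩
  · exact mem_closedBall_zero_iff.2 (hsupp hx).2
  · have := (closure_minimal hsupp hclosed h0).1
    rw [norm_zero] at this
    exact this.not_gt (Real.exp_pos _)

theorem integrable_weight_mul {ρ : ℝ → ℝ} (hρ : IsTestWeight ρ) (f : PuncturedSmooth n) :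
    Integrable fun x ↦ ρ (Real.log ‖x‖) * f x :=
   ((isAnnular_radial hρ).mul_right f).integrable.congr
    (.of_forall fun x ↦ radial_mul_apply f hρ.contDiff x)

/-! ### Weighted forms on the punctured space -/

/-- The integral `∫ ρ(log r) r^{-n} h`. -/
def weightedIntegral (ρ : ℝ → ℝ) (h : PuncturedSmooth n) : ℝ :=
  ∫ x, ρ (Real.log ‖x‖) * (radiusPow (-n) * h : PuncturedSmooth n) x

section weightedIntegral

variable {ρ σ τ : ℝ → ℝ}

theorem weightedIntegral_add (hρ : IsTestWeight ρ) (f g : PuncturedSmooth n) :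
    weightedIntegral ρ (f + g) = weightedIntegral ρ f + weightedIntegral ρ g := by
  simp only [weightedIntegral, mul_add, add_apply]
  exact integral_add (integrable_weight_mul hρ _) (integrable_weight_mul hρ _)

theorem weightedIntegral_smul (c : ℝ) (f : PuncturedSmooth n) :
    weightedIntegral ρ (c • f) = c * weightedIntegral ρ f := by
  simp only [weightedIntegral, mul_smul_comm, smul_apply, mul_left_comm _ c]
  exact integral_const_mul c _

theorem weightedIntegral_sum {ι : Type*} (s : Finset ι) (hρ : IsTestWeight ρ)
    (f : ι → PuncturedSmooth n) :
    weightedIntegral ρ (∑ i ∈ s, f i) = ∑ i ∈ s, weightedIntegral ρ (f i) := by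
  simp only [weightedIntegral, mul_sum, sum_apply]
  exact integral_finsetSum _ fun i _ ↦ integrable_weight_mul hρ _

theorem add_weightedIntegral (hρ : IsTestWeight ρ) (hσ : IsTestWeight σ) (f : PuncturedSmooth n) :
    weightedIntegral (ρ + σ) f = weightedIntegral ρ f + weightedIntegral σ f := by
  simp only [weightedIntegral, Pi.add_apply, add_mul]
  exact integral_add (integrable_weight_mul hρ _) (integrable_weight_mul hσ _)

theorem smul_weightedIntegral (c : ℝ) (f : PuncturedSmooth n) :
    weightedIntegral (c • ρ) f = c * weightedIntegral ρ f := by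
  simp only [weightedIntegral, Pi.smul_apply, smul_eq_mul, mul_assoc]
  exact integral_const_mul c _

theorem weightedIntegral_radial_mul (hσ : ContDiff ℝ ∞ σ) (f : PuncturedSmooth n) :
    weightedIntegral ρ (radial σ hσ * f) = weightedIntegral (ρ * σ) f := by
  simp only [weightedIntegral, mul_left_comm _ (radial σ hσ), radial_mul_apply, Pi.mul_apply,
    mul_assoc]

theorem weightedIntegral_nonneg {f : PuncturedSmooth n}
    (h : ∀ x ≠ 0, 0 ≤ ρ (Real.log ‖x‖) * f x) : 0 ≤ weightedIntegral ρ f :=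
  integral_nonneg fun x ↦ by
    rcases eq_or_ne x 0 with rfl | hx
    · simp
    · rw [Pi.zero_apply, mul_apply, mul_left_comm]
      exact mul_nonneg (radiusPow_nonneg _ x) (h x hx)

theorem weightedIntegral_quadratic_nonneg (hσ : IsTestWeight σ) (hτ : IsTestWeight τ)
    {a b c : PuncturedSmooth n}
    (h : ∀ x ≠ 0, 0 ≤ σ (Real.log ‖x‖) ^ 2 * a x +
      2 * (σ (Real.log ‖x‖) * τ (Real.log ‖x‖) * b x) + τ (Real.log ‖x‖) ^ 2 * c x) :
    0 ≤ weightedIntegral (σ ^ 2) a + 2 * weightedIntegral (σ * τ) b +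
      weightedIntegral (τ ^ 2) c := by
  have hσσ := integrable_weight_mul (hσ.pow two_ne_zero) (radiusPow (-n) * a)
  have hστ := integrable_weight_mul (hσ.mul hτ.contDiff) (radiusPow (-n) * b)
  have hττ := integrable_weight_mul (hτ.pow two_ne_zero) (radiusPow (-n) * c)
  rw [weightedIntegral, weightedIntegral, weightedIntegral, ← integral_const_mul,
    ← integral_add hσσ (hστ.const_mul 2), ← integral_add (by exact hσσ.add (hστ.const_mul 2)) hττ]
  refine integral_nonneg fun x ↦ ?_
  rcases eq_or_ne x 0 with rfl | hx
  · simp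
  · refine (mul_nonneg (radiusPow_nonneg (-n) x) (h x hx)).trans_eq ?_
    simp only [Pi.pow_apply, Pi.mul_apply, mul_apply]
    ring

theorem weightedIntegral_deriv_add_euler (hρ : IsTestWeight ρ) (h : PuncturedSmooth n) :
    weightedIntegral (deriv ρ) h + weightedIntegral ρ ((𝒫).euler h) = 0 := by
  have hann := (isAnnular_radial (n := n) hρ).mul_right (radiusPow (-n) * h)
  have hdiv := integral_sum_pderiv_eq_zero fun i ↦ hann.mul_left ((𝒫).coord i)
  have hexpand : (n : ℝ) • (radial ρ hρ.contDiff * (radiusPow (-n) * h)) +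
      (𝒫).euler (radial ρ hρ.contDiff * (radiusPow (-n) * h)) =
      radial (deriv ρ) hρ.deriv.contDiff * (radiusPow (-n) * h) +
        radial ρ hρ.contDiff * (radiusPow (-n) * (𝒫).euler h) := by
    simp only [Derivation.leibniz, euler_radial, euler_radiusPow, smul_eq_mul, Algebra.smul_def,
      map_neg]
    ring
  simp only [(𝒫).sum_pderiv_coord_mul, hexpand, add_apply, radial_mul_apply] at hdiv
  rwa [integral_add (integrable_weight_mul hρ.deriv _) (integrable_weight_mul hρ _)] at hdiv

theorem weightedIntegral_mul_spherical (hρ : IsTestWeight ρ) (f g : PuncturedSmooth n) :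
    weightedIntegral ρ (g * (𝒫).spherical f) = weightedIntegral ρ ((𝒫).carreDuChamp f g) := by
  have hann := (isAnnular_radial (n := n) hρ).mul_right g
  have hdiv := integral_sum_pderiv_eq_zero fun i ↦ (hann.mul_left (radiusPow (-n))).mul_right
    ((𝒫).coord i * (𝒫).euler f - (𝒫).radiusSq * (𝒫).pderiv i f)
  rw [(isRadial_radiusPow (-n)).sum_pderiv_flux (euler_radiusPow _), (𝒫).carreDuChamp_comm f,
    (isRadial_radial hρ.contDiff).carreDuChamp_mul, (𝒫).carreDuChamp_comm g, mul_assoc (radial ρ _),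
    mul_left_comm _ (radial ρ _), mul_left_comm _ (radial ρ _)] at hdiv
  simp only [sub_apply, radial_mul_apply] at hdiv
  rwa [integral_sub (integrable_weight_mul hρ _) (integrable_weight_mul hρ _), sub_eq_zero] at hdiv

end weightedIntegral

/-- Symmetric bilinear differential expressions `Q`, linear over radial functions, with
`Q f f ≥ 0` and invariant under dilations. -/
structure IsLocalForm (Q : PuncturedSmooth n → PuncturedSmooth n → PuncturedSmooth n) : Prop where
  comm : ∀ f g, Q f g = Q g f
  add_left : ∀ f₁ f₂ g, Q (f₁ + f₂) g = Q f₁ g + Q f₂ g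
  radial_mul_left : ∀ {χ : ℝ → ℝ} (hχ : ContDiff ℝ ∞ χ) f g,
    Q (radial χ hχ * f) g = radial χ hχ * Q f g
  self_nonneg : ∀ f x, 0 ≤ Q f f x
  euler : ∀ f g, (𝒫).euler (Q f g) = Q ((𝒫).euler f) g + Q f ((𝒫).euler g)

namespace IsLocalForm

variable {Q : PuncturedSmooth n → PuncturedSmooth n → PuncturedSmooth n}

theorem isWeightedForm (h : IsLocalForm Q) :
    IsWeightedForm (𝒫).euler fun ρ f g ↦ weightedIntegral ρ (Q f g) where
  symm _ f g := by rw [h.comm]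
  add_weight hρ hσ f g := add_weightedIntegral hρ hσ _
  smul_weight _ c f g := smul_weightedIntegral c _
  self_nonneg _ h0 f := weightedIntegral_nonneg fun x _ ↦ mul_nonneg (h0 _) (h.self_nonneg f x)
  integral_by_parts hρ f g := by
    rw [add_assoc, ← weightedIntegral_add hρ, ← h.euler, weightedIntegral_deriv_add_euler hρ]
  sq_nonneg {σ τ} hσ hτ f g := by
    refine weightedIntegral_quadratic_nonneg hσ hτ fun x hx ↦ ?_
    have hnonneg := h.self_nonneg (radial σ hσ.contDiff * f + radial τ hτ.contDiff * g) x
    rw [h.add_left, h.radial_mul_left, h.radial_mul_left, h.comm f, h.comm g, h.add_left,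
      h.add_left] at hnonneg
    simp only [h.radial_mul_left, h.comm g f, add_apply, mul_apply, radial_apply _ hx] at hnonneg
    linarith

theorem comp_spherical (h : IsLocalForm Q) :
    IsLocalForm fun f g ↦ Q ((𝒫).spherical f) ((𝒫).spherical g) where
  comm f g := h.comm _ _
  add_left f₁ f₂ g := by rw [map_add, h.add_left]
  radial_mul_left hχ f g := by rw [(isRadial_radial hχ).spherical_mul, h.radial_mul_left]
  self_nonneg f := h.self_nonneg _
  euler f g := by rw [h.euler, (𝒫).euler_spherical, (𝒫).euler_spherical]

end IsLocalForm

theorem isLocalForm_mul : IsLocalForm fun f g : PuncturedSmooth n ↦ f * g where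
  comm := mul_comm
  add_left := add_mul
  radial_mul_left _ _ _ := mul_assoc _ _ _
  self_nonneg f x := mul_apply f f x ▸ mul_self_nonneg _
  euler f g := by
    rw [Derivation.leibniz, smul_eq_mul, smul_eq_mul]
    ring

theorem isLocalForm_carreDuChamp : IsLocalForm (𝒫).carreDuChamp where
  comm := (𝒫).carreDuChamp_comm
  add_left := (𝒫).carreDuChamp_add_left
  radial_mul_left hχ := (isRadial_radial hχ).carreDuChamp_mul
  self_nonneg := carreDuChamp_self_nonneg
  euler := (𝒫).euler_carreDuChamp

/-- The symmetric local expression of the form of `A^j`: the factors of `A` are distributed evenly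
and a remaining one is replaced by the carré du champ. -/
def sphericalForm : ℕ → PuncturedSmooth n → PuncturedSmooth n → PuncturedSmooth n
  | 0, f, g => f * g
  | 1, f, g => (𝒫).carreDuChamp f g
  | j + 2, f, g => sphericalForm j ((𝒫).spherical f) ((𝒫).spherical g)

theorem isLocalForm_sphericalForm : ∀ j, IsLocalForm (sphericalForm (n := n) j)
  | 0 => isLocalForm_mul
  | 1 => isLocalForm_carreDuChamp
  | j + 2 => (isLocalForm_sphericalForm j).comp_spherical

theorem weightedIntegral_sphericalForm {ρ : ℝ → ℝ} (hρ : IsTestWeight ρ) :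
    ∀ (j : ℕ) (f g : PuncturedSmooth n),
      weightedIntegral ρ (sphericalForm j f g) = weightedIntegral ρ (f * (𝒫).spherical^[j] g)
  | 0, _, _ => rfl
  | 1, f, g => by
    rw [sphericalForm, (𝒫).carreDuChamp_comm, ← weightedIntegral_mul_spherical hρ]
    rfl
  | j + 2, f, g => by
    rw [sphericalForm, weightedIntegral_sphericalForm hρ j, mul_comm,
      weightedIntegral_mul_spherical hρ, (𝒫).carreDuChamp_comm, ← weightedIntegral_mul_spherical hρ,
      ← Function.iterate_succ_apply, ← Function.iterate_succ_apply' (𝒫).spherical]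

variable (n) in
/-- The weighted forms of the powers of minus the spherical Laplacian on the punctured space. -/
def formTower : FormTower (PuncturedSmooth n) where
  D := (𝒫).euler
  form j ρ f g := weightedIntegral ρ (sphericalForm j f g)
  isWeightedForm j := (isLocalForm_sphericalForm j).isWeightedForm
  form_succ_le {σ τ} hσ hτ j ε hε f := by
    have hform := (isLocalForm_sphericalForm (n := n) j).isWeightedForm
    rw [weightedIntegral_sphericalForm (hσ.mul hτ.contDiff), Function.iterate_succ_apply,
      ← weightedIntegral_sphericalForm (hσ.mul hτ.contDiff), (isLocalForm_sphericalForm j).comm]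
    exact (le_abs_self _).trans (hform.abs_mul_weight_le hσ hτ hε _ _)

theorem form_formTower {ρ : ℝ → ℝ} (hρ : IsTestWeight ρ) (j : ℕ) (f g : PuncturedSmooth n) :
    (formTower n).form j ρ f g = weightedIntegral ρ (f * (𝒫).spherical^[j] g) :=
  weightedIntegral_sphericalForm hρ j f g

/-! ### The energy of an annular function -/

namespace IsAnnular

variable {g : PuncturedSmooth n}

theorem laplacian_eq (hg : IsAnnular g) : laplacian g = (𝒫).laplace g := by
  funext x
  rcases eq_or_ne x 0 with rfl | hx
  · simp [laplacian, iteratedFDeriv_two_apply, hg.eventuallyEq_zero.fderiv.fderiv_eq]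
  · exact (laplace_apply g hx).symm

protected theorem laplace (hg : IsAnnular g) : IsAnnular ((𝒫).laplace g) :=
  hg.of_support_subset fun x hx ↦ by_contra fun hxg ↦ hx (by
    rw [← hg.laplacian_eq, laplacian]
    simp [iteratedFDeriv_two_apply,
      (notMem_tsupport_iff_eventuallyEq.1 hxg).fderiv.fderiv_eq])

theorem norm_gradient_sq (hg : IsAnnular g) (x : Space n) :
    ‖gradient g x‖ ^ 2 = (∑ i, (𝒫).pderiv i g * (𝒫).pderiv i g) x := by
  rw [EuclideanSpace.norm_sq_eq, sum_apply]
  refine sum_congr rfl fun i _ ↦ ?_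
  have hcoord : gradient g x i = (𝒫).pderiv i g x := by
    rw [show (𝒫).pderiv i g x = _ from congrFun (hg.pderiv_eq_fderiv i) x,
      ← InnerProductSpace.toDual_symm_apply, EuclideanSpace.inner_single_right, one_mul]
    rfl
  rw [hcoord, mul_apply, Real.norm_eq_abs, sq_abs, sq]

theorem integrable_sum_pderiv_mul (hg : IsAnnular g) (f : PuncturedSmooth n) :
    Integrable (∑ i, (𝒫).pderiv i g * (𝒫).pderiv i f : PuncturedSmooth n) := by
  have hint := integrable_finsetSum univ fun i _ ↦ ((hg.pderiv i).mul_right (pderiv i f)).integrable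
  exact hint.congr (.of_forall fun x ↦ (sum_apply _ _ x).symm)

theorem integral_sum_pderiv_mul (hg : IsAnnular g) (f : PuncturedSmooth n) :
    ∫ x, (∑ i, (𝒫).pderiv i g * (𝒫).pderiv i f) x = -∫ x, (g * (𝒫).laplace f) x := by
  have hdiv := integral_sum_pderiv_eq_zero fun i ↦ hg.mul_right ((𝒫).pderiv i f)
  simp only [Derivation.leibniz, smul_eq_mul, sum_add_distrib, ← mul_sum, ← (𝒫).laplace_apply,
    add_apply, mul_comm ((𝒫).pderiv _ f)] at hdiv
  rw [integral_add (hg.mul_right _).integrable (hg.integrable_sum_pderiv_mul f)] at hdiv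
  linarith

theorem integral_laplace_mul (hg : IsAnnular g) (f : PuncturedSmooth n) :
    ∫ x, ((𝒫).laplace g * f) x = ∫ x, (g * (𝒫).laplace f) x := by
  have hdiv := integral_sum_pderiv_eq_zero fun i ↦ (hg.pderiv i).mul_right f
  have hleibniz : ∑ i, (𝒫).pderiv i (pderiv i g * f) =
      ∑ i, (𝒫).pderiv i g * (𝒫).pderiv i f + (𝒫).laplace g * f := by
    rw [(𝒫).laplace_apply, sum_mul, ← sum_add_distrib]
    exact sum_congr rfl fun i _ ↦ by
      rw [Derivation.leibniz, smul_eq_mul, smul_eq_mul, mul_comm f]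
      rfl
  simp only [hleibniz, add_apply] at hdiv
  rw [integral_add (hg.integrable_sum_pderiv_mul f) (hg.laplace.mul_right f).integrable,
    hg.integral_sum_pderiv_mul] at hdiv
  linarith

theorem integral_norm_gradient_laplacian_sq (hg : IsAnnular g) :
    ∫ x, ‖gradient (laplacian g) x‖ ^ 2 =
      -∫ x, (g * (𝒫).laplace ((𝒫).laplace ((𝒫).laplace g))) x := by
  simp only [hg.laplacian_eq, hg.laplace.norm_gradient_sq]
  rw [hg.laplace.integral_sum_pderiv_mul, hg.integral_laplace_mul]

end IsAnnular

/-! ### The Emden–Fowler transform of a solution -/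

/-- The operator `r^{k+6} (-Δ)³ r^{-k}`, which acts on the transform `w = r^k u` of `u`. -/
def conjTriharmonic (k : ℝ) (w : PuncturedSmooth n) : PuncturedSmooth n :=
  (𝒫).emdenFowler ((n - 6) / 2 - k) (((n - 2 : ℝ) / 2) ^ 2) w

variable (n) in
/-- The coefficient of `A^j D^m` in `conjTriharmonic k`. -/
def conjTriharmonicCoeff (k : ℝ) : ℕ → ℕ → ℝ :=
  emdenFowlerCoeff ((n - 6) / 2 - k) (((n - 2 : ℝ) / 2) ^ 2)

theorem weightedIntegral_mul_conjTriharmonic {ρ : ℝ → ℝ} (hρ : IsTestWeight ρ) (k : ℝ)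
    (f w : PuncturedSmooth n) :
    weightedIntegral ρ (f * conjTriharmonic k w) =
      (formTower n).pairing w (conjTriharmonicCoeff n k) ρ f := by
  rw [conjTriharmonic, PartialDerivations.emdenFowler, mul_sum, weightedIntegral_sum _ hρ]
  refine sum_congr rfl fun q _ ↦ ?_
  rw [mul_smul_comm, weightedIntegral_smul, form_formTower hρ]
  rfl

theorem iterate_euler_radial {η : ℝ → ℝ} (hη : ContDiff ℝ ∞ η) (a : ℕ) :
    (𝒫).euler^[a] (radial η hη) = radial (deriv^[a] η) (hη.iterate_deriv a) := by
  induction a with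
  | zero => rfl
  | succ a ih => simp only [Function.iterate_succ_apply', ih, euler_radial]

theorem iterate_euler_radial_mul {η : ℝ → ℝ} (hη : ContDiff ℝ ∞ η) (f : PuncturedSmooth n)
    (m : ℕ) : (𝒫).euler^[m] (radial η hη * f) = ∑ l ∈ range (m + 1),
      (m.choose l : ℝ) • (radial (deriv^[m - l] η) (hη.iterate_deriv _) * (𝒫).euler^[l] f) := by
  rw [mul_comm, (𝒫).iterate_euler_mul, Nat.sum_antidiagonal_eq_sum_range_succ_mk]
  exact sum_congr rfl fun l _ ↦ by
    rw [iterate_euler_radial, mul_comm, ← Nat.cast_smul_eq_nsmul ℝ]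

theorem iterate_spherical_radial_mul {χ : ℝ → ℝ} (hχ : ContDiff ℝ ∞ χ) (j : ℕ)
    (f : PuncturedSmooth n) :
    (𝒫).spherical^[j] (radial χ hχ * f) = radial χ hχ * (𝒫).spherical^[j] f := by
  induction j with
  | zero => rfl
  | succ j ih => simp only [Function.iterate_succ_apply', ih, (isRadial_radial hχ).spherical_mul]

theorem weightedIntegral_mul_conjTriharmonic_radial_mul {η : ℝ → ℝ} (hη : IsTestWeight η) (k : ℝ)
    (w : PuncturedSmooth n) :
    weightedIntegral η (w * conjTriharmonic k (radial η hη.contDiff * w)) =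
      (formTower n).stabilityForm w (conjTriharmonicCoeff n k) η := by
  rw [conjTriharmonic, PartialDerivations.emdenFowler, mul_sum, weightedIntegral_sum _ hη]
  refine sum_congr rfl fun q _ ↦ ?_
  rw [mul_smul_comm, weightedIntegral_smul, iterate_euler_radial_mul, ← Module.End.coe_pow, map_sum,
    mul_sum, weightedIntegral_sum _ hη]
  refine congrArg _ (sum_congr rfl fun l _ ↦ ?_)
  rw [map_smul, Module.End.coe_pow, iterate_spherical_radial_mul, mul_smul_comm,
    weightedIntegral_smul, mul_left_comm, weightedIntegral_radial_mul,
    form_formTower (hη.mul (hη.contDiff.iterate_deriv _))]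
  rfl

theorem conjTriharmonic_radiusPow_mul_apply (k : ℝ) (u : PuncturedSmooth n) {x : Space n}
    (hx : x ≠ 0) : conjTriharmonic k (radiusPow k * u) x =
      -(‖x‖ ^ (k + 6) * (𝒫).laplace ((𝒫).laplace ((𝒫).laplace u)) x) := by
  have hconj := congrArg (radiusPow (k + 6) * · : PuncturedSmooth n → PuncturedSmooth n)
    (laplace_triple_radiusPow_mul (radiusPow k * u)
      (show (n - 6 : ℝ) / 2 - k = -k + (n - 6) / 2 by ring))
  simp only [mul_neg, ← mul_assoc, radiusPow_mul, neg_add_cancel, radiusPow_zero, one_mul,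
    show k + 6 + (-k - 6) = 0 by ring] at hconj
  rw [conjTriharmonic, ← neg_eq_iff_eq_neg.2 hconj, neg_apply, mul_apply, radiusPow_apply _ hx]

/-- The test function `r^{-(n-6)/2} η(log r) w`, for which the energy and the potential term of the
stability inequality are both integrals with respect to `r^{-n} dx`. -/
def stabilityTest {η : ℝ → ℝ} (hη : IsTestWeight η) (w : PuncturedSmooth n) : PuncturedSmooth n :=
  radiusPow (-((n - 6) / 2)) * (radial η hη.contDiff * w)

section stabilityTest

variable {η : ℝ → ℝ} (hη : IsTestWeight η) (w : PuncturedSmooth n)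

theorem stabilityTest_apply {x : Space n} (hx : x ≠ 0) :
    stabilityTest hη w x = ‖x‖ ^ (-((n - 6) / 2) : ℝ) * (η (Real.log ‖x‖) * w x) := by
  rw [stabilityTest, mul_apply, radial_mul_apply, radiusPow_apply _ hx]

theorem isAnnular_stabilityTest : IsAnnular (stabilityTest hη w) :=
  ((isAnnular_radial hη).mul_right w).mul_left _

theorem tsupport_stabilityTest_subset {T₀ : ℝ} (h0 : ∀ t ≤ T₀, η t = 0) {Θ : Set (Space n)}
    (hΘ : Θ ⊆ Metric.ball 0 (Real.exp T₀)) : tsupport (stabilityTest hη w) ⊆ Θᶜ := by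
  have hsupp : Function.support (stabilityTest hη w) ⊆ {x | Real.exp T₀ ≤ ‖x‖} := fun x hx ↦ by
    by_contra! hlt
    have hx0 : x ≠ 0 := fun h ↦ hx (h ▸ apply_zero _)
    refine hx ?_
    rw [stabilityTest_apply hη w hx0,
      h0 _ ((Real.log_le_iff_le_exp (norm_pos_iff.2 hx0)).2 (not_le.1 hlt).le), zero_mul, mul_zero]
  intro x hx hxΘ
  have hle := closure_minimal hsupp (isClosed_le continuous_const continuous_norm) hx
  exact (mem_ball_zero_iff.1 (hΘ hxΘ)).not_ge hle

theorem integral_norm_gradient_laplacian_stabilityTest_sq :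
    ∫ x, ‖gradient (laplacian (stabilityTest hη w)) x‖ ^ 2 =
      (formTower n).stabilityForm w (conjTriharmonicCoeff n ((n - 6) / 2)) η := by
  rw [← weightedIntegral_mul_conjTriharmonic_radial_mul hη,
    (isAnnular_stabilityTest hη w).integral_norm_gradient_laplacian_sq, ← integral_neg,
    weightedIntegral]
  congr with x
  rcases eq_or_ne x 0 with rfl | hx
  · simp
  have hconj := conjTriharmonic_radiusPow_mul_apply ((n - 6) / 2) (stabilityTest hη w) hx
  nth_rewrite 1 [stabilityTest] at hconj
  rw [← mul_assoc, radiusPow_mul, add_neg_cancel, radiusPow_zero, one_mul] at hconj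
  have hr := norm_pos_iff.2 hx
  have := (Real.rpow_pos_of_pos hr ((n - 6) / 2 + 6)).ne'
  rw [mul_apply, mul_apply, mul_apply, hconj, stabilityTest_apply hη w hx, radiusPow_apply _ hx,
    show (-n : ℝ) = -((n - 6) / 2) - ((n - 6) / 2 + 6) by ring, Real.rpow_sub hr]
  field_simp

end stabilityTest

/-- The transform `w = r^k u` of a solution of `(-Δ)³ u = |u|^{p-1} u` on the punctured space. -/
structure IsEmdenFowlerSolution (p k : ℝ) (w : PuncturedSmooth n) : Prop where
  one_lt : 1 < p
  mul_sub_one : k * (p - 1) = 6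
  conjTriharmonic_apply : ∀ x ≠ 0, conjTriharmonic k w x = |w x| ^ (p - 1) * w x

theorem isEmdenFowlerSolution_radiusPow_mul {p k : ℝ} {u : PuncturedSmooth n} (hp : 1 < p)
    (hk : k * (p - 1) = 6) (heq : ∀ x ≠ 0,
      (𝒫).laplace ((𝒫).laplace ((𝒫).laplace u)) x = -(|u x| ^ (p - 1) * u x)) :
    IsEmdenFowlerSolution p k (radiusPow k * u) where
  one_lt := hp
  mul_sub_one := hk
  conjTriharmonic_apply x hx := by
    have hr := norm_pos_iff.2 hx
    rw [conjTriharmonic_radiusPow_mul_apply k u hx, heq x hx, mul_apply, radiusPow_apply _ hx,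
      abs_mul, Real.mul_rpow (abs_nonneg _) (abs_nonneg _),
      abs_of_nonneg (Real.rpow_nonneg hr.le k), ← Real.rpow_mul hr.le, hk, Real.rpow_add hr]
    ring

namespace IsEmdenFowlerSolution

variable {p k : ℝ} {w : PuncturedSmooth n}

theorem mul_conjTriharmonic_apply (H : IsEmdenFowlerSolution p k w) {x : Space n} (hx : x ≠ 0) :
    (w * conjTriharmonic k w) x = |w x| ^ (p + 1) := by
  rw [mul_apply, H.conjTriharmonic_apply x hx, mul_left_comm, ← abs_mul_abs_self (w x), ← sq,
    ← Real.rpow_natCast, ← Real.rpow_add' (abs_nonneg _) (by push_cast; linarith [H.one_lt])]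
  congr 1
  push_cast
  ring

theorem euler_mul_conjTriharmonic (H : IsEmdenFowlerSolution p k w) :
    (𝒫).euler (w * conjTriharmonic k w) = (p + 1) • ((𝒫).euler w * conjTriharmonic k w) := by
  refine ext_of_ne_zero fun x hx ↦ ?_
  have hpow := (hasDerivAt_abs_rpow (w x) (p := p + 1) (by linarith [H.one_lt])).comp_hasFDerivAt x
    (w.differentiableAt hx).hasFDerivAt
  have heq : w * conjTriharmonic k w =ᶠ[𝓝 x] fun y ↦ |w y| ^ (p + 1) := by
    filter_upwards [isOpen_compl_singleton.mem_nhds hx] with y hy using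
      H.mul_conjTriharmonic_apply hy
  have hderiv i : pderiv i (w * conjTriharmonic k w) x =
      (p + 1) * (pderiv i w * conjTriharmonic k w : PuncturedSmooth n) x := by
    rw [pderiv_apply _ i hx, (hpow.congr_of_eventuallyEq heq).fderiv, mul_apply,
      H.conjTriharmonic_apply x hx, pderiv_apply w i hx, show p + 1 - 2 = p - 1 by ring]
    simp
    ring
  simp only [smul_apply, mul_apply, euler_apply, hderiv, sum_mul, mul_sum]
  exact sum_congr rfl fun i _ ↦ by ring

theorem pairing_nonneg (H : IsEmdenFowlerSolution p k w) {ρ : ℝ → ℝ} (hρ : IsTestWeight ρ)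
    (h0 : 0 ≤ ρ) : 0 ≤ (formTower n).pairing w
      (conjTriharmonicCoeff n k) ρ w := by
  rw [← weightedIntegral_mul_conjTriharmonic hρ]
  refine weightedIntegral_nonneg fun x hx ↦ mul_nonneg (h0 _) ?_
  exact (H.mul_conjTriharmonic_apply hx).symm ▸ Real.rpow_nonneg (abs_nonneg _) _

theorem pairing_euler (H : IsEmdenFowlerSolution p k w) {ρ : ℝ → ℝ} (hρ : IsTestWeight ρ) :
    (formTower n).pairing w (conjTriharmonicCoeff n k) ρ
        ((𝒫).euler w) =
      -(1 / (p + 1)) * (formTower n).pairing w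
        (conjTriharmonicCoeff n k) (deriv ρ) w := by
  have hp : p + 1 ≠ 0 := by linarith [H.one_lt]
  have hparts := weightedIntegral_deriv_add_euler hρ (w * conjTriharmonic k w)
  rw [H.euler_mul_conjTriharmonic, weightedIntegral_smul] at hparts
  rw [← weightedIntegral_mul_conjTriharmonic hρ, ← weightedIntegral_mul_conjTriharmonic hρ.deriv,
    eq_neg_of_add_eq_zero_left hparts]
  field_simp

theorem integral_rpow_mul_stabilityTest_sq (H : IsEmdenFowlerSolution p k w) {u : Space n → ℝ}
    (hw : ∀ x ≠ 0, w x = ‖x‖ ^ k * u x) {η : ℝ → ℝ} (hη : IsTestWeight η) :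
    ∫ x, |u x| ^ (p - 1) * stabilityTest hη w x ^ 2 =
      (formTower n).pairing w (conjTriharmonicCoeff n k) (η * η) w := by
  rw [← weightedIntegral_mul_conjTriharmonic (hη.mul hη.contDiff), weightedIntegral]
  congr with x
  rcases eq_or_ne x 0 with rfl | hx
  · simp
  have hr := norm_pos_iff.2 hx
  have hpow : |w x| ^ (p - 1) = ‖x‖ ^ (6 : ℝ) * |u x| ^ (p - 1) := by
    rw [hw x hx, abs_mul, Real.mul_rpow (abs_nonneg _) (abs_nonneg _),
      abs_of_nonneg (Real.rpow_nonneg hr.le k), ← Real.rpow_mul hr.le, H.mul_sub_one]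
  have hrad : (‖x‖ ^ (-((n - 6) / 2) : ℝ)) ^ 2 = ‖x‖ ^ (-n : ℝ) * ‖x‖ ^ (6 : ℝ) := by
    rw [← Real.rpow_natCast, ← Real.rpow_mul hr.le, ← Real.rpow_add hr]
    congr 1
    push_cast
    ring
  rw [stabilityTest_apply hη w hx, mul_pow, hrad, mul_apply, mul_apply,
    H.conjTriharmonic_apply x hx, hpow, radiusPow_apply _ hx, Pi.mul_apply]
  ring

theorem stability (H : IsEmdenFowlerSolution p k w) {u : Space n → ℝ}
    (hw : ∀ x ≠ 0, w x = ‖x‖ ^ k * u x) {Θ : Set (Space n)}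
    (hstab : ∀ φ : Space n → ℝ, ContDiff ℝ ∞ φ → HasCompactSupport φ → tsupport φ ⊆ Θᶜ →
      p * (∫ x, |u x| ^ (p - 1) * φ x ^ 2) ≤ ∫ x, ‖gradient (laplacian φ) x‖ ^ 2)
    {T₀ : ℝ} (hΘ : Θ ⊆ Metric.ball 0 (Real.exp T₀)) {η : ℝ → ℝ} (hη : IsTestWeight η)
    (h0 : ∀ t ≤ T₀, η t = 0) :
    p * (formTower n).pairing w (conjTriharmonicCoeff n k) (η * η) w ≤
      (formTower n).stabilityForm w (conjTriharmonicCoeff n ((n - 6) / 2)) η := by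
  have hann := isAnnular_stabilityTest hη w
  rw [← H.integral_rpow_mul_stabilityTest_sq hw hη,
    ← integral_norm_gradient_laplacian_stabilityTest_sq hη w]
  exact hstab _ hann.contDiff hann.1 (tsupport_stabilityTest_subset hη w h0 hΘ)

end IsEmdenFowlerSolution

/-! ### Translated weights and behaviour at the origin -/

theorem weightedIntegral_translate (T : ℝ) (ρ : ℝ → ℝ) (f : PuncturedSmooth n) :
    weightedIntegral (translate T ρ) f =
      ∫ x, ρ (Real.log ‖x‖) * (radiusPow (-n) x * f (Real.exp T • x)) := by
  have hT := Real.exp_pos T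
  have hdil := Measure.integral_comp_smul volume (fun x : Space n ↦
    translate T ρ (Real.log ‖x‖) * (radiusPow (-n) * f : PuncturedSmooth n) x) (Real.exp T)
  rw [finrank_euclideanSpace_fin, smul_eq_mul, abs_of_pos (by positivity),
    eq_inv_mul_iff_mul_eq₀ (by positivity)] at hdil
  rw [weightedIntegral, ← hdil, ← integral_const_mul]
  congr with x
  rcases eq_or_ne x 0 with rfl | hx
  · simp
  have hr := norm_pos_iff.2 hx
  have hx' := smul_ne_zero hT.ne' hx
  have hnorm : ‖Real.exp T • x‖ = Real.exp T * ‖x‖ := by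
    rw [norm_smul, Real.norm_eq_abs, abs_of_pos hT]
  have hlog : Real.log ‖Real.exp T • x‖ - T = Real.log ‖x‖ := by
    rw [hnorm, Real.log_mul hT.ne' hr.ne', Real.log_exp, add_sub_cancel_left]
  rw [translate, hlog, mul_apply, radiusPow_apply _ hx, radiusPow_apply _ hx', hnorm,
    Real.mul_rpow hT.le hr.le, Real.rpow_neg hT.le, Real.rpow_natCast]
  field_simp

theorem weightedIntegral_translate_one (T : ℝ) (ρ : ℝ → ℝ) :
    weightedIntegral (n := n) (translate T ρ) 1 = weightedIntegral (n := n) ρ 1 := by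
  rw [weightedIntegral_translate, weightedIntegral, mul_one]
  congr with x
  rcases eq_or_ne x 0 with rfl | hx
  · simp
  · rw [one_apply (smul_ne_zero (Real.exp_pos T).ne' hx), mul_one]

theorem abs_weightedIntegral_translate_le {ρ : ℝ → ℝ} (hρ : IsTestWeight ρ) (T : ℝ) {ε : ℝ}
    {f : PuncturedSmooth n}
    (hf : ∀ x ≠ 0, ρ (Real.log ‖x‖) ≠ 0 → |f (Real.exp T • x)| ≤ ε) :
    |weightedIntegral (translate T ρ) f| ≤
      (∫ x : Space n, |ρ (Real.log ‖x‖) * radiusPow (-n) x|) * ε := by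
  rw [weightedIntegral_translate, ← integral_mul_const, ← Real.norm_eq_abs]
  refine norm_integral_le_of_norm_le ((integrable_weight_mul hρ (radiusPow (-n))).abs.mul_const ε)
    (.of_forall fun x ↦ ?_)
  rw [← mul_assoc, Real.norm_eq_abs, abs_mul]
  rcases eq_or_ne (ρ (Real.log ‖x‖)) 0 with h0 | h0
  · simp [h0]
  rcases eq_or_ne x 0 with rfl | hx
  · simp
  · exact mul_le_mul_of_nonneg_left (hf x hx h0) (abs_nonneg _)

section SmoothAcrossOrigin

variable (n) in
/-- The elements of the algebra that extend smoothly across the origin. -/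
def smoothSubalgebra : Subalgebra ℝ (PuncturedSmooth n) where
  carrier := {f | ∃ F : Space n → ℝ, ContDiff ℝ ∞ F ∧ ∀ x ≠ 0, f x = F x}
  mul_mem' := by
    rintro f g ⟨F, hF, hfF⟩ ⟨G, hG, hgG⟩
    exact ⟨F * G, hF.mul hG, fun x hx ↦ by rw [mul_apply, hfF x hx, hgG x hx, Pi.mul_apply]⟩
  add_mem' := by
    rintro f g ⟨F, hF, hfF⟩ ⟨G, hG, hgG⟩
    exact ⟨F + G, hF.add hG, fun x hx ↦ by rw [add_apply, hfF x hx, hgG x hx, Pi.add_apply]⟩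
  algebraMap_mem' c := ⟨fun _ ↦ c, contDiff_const, fun x hx ↦ by
    rw [Algebra.algebraMap_eq_smul_one, smul_apply, one_apply hx, mul_one]⟩

variable {f g : PuncturedSmooth n}

theorem coord_mem_smoothSubalgebra (i : Fin n) : coord i ∈ smoothSubalgebra n :=
  ⟨fun x ↦ x i, by fun_prop, fun x _ ↦ coord_apply i x⟩

theorem pderiv_mem_smoothSubalgebra (hf : f ∈ smoothSubalgebra n) (i : Fin n) :
    pderiv i f ∈ smoothSubalgebra n := by
  obtain ⟨F, hF, hfF⟩ := hf
  refine ⟨fun x ↦ fderiv ℝ F x (EuclideanSpace.single i 1),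
    (hF.fderiv_right (m := ∞) (by simp)).clm_apply contDiff_const, fun x hx ↦ ?_⟩
  have hev : f =ᶠ[𝓝 x] F := by
    filter_upwards [isOpen_compl_singleton.mem_nhds hx] with y hy using hfF y hy
  rw [pderiv_apply f i hx, hev.fderiv_eq]

theorem euler_mem_smoothSubalgebra (hf : f ∈ smoothSubalgebra n) :
    (𝒫).euler f ∈ smoothSubalgebra n := by
  rw [PartialDerivations.euler_apply]
  exact sum_mem fun i _ ↦ mul_mem (coord_mem_smoothSubalgebra i) (pderiv_mem_smoothSubalgebra hf i)

theorem spherical_mem_smoothSubalgebra (hf : f ∈ smoothSubalgebra n) :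
    (𝒫).spherical f ∈ smoothSubalgebra n := by
  have hsq : (𝒫).radiusSq ∈ smoothSubalgebra n :=
    sum_mem fun i _ ↦ mul_mem (coord_mem_smoothSubalgebra i) (coord_mem_smoothSubalgebra i)
  have hlap : (𝒫).laplace f ∈ smoothSubalgebra n := by
    rw [PartialDerivations.laplace_apply]
    exact sum_mem fun i _ ↦ pderiv_mem_smoothSubalgebra (pderiv_mem_smoothSubalgebra hf i) i
  have heuler := euler_mem_smoothSubalgebra hf
  rw [PartialDerivations.spherical_apply]
  exact sub_mem (add_mem (euler_mem_smoothSubalgebra heuler) (Subalgebra.smul_mem _ heuler _))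
    (mul_mem hsq hlap)

/-- The functions `‖x‖^k g` with `g` smooth across the origin. -/
def IsRadiusPowMulSmooth (k : ℝ) (f : PuncturedSmooth n) : Prop :=
  ∃ g ∈ smoothSubalgebra n, f = radiusPow k * g

namespace IsRadiusPowMulSmooth

variable {k l : ℝ}

theorem euler (hf : IsRadiusPowMulSmooth k f) : IsRadiusPowMulSmooth k ((𝒫).euler f) := by
  obtain ⟨g, hg, rfl⟩ := hf
  refine ⟨k • g + (𝒫).euler g,
    add_mem (Subalgebra.smul_mem _ hg k) (euler_mem_smoothSubalgebra hg), ?_⟩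
  rw [Derivation.leibniz, euler_radiusPow]
  simp only [smul_eq_mul, Algebra.smul_def]
  ring

theorem spherical (hf : IsRadiusPowMulSmooth k f) : IsRadiusPowMulSmooth k ((𝒫).spherical f) := by
  obtain ⟨g, hg, rfl⟩ := hf
  exact ⟨(𝒫).spherical g, spherical_mem_smoothSubalgebra hg,
    (isRadial_radiusPow k).spherical_mul g⟩

theorem mul (hf : IsRadiusPowMulSmooth k f) (hg : IsRadiusPowMulSmooth l g) :
    IsRadiusPowMulSmooth (k + l) (f * g) := by
  obtain ⟨a, ha, rfl⟩ := hf
  obtain ⟨b, hb, rfl⟩ := hg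
  exact ⟨a * b, mul_mem ha hb, by rw [← radiusPow_mul, mul_mul_mul_comm]⟩

theorem exists_abs_le (hf : IsRadiusPowMulSmooth k f) :
    ∃ M, 0 ≤ M ∧ ∀ x ≠ 0, ‖x‖ ≤ 1 → |f x| ≤ M * ‖x‖ ^ k := by
  obtain ⟨g, ⟨G, hG, hgG⟩, rfl⟩ := hf
  obtain ⟨M, hM⟩ := (isCompact_closedBall (0 : Space n) 1).exists_bound_of_continuousOn
    hG.continuous.continuousOn
  have hM0 : 0 ≤ M := (norm_nonneg _).trans (hM 0 (Metric.mem_closedBall_self zero_le_one))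
  refine ⟨M, hM0, fun x hx hx1 ↦ ?_⟩
  have hpow := Real.rpow_nonneg (norm_nonneg x) k
  rw [mul_apply, radiusPow_apply _ hx, hgG x hx, abs_mul, abs_of_nonneg hpow, mul_comm]
  exact mul_le_mul_of_nonneg_right (hM x (mem_closedBall_zero_iff.2 hx1)) hpow

theorem tendsto_weightedIntegral (hf : IsRadiusPowMulSmooth k f) (hk : 0 < k) {ρ : ℝ → ℝ}
    (hρ : IsTestWeight ρ) :
    Tendsto (fun T ↦ weightedIntegral (translate T ρ) f) atBot (𝓝 0) := by
  obtain ⟨M, hM0, hM⟩ := hf.exists_abs_le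
  obtain ⟨R, hR⟩ := hρ.hasCompactSupport.isCompact.isBounded.subset_closedBall 0
  have hlim : Tendsto (fun T ↦ (∫ x : Space n, |ρ (Real.log ‖x‖) * radiusPow (-n) x|) *
      (M * Real.exp ((R + T) * k))) atBot (𝓝 0) := by
    have hexp : Tendsto (fun T ↦ (R + T) * k) atBot atBot :=
      (tendsto_atBot_add_const_left _ R tendsto_id).atBot_mul_const hk
    simpa using ((Real.tendsto_exp_atBot.comp hexp).const_mul M).const_mul _
  refine squeeze_zero_norm' ?_ hlim
  filter_upwards [eventually_le_atBot (-R)] with T hT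
  refine abs_weightedIntegral_translate_le hρ T fun x hx h0 ↦ ?_
  have hlog := hR (subset_closure (Function.mem_support.2 h0))
  rw [mem_closedBall_zero_iff, Real.norm_eq_abs, abs_le,
    Real.log_le_iff_le_exp (norm_pos_iff.2 hx)] at hlog
  have hnorm : ‖Real.exp T • x‖ ≤ Real.exp (R + T) := by
    rw [norm_smul, Real.norm_eq_abs, abs_of_pos (Real.exp_pos T), add_comm, Real.exp_add]
    exact mul_le_mul_of_nonneg_left hlog.2 (Real.exp_pos T).le
  have hone : ‖Real.exp T • x‖ ≤ 1 := hnorm.trans (Real.exp_le_one_iff.2 (by linarith))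
  rw [Real.exp_mul]
  refine (hM _ (smul_ne_zero (Real.exp_pos T).ne' hx) hone).trans ?_
  gcongr

theorem tendsto_form (hf : IsRadiusPowMulSmooth k f) (hk : 0 < k) {ρ : ℝ → ℝ}
    (hρ : IsTestWeight ρ) (i m j : ℕ) :
    Tendsto (fun T ↦ (formTower n).form j (translate T ρ) ((formTower n).D^[i] f)
      ((formTower n).D^[m] f)) atBot (𝓝 0) := by
  have hD (i : ℕ) : IsRadiusPowMulSmooth k ((𝒫).euler^[i] f) :=
    Function.Iterate.rec (IsRadiusPowMulSmooth k) hf (fun _ h ↦ h.euler) i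
  have hA : IsRadiusPowMulSmooth k ((𝒫).spherical^[j] ((𝒫).euler^[m] f)) :=
    Function.Iterate.rec (IsRadiusPowMulSmooth k) (hD m) (fun _ h ↦ h.spherical) j
  simp only [form_formTower (hρ.translate _)]
  exact ((hD i).mul hA).tendsto_weightedIntegral (add_pos hk hk) hρ

end IsRadiusPowMulSmooth

end SmoothAcrossOrigin

/-! ### The low-order energy of a window -/

theorem weightedIntegral_le_add {ρ σ τ : ℝ → ℝ} (hρ : IsTestWeight ρ) (hσ : IsTestWeight σ)
    (hτ : IsTestWeight τ) {f g h : PuncturedSmooth n} {a b : ℝ}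
    (hle : ∀ x ≠ 0, ρ (Real.log ‖x‖) * f x ≤
      a * (σ (Real.log ‖x‖) * g x) + b * (τ (Real.log ‖x‖) * h x)) :
    weightedIntegral ρ f ≤ a * weightedIntegral σ g + b * weightedIntegral τ h := by
  have hg := (integrable_weight_mul hσ (radiusPow (-n) * g)).const_mul a
  have hh := (integrable_weight_mul hτ (radiusPow (-n) * h)).const_mul b
  simp only [weightedIntegral, ← integral_const_mul]
  rw [← integral_add hg hh]
  refine integral_mono (integrable_weight_mul hρ _) (hg.add hh) fun x ↦ ?_
  rcases eq_or_ne x 0 with rfl | hx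
  · simp
  · have := mul_le_mul_of_nonneg_left (hle x hx) (radiusPow_nonneg (-n) x)
    simp only [mul_apply]
    linarith

namespace IsEmdenFowlerSolution

variable {p k : ℝ} {w : PuncturedSmooth n}

theorem interpolatedBetween_levelEnergy (H : IsEmdenFowlerSolution p k w) {q : ℕ} (hq0 : q ≠ 0)
    (hq : 6 ≤ ((q : ℝ) - 1) * (p - 1)) (l : Filter ℝ) :
    InterpolatedBetween l ((formTower n).levelEnergy w bump q 0)
      (fun T ↦ (formTower n).pairing w (conjTriharmonicCoeff n k) (window q T) w) 1 := fun ε hε ↦ by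
  obtain ⟨C, hC, hle⟩ := exists_pow_mul_sq_le H.one_lt hq0 hq hε
  have hbump := isTestWeight_bump.pow two_ne_zero
  have hnonneg : 0 ≤ weightedIntegral (n := n) (bump ^ 2) 1 := weightedIntegral_nonneg fun x hx ↦
    mul_nonneg (pow_nonneg (bump_nonneg _) _) (by rw [one_apply hx]; exact zero_le_one)
  refine ⟨C * weightedIntegral (n := n) (bump ^ 2) 1, by positivity, .of_forall fun T ↦ ?_⟩
  have hρ : IsTestWeight (translate T (bump ^ (2 * q))) :=
    (isTestWeight_bump.pow (by omega)).translate T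
  have henergy : (formTower n).levelEnergy w bump q 0 T =
      weightedIntegral (translate T (bump ^ (2 * q))) (w * w) := by
    simp [FormTower.levelEnergy, FormTower.energy, form_formTower hρ]
  beta_reduce
  rw [henergy, ← weightedIntegral_mul_conjTriharmonic (isTestWeight_window q T), Pi.one_apply,
    mul_one, ← weightedIntegral_translate_one T]
  refine weightedIntegral_le_add hρ (isTestWeight_window q T) (hbump.translate T) fun x hx ↦ ?_
  rw [window_eq_translate, mul_apply, H.mul_conjTriharmonic_apply hx, one_apply hx, mul_one]
  exact hle _ (w x) (bump_nonneg _) (bump_le_one _)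

end IsEmdenFowlerSolution

/-! ### Functions without radial energy -/

section RadialEnergy

variable (f : PuncturedSmooth n)

theorem euler_apply_eq_fderiv {x : Space n} (hx : x ≠ 0) : (𝒫).euler f x = fderiv ℝ f x x := by
  have hsum := (EuclideanSpace.basisFun (Fin n) ℝ).sum_repr x
  conv_rhs => rw [← hsum]
  rw [map_sum, euler_apply]
  refine sum_congr rfl fun i _ ↦ ?_
  rw [hsum, map_smul, pderiv_apply f i hx]
  simp

theorem eq_zero_of_form_self_nonpos
    (h : ∀ ρ, IsTestWeight ρ → (formTower n).form 0 ρ f f ≤ 0) : f = 0 := by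
  refine ext_of_ne_zero fun x hx ↦ by_contra fun hne ↦ ?_
  have hρ := isTestWeight_bump.translate (Real.log ‖x‖)
  have hnonpos := h _ hρ
  rw [zero_apply] at hne
  rw [form_formTower hρ, weightedIntegral] at hnonpos
  simp only [← radial_mul_apply _ hρ.contDiff] at hnonpos
  have hann := (isAnnular_radial (n := n) hρ).mul_right (radiusPow (-n) * (f * (𝒫).spherical^[0] f))
  refine hnonpos.not_gt (hann.contDiff.continuous.integral_pos_of_hasCompactSupport_nonneg_nonzero
    hann.1 (fun y ↦ ?_) (x := x) ?_)
  · rw [radial_mul_apply, mul_apply, mul_apply]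
    exact mul_nonneg (bump_nonneg _) (mul_nonneg (radiusPow_nonneg _ y) (mul_self_nonneg (f y)))
  · rw [radial_mul_apply, translate, sub_self, bump_eq_one (by simp), one_mul, mul_apply,
      radiusPow_apply _ hx, mul_apply]
    exact mul_ne_zero (Real.rpow_pos_of_pos (norm_pos_iff.2 hx) _).ne' (mul_self_ne_zero.2 hne)

variable {f}

theorem apply_smul_of_euler_eq_zero (hf : (𝒫).euler f = 0) {x : Space n} (hx : x ≠ 0) {s : ℝ}
    (hs : s ∈ Set.Ioo 0 1) : f (s • x) = f x := by
  have hderiv (t : ℝ) (ht : t ∈ Set.Icc s 1) : HasDerivAt (fun t : ℝ ↦ f (t • x)) 0 t := by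
    have ht0 : t ≠ 0 := (hs.1.trans_le ht.1).ne'
    have htx := smul_ne_zero ht0 hx
    have hcomp := (f.differentiableAt htx).hasFDerivAt.comp_hasDerivAt t
      ((hasDerivAt_id t).smul_const x)
    have heuler := euler_apply_eq_fderiv f htx
    rw [hf, zero_apply, map_smul, smul_eq_mul, zero_eq_mul, or_iff_right ht0] at heuler
    rwa [one_smul, heuler] at hcomp
  have hconst := constant_of_has_deriv_right_zero
    (fun t ht ↦ (hderiv t ht).continuousAt.continuousWithinAt)
    (fun t ht ↦ (hderiv t (Set.Ico_subset_Icc_self ht)).hasDerivWithinAt) 1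
    (Set.right_mem_Icc.2 hs.2.le)
  simpa using hconst.symm

theorem eq_zero_of_euler_eq_zero (hf : (𝒫).euler f = 0) {k : ℝ} (hk : 0 < k) {u : Space n → ℝ}
    (hu : Continuous u) (hfu : ∀ x ≠ 0, f x = ‖x‖ ^ k * u x) : f = 0 := by
  refine ext_of_ne_zero fun x hx ↦ ?_
  rw [zero_apply]
  have hcont : Continuous fun s : ℝ ↦ ‖s • x‖ ^ k * u (s • x) :=
    ((by fun_prop : Continuous fun s : ℝ ↦ ‖s • x‖).rpow_const fun _ ↦ .inr hk.le).mul
      (hu.comp (by fun_prop))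
  have hlim : Tendsto (fun s : ℝ ↦ ‖s • x‖ ^ k * u (s • x)) (𝓝[>] 0) (𝓝 0) := by
    simpa [hk.ne'] using (hcont.tendsto 0).mono_left nhdsWithin_le_nhds
  refine tendsto_nhds_unique (tendsto_const_nhds.congr' ?_) hlim
  filter_upwards [Ioo_mem_nhdsGT (zero_lt_one (α := ℝ))] with s hs
  rw [← apply_smul_of_euler_eq_zero hf hx hs, hfu _ (smul_ne_zero hs.1.ne' hx)]

end RadialEnergy

/-! ### The Liouville theorem -/

section Liouville

variable {p k : ℝ} {u : Space n → ℝ}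

/-- The Emden–Fowler transform `r^k u` of a function `u` that is smooth across the origin. -/
def emdenFowlerTransform (k : ℝ) (hu : ContDiff ℝ ∞ u) : PuncturedSmooth n :=
  radiusPow k * ofContDiffOn u hu.contDiffOn

theorem emdenFowlerTransform_apply (hu : ContDiff ℝ ∞ u) (x : Space n) (hx : x ≠ 0) :
    emdenFowlerTransform k hu x = ‖x‖ ^ k * u x := by
  rw [emdenFowlerTransform, mul_apply, radiusPow_apply _ hx, ofContDiffOn_apply _ hx]

theorem isRadiusPowMulSmooth_emdenFowlerTransform (hu : ContDiff ℝ ∞ u) :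
    IsRadiusPowMulSmooth k (emdenFowlerTransform k hu) :=
  ⟨_, ⟨u, hu, fun _ ↦ ofContDiffOn_apply _⟩, rfl⟩

theorem isEmdenFowlerSolution_emdenFowlerTransform (hu : ContDiff ℝ ∞ u) (hp : 1 < p)
    (hk : k * (p - 1) = 6)
    (heq : ∀ x, laplacian (laplacian (laplacian u)) x = -(|u x| ^ (p - 1) * u x)) :
    IsEmdenFowlerSolution p k (emdenFowlerTransform k hu) := by
  refine isEmdenFowlerSolution_radiusPow_mul hp hk fun x hx ↦ ?_
  rw [ofContDiffOn_apply _ hx, ← heq]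
  exact laplace_apply_of_eq (fun _ ↦ laplace_apply_of_eq fun _ ↦ laplace_apply_of_eq
    fun _ ↦ ofContDiffOn_apply _) hx

theorem subcriticalCoefficients_conjTriharmonicCoeff (hn : 7 ≤ n) (hp : 1 < p) (hk0 : 0 < k)
    (hk : k * (p - 1) = 6) (hkn : k < ((n : ℝ) - 6) / 2) (hpc : 15 ≤ n → p < pc n) :
    SubcriticalCoefficients p (conjTriharmonicCoeff n k)
      (conjTriharmonicCoeff n ((n - 6) / 2)) := by
  have hv : (7 : ℝ) ≤ n := by exact_mod_cast hn
  obtain ⟨a, ha⟩ : ∃ a, a = ((n : ℝ) - 6) / 2 - k := ⟨_, rfl⟩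
  have ha0 : 0 < a := by linarith
  have hav : a < ((n : ℝ) - 6) / 2 := by linarith
  have hap : (((n : ℝ) - 6) / 2 - a) * (p - 1) = 6 := by rw [ha, sub_sub_cancel, hk]
  rw [conjTriharmonicCoeff, conjTriharmonicCoeff, sub_self, ← ha]
  rcases le_or_gt n 14 with h | h
  · have hle : (n : ℝ) ≤ 14 := by exact_mod_cast h
    refine subcriticalCoefficients_emdenFowlerCoeff hv hp ha0 hav
      (emdenFowlerCoeff_three_zero_pos ha0 (five_mul_sq_lt_of_le_fourteen hle ha0 hav))
      fun j hj ↦ ?_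
    interval_cases j
    · exact emdenFowlerCoeff_zero_zero_lt hap (hardyConst_lt_of_le_fourteen hn h ha0 hav)
    · exact emdenFowlerCoeff_zero_one_lt hav hap (mul_sq_mul_lt_of_le_fourteen hle ha0 hav)
    · exact emdenFowlerCoeff_zero_two_lt hav hap (mul_sq_lt_of_le_fourteen hle ha0 hav)
  · have hge : (15 : ℝ) ≤ n := by exact_mod_cast h
    obtain ⟨hle, hlt⟩ := hardyConst_lt_of_lt_pc hge ha0 hp hap (hpc h)
    have hsq := sq_lt_of_hardyConst_lt hge hle.le hlt
    refine subcriticalCoefficients_emdenFowlerCoeff hv hp ha0 hav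
      (emdenFowlerCoeff_three_zero_pos ha0 (five_mul_sq_lt_of_sq_lt hge hsq)) fun j hj ↦ ?_
    interval_cases j
    · exact emdenFowlerCoeff_zero_zero_lt hap hlt
    · exact emdenFowlerCoeff_zero_one_lt hav hap (mul_sq_mul_lt_of_sq_lt hge ha0 hsq)
    · exact emdenFowlerCoeff_zero_two_lt hav hap (mul_sq_lt_of_sq_lt hge ha0 hsq)

theorem emdenFowlerSystem_emdenFowlerTransform (hu : ContDiff ℝ ∞ u)
    (H : IsEmdenFowlerSolution p k (emdenFowlerTransform k hu)) (hk : 0 < k)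
    (hcoeff : SubcriticalCoefficients p (conjTriharmonicCoeff n k)
      (conjTriharmonicCoeff n ((n - 6) / 2)))
    {Θ : Set (Space n)} {T₀ : ℝ} (hΘ : Θ ⊆ Metric.ball 0 (Real.exp T₀))
    (hstab : ∀ φ : Space n → ℝ, ContDiff ℝ ∞ φ → HasCompactSupport φ → tsupport φ ⊆ Θᶜ →
      p * (∫ x, |u x| ^ (p - 1) * φ x ^ 2) ≤ ∫ x, ‖gradient (laplacian φ) x‖ ^ 2)
    {q : ℕ} (hq : 3 ≤ q) (hqp : 6 ≤ ((q : ℝ) - 1) * (p - 1)) :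
    EmdenFowlerSystem (formTower n) (emdenFowlerTransform k hu) p T₀ (conjTriharmonicCoeff n k)
      (conjTriharmonicCoeff n ((n - 6) / 2)) q where
  coefficients := hcoeff
  three_le := hq
  potential_nonneg := H.pairing_nonneg
  pairing_D := H.pairing_euler
  stability := H.stability (emdenFowlerTransform_apply hu) hstab hΘ
  young := H.interpolatedBetween_levelEnergy (by omega) hqp
  tendsto_form := (isRadiusPowMulSmooth_emdenFowlerTransform hu).tendsto_form hk

theorem emdenFowlerTransform_eq_zero (hu : ContDiff ℝ ∞ u)
    (H : IsEmdenFowlerSolution p k (emdenFowlerTransform k hu)) (hk : 0 < k)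
    (hcoeff : SubcriticalCoefficients p (conjTriharmonicCoeff n k)
      (conjTriharmonicCoeff n ((n - 6) / 2)))
    {Θ : Set (Space n)} (hΘ : IsCompact Θ)
    (hstab : ∀ φ : Space n → ℝ, ContDiff ℝ ∞ φ → HasCompactSupport φ → tsupport φ ⊆ Θᶜ →
      p * (∫ x, |u x| ^ (p - 1) * φ x ^ 2) ≤ ∫ x, ‖gradient (laplacian φ) x‖ ^ 2) :
    emdenFowlerTransform k hu = 0 := by
  obtain ⟨T₀, hT₀⟩ := hΘ.isBounded.subset_ball 0
  have hball := hT₀.trans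
    (Metric.ball_subset_ball ((lt_add_one T₀).le.trans (Real.add_one_le_exp T₀)))
  obtain ⟨q, hq⟩ := exists_nat_ge k
  have hqp : 6 ≤ (((q + 3 : ℕ) : ℝ) - 1) * (p - 1) := by
    rw [← H.mul_sub_one]
    refine mul_le_mul_of_nonneg_right ?_ (sub_nonneg.2 H.one_lt.le)
    push_cast
    linarith
  have hsys :=
    emdenFowlerSystem_emdenFowlerTransform hu H hk hcoeff hball hstab (by omega) hqp
  exact eq_zero_of_euler_eq_zero (eq_zero_of_form_self_nonpos _ fun ρ hρ ↦ hsys.form_D_nonpos hρ)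
    hk hu.continuous (emdenFowlerTransform_apply hu)

theorem eq_zero_of_emdenFowlerTransform_eq_zero [NeZero n] (hu : ContDiff ℝ ∞ u)
    (h : emdenFowlerTransform k hu = 0) : u = 0 := by
  refine hu.continuous.ext_on (dense_compl_singleton (0 : Space n)) continuous_const fun x hx ↦ ?_
  have hx' := emdenFowlerTransform_apply (k := k) hu x hx
  rw [h, zero_apply, zero_eq_mul] at hx'
  exact hx'.resolve_left (Real.rpow_pos_of_pos (norm_pos_iff.2 hx) k).ne'

end Liouville

end PuncturedSmooth

end TriharmonicLaneEmden

open TriharmonicLaneEmden PuncturedSmooth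

/-- **Theorem 1.2(2) (supercritical case).** Let `n ≥ 7` and let `u` be a smooth solution of
`(-Δ)³ u = |u|^{p-1} u` on `ℝⁿ` that is stable outside a compact set `Θ`. If
`(n+6)/(n-6) < p` and, in case `n ≥ 15`, additionally `p < p_c(n)`, then `u ≡ 0`. -/
theorem triharmonic_finiteMorse_supercritical (n : ℕ) (hn : 7 ≤ n) (p : ℝ)
    (hp1 : ((n : ℝ) + 6) / ((n : ℝ) - 6) < p) (hpc : 15 ≤ n → p < pc n)
    (u : EuclideanSpace ℝ (Fin n) → ℝ) (hu : ContDiff ℝ (⊤ : ℕ∞) u)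
    (heq : ∀ x, laplacian (laplacian (laplacian u)) x = -(|u x| ^ (p - 1) * u x))
    (Θ : Set (EuclideanSpace ℝ (Fin n))) (hΘ : IsCompact Θ)
    (hstab : ∀ φ : EuclideanSpace ℝ (Fin n) → ℝ, ContDiff ℝ (⊤ : ℕ∞) φ →
      HasCompactSupport φ → tsupport φ ⊆ Θᶜ →
      p * (∫ x, |u x| ^ (p - 1) * φ x ^ 2) ≤ ∫ x, ‖gradient (laplacian φ) x‖ ^ 2) :
    u = 0 := by
  have hn0 : NeZero n := ⟨by omega⟩
  have hv : (7 : ℝ) ≤ n := by exact_mod_cast hn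
  rw [div_lt_iff₀ (by linarith)] at hp1
  have hp : 1 < p := by nlinarith
  have hp0 : 0 < p - 1 := sub_pos.2 hp
  have hk : 6 / (p - 1) * (p - 1) = 6 := div_mul_cancel₀ 6 hp0.ne'
  have hkn : 6 / (p - 1) < ((n : ℝ) - 6) / 2 := by
    rw [div_lt_iff₀ hp0]
    linarith
  have hk0 : 0 < 6 / (p - 1) := by positivity
  have hsol := isEmdenFowlerSolution_emdenFowlerTransform hu hp hk heq
  have hcoeff := subcriticalCoefficients_conjTriharmonicCoeff hn hp hk0 hk hkn hpc
  exact eq_zero_of_emdenFowlerTransform_eq_zero hu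
    (emdenFowlerTransform_eq_zero hu hsol hk0 hcoeff hΘ hstab)
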